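/- Let d ≥ 1 be an integer and let f : ℝ^d → ℝ be a smooth compactly supported function. Let 1 ≤ i ≤ m be integers, let p, q ∈ [1,∞], r̄ ∈ [1,∞), θ ∈ [i/m, 1), and suppose 1/r̄ = i/d + θ(1/q − m/d) + (1−θ)/p. Let I_{−1} = [0,1] and I_j = [2^{j}, 2^{j+1}] for j ≥ 0. Let φ, ψ : ℝ^d → [0,∞) be weights for which there exist values φ_j, ψ_j (j ≥ −1) and a constant C ≥ 1 with φ(x) ∈ [φ_j/C, Cφ_j] and ψ(x) ∈ [ψ_j/C, Cψ_j] whenever |x| ∈ I_j, and with φ_{−1} = ψ_{−1} = φ_0 = ψ_0 = 1. Assume moreover there is ε > 0 with ( φ(x)/(⟨x⟩ψ(x)) )^{mθ} ⟨x⟩^{dθ(1/q − 1/p)} ≤ C ⟨x⟩^{−ε} for all x, where ⟨x⟩ = (1+|x|²)^{1/2}. Then there exists a constant C′ depending only on d, p, q, i, m, θ, C, ε (and not on f, φ, ψ) such that ‖ ψ^{m(1−θ)} φ^{mθ} |∇^i f| ‖_{L^{r̄}(ℝ^d)} ≤ C′ ( ‖ψ^m f‖_{L^p(ℝ^d)}^{1−θ}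 ‖ φ^m |∇^m f| ‖_{L^q(ℝ^d)}^{θ} + ‖ψ^m f‖_{L^p(ℝ^d)} ). -/

import Mathlib

open MeasureTheory
open scoped ENNReal

noncomputable section

/-!
Each unit-scale ball carries the unweighted inequality plus a lower-order term, and rescaling to
balls of radius `≈ 2 ^ j` in the `j`-th annulus multiplies that term by a power of `2 ^ j`. On such
a ball the weights are constants up to a factor, and the relative size of the two weights, which is
what the lower-order term picks up, is by the decay hypothesis exactly small enough to leave the
summable factor `2 ^ (-ε j)`. The main terms sum because `1 / r ≤ (1 - θ) / p + θ / q`, so that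
Hölder's inequality for sums applies.

The unweighted inequality is Nirenberg's. For one derivative out of two on the line, with
`2 / r = 1 / p + 1 / q`, cut the line into intervals on which the two terms of the local estimate
balance, and integrate over the coordinate lines of `ℝ^d`. Discrete log-convexity then gives all
`i ≤ m` at `θ = i / m`, and larger `θ` follow from Sobolev's inequality. To localize, cut off and
absorb the intermediate derivatives by Poincaré's inequality and integration by parts.
-/

open Set Filter Topology
open scoped NNReal ContDiff

local notation "𝔼" d:max => EuclideanSpace ℝ (Fin d)

/-! ### Exponents by their reciprocals -/

/-- The Lebesgue exponent with reciprocal `P`: `P = 0` encodes `p = ∞`, and all relations between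
exponents become linear. -/
def lpExponent (P : ℝ) : ℝ≥0∞ := (ENNReal.ofReal P)⁻¹

theorem lpExponent_zero : lpExponent 0 = ⊤ := by simp [lpExponent]

theorem lpExponent_one : lpExponent 1 = 1 := by simp [lpExponent]

theorem lpExponent_eq_ofReal_inv {P : ℝ} (hP : 0 < P) :
    lpExponent P = ENNReal.ofReal P⁻¹ := (ENNReal.ofReal_inv_of_pos hP).symm

theorem one_le_lpExponent {P : ℝ} (hP : P ≤ 1) : 1 ≤ lpExponent P := by
  rw [lpExponent, ENNReal.one_le_inv]
  simpa using hP

theorem lpExponent_toReal_one_div {p : ℝ≥0∞} (hp : p ≠ 0) : lpExponent (1 / p).toReal = p := by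
  rw [lpExponent, one_div, ENNReal.ofReal_toReal (ENNReal.inv_ne_top.2 hp), inv_inv]

theorem toReal_one_div_le_one {p : ℝ≥0∞} (hp : 1 ≤ p) : (1 / p).toReal ≤ 1 := by
  have : 1 / p ≤ 1 := by rw [one_div]; exact ENNReal.inv_le_one.2 hp
  simpa using ENNReal.toReal_mono ENNReal.one_ne_top this

theorem holderTriple_lpExponent {A B : ℝ} (hA : 0 ≤ A) (hB : 0 ≤ B) :
    ENNReal.HolderTriple (lpExponent A) (lpExponent B) (lpExponent (A + B)) where
  inv_add_inv_eq_inv := by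
    rw [lpExponent, lpExponent, lpExponent, inv_inv, inv_inv, inv_inv, ENNReal.ofReal_add hA hB]

theorem ofReal_mul_lpExponent (A : ℝ) {s : ℝ} (hs : 0 < s) :
    ENNReal.ofReal s * lpExponent A = lpExponent (A / s) := by
  rw [lpExponent, lpExponent, ENNReal.ofReal_div_of_pos hs, ENNReal.inv_div]
  · rw [div_eq_mul_inv]
  · simp
  · simp [hs]

section Lp

variable {α E : Type*} [MeasurableSpace α] [NormedAddCommGroup E] {μ : Measure α}

theorem eLpNorm_lpExponent_eq_lintegral (f : α → E) {P : ℝ} (hP : 0 < P) :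
    eLpNorm f (lpExponent P) μ = (∫⁻ x, ‖f x‖ₑ ^ (1 / P) ∂μ) ^ P := by
  rw [eLpNorm_eq_lintegral_rpow_enorm_toReal (by simp [lpExponent]) (by simp [lpExponent, hP])]
  simp [lpExponent, ENNReal.toReal_inv, hP.le]

theorem eLpNorm_norm_rpow_lpExponent (f : α → E) (A : ℝ) {s : ℝ} (hs : 0 < s) :
    eLpNorm (fun x ↦ ‖f x‖ ^ s) (lpExponent A) μ = eLpNorm f (lpExponent (A / s)) μ ^ s := by
  rw [eLpNorm_norm_rpow f hs, mul_comm, ofReal_mul_lpExponent A hs]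

theorem eLpNorm_mul_le_lpExponent {A B : ℝ} (hA : 0 ≤ A) (hB : 0 ≤ B) {g h : α → ℝ}
    (hg : AEStronglyMeasurable g μ) (hh : AEStronglyMeasurable h μ) :
    eLpNorm (g * h) (lpExponent (A + B)) μ ≤
      eLpNorm g (lpExponent A) μ * eLpNorm h (lpExponent B) μ := by
  have := holderTriple_lpExponent hA hB
  have hHolder := eLpNorm_smul_le_mul_eLpNorm (p := lpExponent A) (q := lpExponent B)
    (r := lpExponent (A + B)) hh hg
  simpa only [smul_eq_mul] using hHolder

theorem eLpNorm_lpExponent_interpolation {f : α → E} (hf : AEStronglyMeasurable f μ) {A B t : ℝ}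
    (hA : 0 ≤ A) (hB : 0 ≤ B) (ht : 0 < t) (ht1 : t < 1) :
    eLpNorm f (lpExponent ((1 - t) * A + t * B)) μ ≤
      eLpNorm f (lpExponent A) μ ^ (1 - t) * eLpNorm f (lpExponent B) μ ^ t := by
  have ht' : 0 < 1 - t := sub_pos.2 ht1
  have hmeas : ∀ s : ℝ, 0 < s → AEStronglyMeasurable (fun x ↦ ‖f x‖ ^ s) μ := fun s hs ↦
    (Real.continuous_rpow_const hs.le).comp_aestronglyMeasurable hf.norm
  have hsplit : (fun x ↦ ‖f x‖) = fun x ↦ ‖f x‖ ^ (1 - t) * ‖f x‖ ^ t := by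
    funext x
    rw [← Real.rpow_add_of_nonneg (norm_nonneg _) ht'.le ht.le, sub_add_cancel, Real.rpow_one]
  calc eLpNorm f (lpExponent ((1 - t) * A + t * B)) μ
      = eLpNorm (fun x ↦ ‖f x‖ ^ (1 - t) * ‖f x‖ ^ t) (lpExponent ((1 - t) * A + t * B)) μ := by
        rw [← hsplit, eLpNorm_norm]
    _ ≤ eLpNorm (fun x ↦ ‖f x‖ ^ (1 - t)) (lpExponent ((1 - t) * A)) μ *
          eLpNorm (fun x ↦ ‖f x‖ ^ t) (lpExponent (t * B)) μ :=
        eLpNorm_mul_le_lpExponent (by positivity) (by positivity) (hmeas _ ht') (hmeas _ ht)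
    _ = _ := by
        rw [eLpNorm_norm_rpow_lpExponent f _ ht',
          eLpNorm_norm_rpow_lpExponent f _ ht, mul_div_cancel_left₀ _ ht'.ne',
          mul_div_cancel_left₀ _ ht.ne']

theorem rpow_lintegral_le {h : α → ℝ≥0∞} (hh : AEMeasurable h μ) {s : ℝ} (hs : 1 ≤ s) :
    (∫⁻ x, h x ∂μ) ^ s ≤ μ univ ^ (s - 1) * ∫⁻ x, h x ^ s ∂μ := by
  have hs0 : 0 < s := by linarith
  have h1 : 0 ≤ 1 - 1 / s := by rw [sub_nonneg, div_le_one hs0]; exact hs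
  have hHolder := ENNReal.lintegral_mul_norm_pow_le (μ := μ) (f := fun x ↦ h x ^ s)
    (g := fun _ ↦ 1) (hh.pow_const s) aemeasurable_const (p := 1 / s) (q := 1 - 1 / s)
    (by positivity) h1 (by ring)
  simp only [← ENNReal.rpow_mul, mul_one_div_cancel hs0.ne', ENNReal.rpow_one, ENNReal.one_rpow,
    mul_one, lintegral_const, one_mul] at hHolder
  refine (ENNReal.rpow_le_rpow hHolder hs0.le).trans (le_of_eq ?_)
  rw [ENNReal.mul_rpow_of_nonneg _ _ hs0.le, ← ENNReal.rpow_mul, ← ENNReal.rpow_mul,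
    one_div_mul_cancel hs0.ne', ENNReal.rpow_one, mul_comm, sub_mul, one_mul,
    one_div_mul_cancel hs0.ne']

variable [TopologicalSpace α] [OpensMeasurableSpace α] [μ.IsOpenPosMeasure]

theorem enorm_le_eLpNorm_top_restrict {f : α → E} (hf : Continuous f) {U : Set α} (hU : IsOpen U)
    {x : α} (hx : x ∈ U) : ‖f x‖ₑ ≤ eLpNorm f ∞ (μ.restrict U) := by
  by_contra! hlt
  set M := eLpNorm f ∞ (μ.restrict U) with hM
  have hopen : IsOpen {y | y ∈ U ∧ M < ‖f y‖ₑ} := hU.inter (isOpen_lt continuous_const hf.enorm)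
  have hnull : μ {y | y ∈ U ∧ M < ‖f y‖ₑ} = 0 := by
    have hae : ∀ᵐ y ∂μ.restrict U, ‖f y‖ₑ ≤ M := by
      rw [hM, eLpNorm_exponent_top]; exact enorm_ae_le_eLpNormEssSup f _
    rw [ae_restrict_iff' hU.measurableSet, ae_iff] at hae
    simpa only [Classical.not_imp, not_le] using hae
  rw [hopen.measure_eq_zero_iff μ] at hnull
  exact hnull.subset ⟨hx, hlt⟩

end Lp

/-! ### Interpolation on the real line -/

section Line

variable {F : Type*} [NormedAddCommGroup F]

theorem exists_mem_Icc_norm_le {v : ℝ → F} (hv : Continuous v) {x y : ℝ} (hxy : x < y) :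
    ∃ t ∈ Icc x y, ‖v t‖ ≤ (y - x)⁻¹ * ∫ s in x..y, ‖v s‖ := by
  obtain ⟨t, ht, hle⟩ := exists_le_setAverage (μ := volume) (s := Ioc x y)
    (f := fun s ↦ ‖v s‖) (by simp [hxy]) (by simp) (hv.norm.intervalIntegrable x y).1
  refine ⟨t, Ioc_subset_Icc_self ht, hle.trans_eq ?_⟩
  rw [← uIoc_of_le hxy.le, interval_average_eq, smul_eq_mul]

theorem norm_sub_le_integral_norm_deriv [NormedSpace ℝ F] [CompleteSpace F] {v : ℝ → F}
    (hv : ContDiff ℝ 1 v) {x y s t : ℝ} (hs : s ∈ Icc x y) (ht : t ∈ Icc x y) :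
    ‖v t - v s‖ ≤ ∫ z in x..y, ‖deriv v z‖ := by
  have hv' : Continuous (deriv v) := hv.continuous_deriv le_rfl
  have hxy : x ≤ y := hs.1.trans hs.2
  rw [← intervalIntegral.integral_deriv_eq_sub (fun z _ ↦ hv.differentiable one_ne_zero z)
    (hv'.intervalIntegrable _ _)]
  refine intervalIntegral.norm_integral_le_integral_norm_uIoc.trans ?_
  rw [intervalIntegral.integral_of_le hxy]
  exact setIntegral_mono_set (hv'.norm.intervalIntegrable x y).1
    (Eventually.of_forall fun z ↦ norm_nonneg _)
    (Ioc_subset_Ioc (le_min hs.1 ht.1) (max_le hs.2 ht.2)).eventuallyLE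

theorem exists_spread_norm_add_norm_le {u : ℝ → F} (hu : Continuous u) {x y : ℝ} (hxy : x < y) :
    ∃ a b, x ≤ a ∧ b ≤ y ∧ (y - x) / 3 ≤ b - a ∧
      ‖u a‖ + ‖u b‖ ≤ 3 / (y - x) * ∫ s in x..y, ‖u s‖ := by
  obtain ⟨a, ha, hua⟩ := exists_mem_Icc_norm_le hu (show x < x + (y - x) / 3 by linarith)
  obtain ⟨b, hb, hub⟩ := exists_mem_Icc_norm_le hu (show y - (y - x) / 3 < y by linarith)
  refine ⟨a, b, ha.1, hb.2, by linarith [ha.2, hb.1], ?_⟩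
  have hint := fun c d ↦ hu.norm.intervalIntegrable (μ := volume) c d
  have hmid : 0 ≤ ∫ s in (x + (y - x) / 3)..(y - (y - x) / 3), ‖u s‖ :=
    intervalIntegral.integral_nonneg (by linarith) fun s _ ↦ norm_nonneg _
  have hleft := intervalIntegral.integral_add_adjacent_intervals
    (hint x (x + (y - x) / 3)) (hint (x + (y - x) / 3) (y - (y - x) / 3))
  have hright := intervalIntegral.integral_add_adjacent_intervals
    (hint x (y - (y - x) / 3)) (hint (y - (y - x) / 3) y)
  rw [add_sub_cancel_left, inv_div] at hua
  rw [sub_sub_cancel, inv_div] at hub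
  have : 0 ≤ 3 / (y - x) := div_nonneg (by norm_num) (sub_pos.2 hxy).le
  nlinarith [mul_nonneg this hmid]

theorem integral_norm_le_rpow_mul {v : ℝ → F} (hv : Continuous v) {x y P : ℝ} (hxy : x < y)
    (hP : 0 < P) (hP1 : P ≤ 1) :
    ∫ s in x..y, ‖v s‖ ≤ (y - x) ^ (1 - P) * (∫ s in x..y, ‖v s‖ ^ (1 / P)) ^ P := by
  have hl : 0 < y - x := sub_pos.2 hxy
  have hPinv : 1 ≤ 1 / P := by rwa [le_div_iff₀ hP, one_mul]
  have hcont : Continuous fun s ↦ ‖v s‖ ^ (1 / P) :=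
    hv.norm.rpow_const fun _ ↦ .inr (by positivity)
  have hJensen := (convexOn_rpow hPinv).map_set_average_le (μ := volume) (t := Ioc x y)
    (f := fun s ↦ ‖v s‖) (continuousOn_id.rpow_const fun _ _ ↦ .inr (by positivity)) isClosed_Ici
    (by simp [hxy]) (by simp) (Eventually.of_forall fun s ↦ mem_Ici.2 (norm_nonneg _))
    (hv.norm.intervalIntegrable x y).1 (hcont.intervalIntegrable x y).1
  simp only [setAverage_eq, ← intervalIntegral.integral_of_le hxy.le,
    smul_eq_mul, Real.volume_real_Ioc_of_le hxy.le] at hJensen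
  have hI : 0 ≤ ∫ s in x..y, ‖v s‖ :=
    intervalIntegral.integral_nonneg hxy.le fun s _ ↦ norm_nonneg _
  have hI' : 0 ≤ ∫ s in x..y, ‖v s‖ ^ (1 / P) :=
    intervalIntegral.integral_nonneg hxy.le fun s _ ↦ by positivity
  have hroot := Real.rpow_le_rpow (by positivity) hJensen hP.le
  rw [← Real.rpow_mul (by positivity), one_div_mul_cancel hP.ne', Real.rpow_one,
    Real.mul_rpow (by positivity) hI', Real.inv_rpow hl.le, inv_mul_le_iff₀ hl,
    ← mul_assoc] at hroot
  rwa [Real.rpow_sub hl, Real.rpow_one, div_eq_mul_inv]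

theorem eLpNorm_lpExponent_eq_ofReal_integral {v : ℝ → F} (hv : Continuous v)
    (hsupp : HasCompactSupport v) {P : ℝ} (hP : 0 < P) :
    eLpNorm v (lpExponent P) volume = ENNReal.ofReal ((∫ t, ‖v t‖ ^ (1 / P)) ^ P) := by
  have hPinv : 0 ≤ 1 / P := by positivity
  have hcont : Continuous fun s ↦ ‖v s‖ ^ (1 / P) := hv.norm.rpow_const fun _ ↦ .inr hPinv
  have hsupp' : HasCompactSupport fun s ↦ ‖v s‖ ^ (1 / P) :=
    hsupp.comp_left (g := fun z : F ↦ ‖z‖ ^ (1 / P)) (by simp [hP.ne'])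
  have hnonneg : ∀ s, 0 ≤ ‖v s‖ ^ (1 / P) := fun s ↦ by positivity
  rw [eLpNorm_lpExponent_eq_lintegral v hP,
    ← ENNReal.ofReal_rpow_of_nonneg (integral_nonneg hnonneg) hP.le,
    ofReal_integral_eq_lintegral_ofReal (hcont.integrable_of_hasCompactSupport hsupp')
      (Eventually.of_forall hnonneg)]
  simp_rw [← ENNReal.ofReal_rpow_of_nonneg (norm_nonneg _) hPinv, ofReal_norm]

/-- `c * (∫ g) ^ P` is the norm of `v` in the Lebesgue space of exponent `lpExponent P`, and it
controls the integrals of `‖v‖` over intervals as Hölder's inequality does. At `P = 0` the density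
`g` is irrelevant because `0 ^ 0 = 1`, so that `p = ∞` needs no separate treatment. -/
structure IsHolderMajorant (v : ℝ → F) (P c : ℝ) (g : ℝ → ℝ) : Prop where
  const_nonneg : 0 ≤ c
  nonneg : ∀ t, 0 ≤ g t
  continuous : Continuous g
  hasCompactSupport : HasCompactSupport g
  ofReal_eq : ENNReal.ofReal (c * (∫ t, g t) ^ P) = eLpNorm v (lpExponent P) volume
  integral_norm_le : ∀ x y : ℝ, x < y →
    ∫ s in x..y, ‖v s‖ ≤ (y - x) ^ (1 - P) * (c * (∫ s in x..y, g s) ^ P)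

theorem exists_isHolderMajorant {v : ℝ → F} (hv : Continuous v) (hsupp : HasCompactSupport v)
    {P : ℝ} (hP : P ∈ Icc (0 : ℝ) 1) : ∃ c g, IsHolderMajorant v P c g := by
  rcases hP.1.eq_or_lt with rfl | hP0
  · have hfin : eLpNorm v ⊤ volume ≠ ⊤ := (hv.memLp_top_of_hasCompactSupport hsupp volume).2.ne
    have hbound : ∀ t, ‖v t‖ ≤ (eLpNorm v ⊤ volume).toReal := fun t ↦ by
      have h := enorm_le_eLpNorm_top_restrict (μ := volume) hv isOpen_univ (mem_univ t)
      rw [Measure.restrict_univ] at h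
      simpa only [toReal_enorm] using ENNReal.toReal_mono hfin h
    refine ⟨(eLpNorm v ⊤ volume).toReal, 0, ENNReal.toReal_nonneg, fun _ ↦ le_rfl,
      continuous_zero, .zero, ?_, fun x y hxy ↦ ?_⟩
    · rw [Real.rpow_zero, mul_one, lpExponent_zero, ENNReal.ofReal_toReal hfin]
    · have h := intervalIntegral.integral_mono_on hxy.le (hv.norm.intervalIntegrable x y)
        (_root_.intervalIntegrable_const (μ := volume)
          (c := (eLpNorm v ⊤ volume).toReal)) fun t _ ↦ hbound t
      simpa using h
  · have hcont : Continuous fun s ↦ ‖v s‖ ^ (1 / P) :=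
      hv.norm.rpow_const fun _ ↦ .inr (one_div_nonneg.2 hP0.le)
    have hsupp' : HasCompactSupport fun s ↦ ‖v s‖ ^ (1 / P) :=
      hsupp.comp_left (g := fun z : F ↦ ‖z‖ ^ (1 / P)) (by simp [hP0.ne'])
    have hnonneg : ∀ s, 0 ≤ ‖v s‖ ^ (1 / P) := fun s ↦ by positivity
    refine ⟨1, fun s ↦ ‖v s‖ ^ (1 / P), zero_le_one, hnonneg, hcont, hsupp', ?_, fun x y hxy ↦ ?_⟩
    · rw [one_mul, eLpNorm_lpExponent_eq_ofReal_integral hv hsupp hP0]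
    · rw [one_mul]
      exact integral_norm_le_rpow_mul hv hxy hP0 hP.2

variable [NormedSpace ℝ F]

theorem norm_sub_sub_smul_deriv_le [CompleteSpace F] {u : ℝ → F} (hu : ContDiff ℝ 2 u)
    {x y a b t : ℝ} (hxa : x ≤ a) (hab : a ≤ b) (hby : b ≤ y) (ht : t ∈ Icc x y) :
    ‖u b - u a - (b - a) • deriv u t‖ ≤ (∫ s in x..y, ‖deriv (deriv u) s‖) * (b - a) := by
  have hu' : ContDiff ℝ 1 (deriv u) := ((contDiff_succ_iff_deriv (n := 1)).1 hu).2.2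
  have hderiv : ∀ s ∈ Icc a b,
      HasDerivWithinAt (fun s ↦ u s - s • deriv u t) (deriv u s - deriv u t) (Icc a b) s :=
    fun s _ ↦ (((hu.differentiable two_ne_zero s).hasDerivAt.sub
      ((hasDerivAt_id s).smul_const (deriv u t))).congr_deriv (by simp)).hasDerivWithinAt
  have hbound : ∀ s ∈ Ico a b, ‖deriv u s - deriv u t‖ ≤ ∫ s in x..y, ‖deriv (deriv u) s‖ :=
    fun s hs ↦ norm_sub_le_integral_norm_deriv hu' ht ⟨hxa.trans hs.1, hs.2.le.trans hby⟩
  have hmvt := norm_image_sub_le_of_norm_deriv_le_segment' hderiv hbound b ⟨hab, le_rfl⟩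
  convert hmvt using 2
  rw [sub_smul]
  abel

theorem norm_deriv_le_of_mem_Icc [CompleteSpace F] {u : ℝ → F} (hu : ContDiff ℝ 2 u)
    {x y t : ℝ} (hxy : x < y) (ht : t ∈ Icc x y) :
    ‖deriv u t‖ ≤ 9 / (y - x) ^ 2 * (∫ s in x..y, ‖u s‖) + ∫ s in x..y, ‖deriv (deriv u) s‖ := by
  have hl : 0 < y - x := sub_pos.2 hxy
  obtain ⟨a, b, hxa, hby, hspread, hends⟩ := exists_spread_norm_add_norm_le hu.continuous hxy
  have hab : 0 < b - a := by linarith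
  have hmvt := norm_sub_sub_smul_deriv_le hu hxa (sub_pos.1 hab).le hby ht
  set S := ∫ s in x..y, ‖deriv (deriv u) s‖
  have hI : 0 ≤ ∫ s in x..y, ‖u s‖ :=
    intervalIntegral.integral_nonneg hxy.le fun s _ ↦ norm_nonneg _
  have hscaled : (b - a) * ‖deriv u t‖ ≤ 3 / (y - x) * (∫ s in x..y, ‖u s‖) + S * (b - a) := by
    calc (b - a) * ‖deriv u t‖ = ‖(u b - u a) - (u b - u a - (b - a) • deriv u t)‖ := by
          rw [sub_sub_cancel, norm_smul, Real.norm_of_nonneg hab.le]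
      _ ≤ ‖u b‖ + ‖u a‖ + S * (b - a) := (norm_sub_le _ _).trans (by gcongr; exact norm_sub_le _ _)
      _ ≤ _ := by linarith
  rw [← le_div_iff₀' hab, add_div, mul_div_cancel_right₀ _ hab.ne'] at hscaled
  refine hscaled.trans (add_le_add_left ?_ _)
  calc 3 / (y - x) * (∫ s in x..y, ‖u s‖) / (b - a)
      ≤ 3 / (y - x) * (∫ s in x..y, ‖u s‖) / ((y - x) / 3) := by gcongr
    _ = _ := by field_simp; ring

end Line

section Greedy

variable {P Q r : ℝ}

theorem mul_rpow_eq_of_balanced (hPQ : r * (P + Q) = 2) {l a b : ℝ} (hl : 0 < l)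
    (ha : 0 ≤ a) (hb : 0 ≤ b) (hab : l ^ (-1 - P) * a = l ^ (1 - Q) * b) :
    l * (10 * (l ^ (-1 - P) * a)) ^ r = 10 ^ r * (a * b) ^ (r / 2) := by
  have hA : 0 ≤ l ^ (-1 - P) * a := by positivity
  have hsq : (l ^ (-1 - P) * a) ^ r = (l ^ (-(P + Q)) * (a * b)) ^ (r / 2) := by
    have : l ^ (-(P + Q)) * (a * b) = (l ^ (-1 - P) * a) ^ (2 : ℝ) := by
      rw [Real.rpow_two, sq]
      nth_rw 2 [hab]
      rw [show -(P + Q) = (-1 - P) + (1 - Q) by ring, Real.rpow_add hl]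
      ring
    rw [this, ← Real.rpow_mul hA, mul_div_cancel₀ _ two_ne_zero]
  rw [Real.mul_rpow (by norm_num) hA, hsq, Real.mul_rpow (by positivity) (by positivity),
    ← Real.rpow_mul hl.le, show -(P + Q) * (r / 2) = -1 by linarith, Real.rpow_neg_one]
  field_simp

theorem tendsto_mul_rpow_atTop_zero (hrP : 1 < r * (1 + P)) {K : ℝ} (hK : 0 ≤ K) :
    Tendsto (fun l : ℝ ↦ l * (10 * (l ^ (-1 - P) * K)) ^ r) atTop (𝓝 0) := by
  have hlim := (tendsto_rpow_neg_atTop (sub_pos.2 hrP)).const_mul ((10 * K) ^ r)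
  rw [mul_zero] at hlim
  refine hlim.congr' ((eventually_gt_atTop 0).mono fun l hl ↦ ?_)
  calc (10 * K) ^ r * l ^ (-(r * (1 + P) - 1))
      = l ^ (1 : ℝ) * ((10 * K) ^ r * l ^ ((-1 - P) * r)) := by
        rw [mul_left_comm, ← Real.rpow_add hl]
        ring_nf
    _ = l * (10 * (l ^ (-1 - P) * K)) ^ r := by
        rw [Real.rpow_one, Real.rpow_mul hl.le, ← Real.mul_rpow (by positivity) (by positivity)]
        ring_nf

theorem exists_length_le_of_crossing (hr : 1 ≤ r) (hPQ : r * (P + Q) = 2) {f g : ℝ → ℝ}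
    (hf : Continuous f) (hg : Continuous g) (hf0 : ∀ l > 0, 0 ≤ f l) (hg0 : ∀ l > 0, 0 ≤ g l)
    {M : ℝ} (hgM : ∀ l > 0, g l ≤ M * l ^ Q) {l₀ l₁ δ : ℝ} (hl₀ : 0 < l₀)
    (hsmall : l₀ * (10 * (M * l₀)) ^ r ≤ δ) (hl₁ : l₀ ≤ l₁)
    (hcross : l₁ ^ (-1 - P) * f l₁ ≤ l₁ ^ (1 - Q) * g l₁) :
    ∃ l ≥ l₀, l * (9 * (l ^ (-1 - P) * f l) + l ^ (1 - Q) * g l) ^ r ≤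
      10 ^ r * (f l * g l) ^ (r / 2) + δ := by
  have hA0 : 0 ≤ l₀ ^ (-1 - P) * f l₀ := mul_nonneg (by positivity) (hf0 l₀ hl₀)
  have hB0 : 0 ≤ l₀ ^ (1 - Q) * g l₀ := mul_nonneg (by positivity) (hg0 l₀ hl₀)
  have hB : l₀ ^ (1 - Q) * g l₀ ≤ M * l₀ := by
    calc l₀ ^ (1 - Q) * g l₀ ≤ l₀ ^ (1 - Q) * (M * l₀ ^ Q) := by gcongr; exact hgM l₀ hl₀
      _ = M * (l₀ ^ (1 - Q) * l₀ ^ Q) := by ring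
      _ = M * l₀ := by rw [← Real.rpow_add hl₀, sub_add_cancel, Real.rpow_one]
  rcases le_total (l₀ ^ (-1 - P) * f l₀) (l₀ ^ (1 - Q) * g l₀) with hstart | hstart
  · refine ⟨l₀, le_rfl, ?_⟩
    have hprod : 0 ≤ 10 ^ r * (f l₀ * g l₀) ^ (r / 2) :=
      mul_nonneg (by positivity) (Real.rpow_nonneg (mul_nonneg (hf0 l₀ hl₀) (hg0 l₀ hl₀)) _)
    have hle : l₀ * (9 * (l₀ ^ (-1 - P) * f l₀) + l₀ ^ (1 - Q) * g l₀) ^ r ≤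
        l₀ * (10 * (M * l₀)) ^ r := by
      gcongr
      linarith
    linarith
  · have hcont : ∀ (s : ℝ) {h : ℝ → ℝ}, Continuous h →
        ContinuousOn (fun l ↦ l ^ s * h l) (Icc l₀ l₁) := fun s h hh ↦
      (continuousOn_id.rpow_const fun l hl ↦ .inl (hl₀.trans_le hl.1).ne').mul hh.continuousOn
    obtain ⟨l, hl, hbal⟩ := isPreconnected_Icc.intermediate_value₂ (left_mem_Icc.2 hl₁)
      (right_mem_Icc.2 hl₁) (hcont _ hg) (hcont _ hf) hstart hcross
    have hlpos : 0 < l := hl₀.trans_le hl.1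
    refine ⟨l, hl.1, ?_⟩
    rw [hbal, ← mul_rpow_eq_of_balanced hPQ hlpos (hf0 l hlpos) (hg0 l hlpos) hbal.symm]
    have hδ : 0 ≤ l₀ * (10 * (M * l₀)) ^ r := by
      have : 0 ≤ M * l₀ := hB0.trans hB
      positivity
    ring_nf at hδ hsmall ⊢
    linarith

theorem exists_length_le_of_not_crossing (hr : 0 ≤ r) (hrP : 1 < r * (1 + P)) {f g : ℝ → ℝ}
    (hf0 : ∀ l > 0, 0 ≤ f l) (hg0 : ∀ l > 0, 0 ≤ g l) {K : ℝ} (hfK : ∀ l > 0, f l ≤ K)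
    {l₀ δ : ℝ} (hl₀ : 0 < l₀) (hδ : 0 < δ)
    (hcross : ∀ l ≥ l₀, l ^ (1 - Q) * g l ≤ l ^ (-1 - P) * f l) :
    ∃ l ≥ l₀, l * (9 * (l ^ (-1 - P) * f l) + l ^ (1 - Q) * g l) ^ r ≤ δ := by
  have hK : 0 ≤ K := (hf0 l₀ hl₀).trans (hfK l₀ hl₀)
  obtain ⟨l, hlδ, hl⟩ := (((tendsto_mul_rpow_atTop_zero hrP hK).eventually
    (gt_mem_nhds hδ)).and (eventually_ge_atTop l₀)).exists
  have hlpos : 0 < l := hl₀.trans_le hl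
  have hA0 : 0 ≤ l ^ (-1 - P) * f l := mul_nonneg (by positivity) (hf0 l hlpos)
  have hB0 : 0 ≤ l ^ (1 - Q) * g l := mul_nonneg (by positivity) (hg0 l hlpos)
  have hA : l ^ (-1 - P) * f l ≤ l ^ (-1 - P) * K := by gcongr; exact hfK l hlpos
  refine ⟨l, hl, le_trans ?_ hlδ.le⟩
  gcongr
  linarith [hcross l hl]

-- One of three things happens: the `g`-term already dominates at length `l₀`, and is tiny there;
-- the two terms balance at some larger length; or the `f`-term dominates forever, and decays.
theorem exists_length_le (hr : 1 ≤ r) (hPQ : r * (P + Q) = 2) (hQ : Q ≤ 1) {f g : ℝ → ℝ}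
    (hf : Continuous f) (hg : Continuous g) (hf0 : ∀ l > 0, 0 ≤ f l) (hg0 : ∀ l > 0, 0 ≤ g l)
    {K M : ℝ} (hfK : ∀ l > 0, f l ≤ K) (hgM : ∀ l > 0, g l ≤ M * l ^ Q)
    {l₀ δ : ℝ} (hl₀ : 0 < l₀) (hδ : 0 < δ) (hsmall : l₀ * (10 * (M * l₀)) ^ r ≤ δ) :
    ∃ l ≥ l₀, l * (9 * (l ^ (-1 - P) * f l) + l ^ (1 - Q) * g l) ^ r ≤
      10 ^ r * (f l * g l) ^ (r / 2) + δ := by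
  by_cases hcross : ∃ l₁ ≥ l₀, l₁ ^ (-1 - P) * f l₁ ≤ l₁ ^ (1 - Q) * g l₁
  · obtain ⟨l₁, hl₁, hle⟩ := hcross
    exact exists_length_le_of_crossing hr hPQ hf hg hf0 hg0 hgM hl₀ hsmall hl₁ hle
  · push Not at hcross
    obtain ⟨l, hl, hle⟩ := exists_length_le_of_not_crossing (P := P) (r := r) (by linarith)
      (by nlinarith) hf0 hg0 hfK hl₀ hδ fun l hl ↦ (hcross l hl).le
    have hprod : 0 ≤ 10 ^ r * (f l * g l) ^ (r / 2) := mul_nonneg (by positivity)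
      (Real.rpow_nonneg (mul_nonneg (hf0 l (hl₀.trans_le hl)) (hg0 l (hl₀.trans_le hl))) _)
    exact ⟨l, hl, by linarith⟩

theorem exists_neg_le_of_superadditive {D : ℝ → ℝ → ℝ}
    (hD : ∀ x y z, x ≤ y → y ≤ z → D x y + D y z ≤ D x z) (hD0 : ∀ x, 0 ≤ D x x)
    (hstep : ∀ η > 0, ∀ᶠ l in 𝓝[>] (0 : ℝ), ∀ x, ∃ y ≥ x + l, -(η * l) ≤ D x y)
    (x : ℝ) {L δ : ℝ} (hL : 0 < L) (hδ : 0 < δ) : ∃ y ≥ x + L, -δ ≤ D x y := by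
  have hlim : Tendsto (fun n : ℕ ↦ L / n) atTop (𝓝[>] 0) :=
    tendsto_nhdsWithin_iff.2 ⟨tendsto_const_div_atTop_nhds_zero_nat L,
      (eventually_gt_atTop 0).mono fun n hn ↦ div_pos hL (Nat.cast_pos.2 hn)⟩
  obtain ⟨n, hn, hn0⟩ := ((hlim.eventually (hstep (δ / L) (div_pos hδ hL))).and
    (eventually_gt_atTop 0)).exists
  have hn0' : (0 : ℝ) < n := Nat.cast_pos.2 hn0
  have hiter : ∀ k : ℕ, ∃ y ≥ x + k * (L / n), -(k * (δ / n)) ≤ D x y := by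
    intro k
    induction k with
    | zero => exact ⟨x, by simp, by simpa using hD0 x⟩
    | succ k ih =>
      obtain ⟨y, hy, hDy⟩ := ih
      obtain ⟨z, hz, hDz⟩ := hn y
      have hl : 0 < L / n := by positivity
      have hxy : x ≤ y := by nlinarith [mul_nonneg k.cast_nonneg hl.le]
      rw [div_mul_div_cancel₀ hL.ne'] at hDz
      refine ⟨z, by push_cast; linarith, ?_⟩
      push_cast
      linarith [hD x y z hxy (by linarith)]
  simpa only [mul_div_cancel₀ _ hn0'.ne'] using hiter n

theorem rpow_mul_rpow_add_le {a₁ a₂ b₁ b₂ α β : ℝ} (ha₁ : 0 ≤ a₁) (ha₂ : 0 ≤ a₂) (hb₁ : 0 ≤ b₁)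
    (hb₂ : 0 ≤ b₂) (hα : 0 ≤ α) (hβ : 0 ≤ β) (hαβ : α + β = 1) :
    a₁ ^ α * b₁ ^ β + a₂ ^ α * b₂ ^ β ≤ (a₁ + a₂) ^ α * (b₁ + b₂) ^ β := by
  rcases hα.eq_or_lt with rfl | hα
  · simp [show β = 1 by linarith]
  rcases hβ.eq_or_lt with rfl | hβ
  · simp [show α = 1 by linarith]
  have hconj : (1 / α).HolderConjugate (1 / β) :=
    Real.holderConjugate_one_div hα hβ hαβ
  have hnonneg : ∀ i : Fin 2, 0 ≤ ![a₁, a₂] i ^ α ∧ 0 ≤ ![b₁, b₂] i ^ β := by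
    intro i; fin_cases i <;> constructor <;> positivity
  have h := Real.inner_le_Lp_mul_Lq_of_nonneg Finset.univ hconj
    (f := fun i ↦ ![a₁, a₂] i ^ α) (g := fun i ↦ ![b₁, b₂] i ^ β)
    (fun i _ ↦ (hnonneg i).1) (fun i _ ↦ (hnonneg i).2)
  simpa [Fin.sum_univ_two, ← Real.rpow_mul, ha₁, ha₂, hb₁, hb₂, hα.ne', hβ.ne'] using h

end Greedy

section Nirenberg

variable {F : Type*} [NormedAddCommGroup F] {u v : ℝ → F} {P Q r c c' : ℝ} {f g : ℝ → ℝ}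

namespace IsHolderMajorant

theorem integral_nonneg (hf : IsHolderMajorant v P c f) {x y : ℝ} (hxy : x ≤ y) :
    0 ≤ ∫ s in x..y, f s :=
  intervalIntegral.integral_nonneg hxy fun s _ ↦ hf.nonneg s

theorem interval_nonneg (hf : IsHolderMajorant v P c f) {x y : ℝ} (hxy : x ≤ y) :
    0 ≤ c * (∫ s in x..y, f s) ^ P :=
  mul_nonneg hf.const_nonneg (Real.rpow_nonneg (hf.integral_nonneg hxy) _)

theorem interval_le (hf : IsHolderMajorant v P c f) (hP : 0 ≤ P) {x y : ℝ} (hxy : x ≤ y) :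
    c * (∫ s in x..y, f s) ^ P ≤ c * (∫ s, f s) ^ P := by
  have hle : ∫ s in x..y, f s ≤ ∫ s, f s := by
    rw [intervalIntegral.integral_of_le hxy]
    exact setIntegral_le_integral (hf.continuous.integrable_of_hasCompactSupport
      hf.hasCompactSupport) (Eventually.of_forall hf.nonneg)
  exact mul_le_mul_of_nonneg_left (Real.rpow_le_rpow (hf.integral_nonneg hxy) hle hP)
    hf.const_nonneg

theorem exists_interval_le_rpow (hf : IsHolderMajorant v P c f) (hP : 0 ≤ P) :
    ∃ M, ∀ x y, x ≤ y → c * (∫ s in x..y, f s) ^ P ≤ M * (y - x) ^ P := by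
  obtain ⟨B, hB⟩ := hf.hasCompactSupport.exists_bound_of_continuous hf.continuous
  have hB0 : 0 ≤ B := (norm_nonneg _).trans (hB 0)
  refine ⟨c * B ^ P, fun x y hxy ↦ ?_⟩
  have hle : ∫ s in x..y, f s ≤ B * (y - x) := by
    have h := intervalIntegral.norm_integral_le_of_norm_le_const (a := x) (b := y)
      (f := f) fun s _ ↦ hB s
    rw [abs_of_nonneg (sub_nonneg.2 hxy)] at h
    exact (le_abs_self _).trans h
  rw [mul_assoc, ← Real.mul_rpow hB0 (sub_nonneg.2 hxy)]
  exact mul_le_mul_of_nonneg_left (Real.rpow_le_rpow (hf.integral_nonneg hxy) hle hP)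
    hf.const_nonneg

theorem continuous_interval (hf : IsHolderMajorant v P c f) (hP : 0 ≤ P) (x : ℝ) :
    Continuous fun l ↦ c * (∫ s in x..x + l, f s) ^ P :=
  continuous_const.mul (((intervalIntegral.continuous_primitive
    (fun _ _ ↦ hf.continuous.intervalIntegrable _ _) x).comp
      (continuous_const.add continuous_id)).rpow_const fun _ ↦ .inr hP)

theorem add_le_rpow (hf : IsHolderMajorant u P c f) (hg : IsHolderMajorant v Q c' g)
    (hr : 0 ≤ r) (hP : 0 ≤ P) (hQ : 0 ≤ Q) (hPQ : r * (P + Q) = 2) {x y z : ℝ}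
    (hxy : x ≤ y) (hyz : y ≤ z) :
    ((c * (∫ s in x..y, f s) ^ P) * (c' * (∫ s in x..y, g s) ^ Q)) ^ (r / 2) +
        ((c * (∫ s in y..z, f s) ^ P) * (c' * (∫ s in y..z, g s) ^ Q)) ^ (r / 2) ≤
      ((c * (∫ s in x..z, f s) ^ P) * (c' * (∫ s in x..z, g s) ^ Q)) ^ (r / 2) := by
  have hfactor : ∀ {x y : ℝ}, x ≤ y →
      ((c * (∫ s in x..y, f s) ^ P) * (c' * (∫ s in x..y, g s) ^ Q)) ^ (r / 2) =
        (c * c') ^ (r / 2) * ((∫ s in x..y, f s) ^ (P * (r / 2)) *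
          (∫ s in x..y, g s) ^ (Q * (r / 2))) := fun {x y} hxy ↦ by
    have hf0 := hf.integral_nonneg hxy
    have hg0 := hg.integral_nonneg hxy
    rw [mul_mul_mul_comm, Real.mul_rpow (mul_nonneg hf.const_nonneg hg.const_nonneg)
      (by positivity), Real.mul_rpow (x := (∫ s in x..y, f s) ^ P) (by positivity) (by positivity),
      Real.rpow_mul hf0, Real.rpow_mul hg0]
  rw [hfactor hxy, hfactor hyz, hfactor (hxy.trans hyz), ← mul_add,
    ← intervalIntegral.integral_add_adjacent_intervals (hf.continuous.intervalIntegrable x y)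
      (hf.continuous.intervalIntegrable y z),
    ← intervalIntegral.integral_add_adjacent_intervals (hg.continuous.intervalIntegrable x y)
      (hg.continuous.intervalIntegrable y z)]
  exact mul_le_mul_of_nonneg_left (rpow_mul_rpow_add_le (hf.integral_nonneg hxy)
    (hf.integral_nonneg hyz) (hg.integral_nonneg hxy) (hg.integral_nonneg hyz) (by positivity)
    (by positivity) (by linarith))
    (Real.rpow_nonneg (mul_nonneg hf.const_nonneg hg.const_nonneg) _)

end IsHolderMajorant

variable [NormedSpace ℝ F] [CompleteSpace F]

theorem integral_norm_deriv_rpow_le (hu : ContDiff ℝ 2 u) (hf : IsHolderMajorant u P c f)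
    (hg : IsHolderMajorant (deriv (deriv u)) Q c' g) (hr : 0 ≤ r) {x y : ℝ} (hxy : x < y) :
    ∫ s in x..y, ‖deriv u s‖ ^ r ≤ (y - x) *
      (9 * ((y - x) ^ (-1 - P) * (c * (∫ s in x..y, f s) ^ P)) +
        (y - x) ^ (1 - Q) * (c' * (∫ s in x..y, g s) ^ Q)) ^ r := by
  have hl : 0 < y - x := sub_pos.2 hxy
  have hu' : Continuous (deriv u) := hu.continuous_deriv one_le_two
  set K := 9 * ((y - x) ^ (-1 - P) * (c * (∫ s in x..y, f s) ^ P)) +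
    (y - x) ^ (1 - Q) * (c' * (∫ s in x..y, g s) ^ Q)
  have hpt : ∀ t ∈ Icc x y, ‖deriv u t‖ ≤ K := fun t ht ↦ by
    refine (norm_deriv_le_of_mem_Icc hu hxy ht).trans
      (add_le_add ?_ (hg.integral_norm_le x y hxy))
    calc 9 / (y - x) ^ 2 * ∫ s in x..y, ‖u s‖
        ≤ 9 / (y - x) ^ 2 * ((y - x) ^ (1 - P) * (c * (∫ s in x..y, f s) ^ P)) := by
          gcongr; exact hf.integral_norm_le x y hxy
      _ = _ := by
          rw [show (-1 - P) = (1 - P) - (2 : ℕ) by push_cast; ring, Real.rpow_sub_natCast hl.ne']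
          ring
  calc ∫ s in x..y, ‖deriv u s‖ ^ r ≤ ∫ _ in x..y, K ^ r :=
        intervalIntegral.integral_mono_on hxy.le
          ((hu'.norm.rpow_const fun _ ↦ .inr hr).intervalIntegrable _ _)
          intervalIntegrable_const fun s hs ↦ Real.rpow_le_rpow (norm_nonneg _) (hpt s hs) hr
    _ = _ := by rw [intervalIntegral.integral_const, smul_eq_mul]

theorem eventually_exists_integral_norm_deriv_rpow_le (hu : ContDiff ℝ 2 u)
    (hf : IsHolderMajorant u P c f) (hg : IsHolderMajorant (deriv (deriv u)) Q c' g) (hr : 1 ≤ r)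
    (hP : 0 ≤ P) (hQ : Q ∈ Icc (0 : ℝ) 1) (hPQ : r * (P + Q) = 2) {η : ℝ} (hη : 0 < η) :
    ∀ᶠ l in 𝓝[>] (0 : ℝ), ∀ x, ∃ y ≥ x + l, ∫ s in x..y, ‖deriv u s‖ ^ r ≤
      10 ^ r * ((c * (∫ s in x..y, f s) ^ P) * (c' * (∫ s in x..y, g s) ^ Q)) ^ (r / 2) +
        η * l := by
  have hr0 : 0 < r := by linarith
  obtain ⟨M, hM⟩ := hg.exists_interval_le_rpow hQ.1
  have hcont : Continuous fun l : ℝ ↦ (10 * (M * l)) ^ r :=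
    (continuous_const.mul (continuous_const.mul continuous_id)).rpow_const fun _ ↦ .inr hr0.le
  have hlim := (hcont.tendsto 0).mono_left (nhdsWithin_le_nhds (s := Ioi 0))
  rw [mul_zero, mul_zero, Real.zero_rpow hr0.ne'] at hlim
  filter_upwards [hlim.eventually (gt_mem_nhds hη), self_mem_nhdsWithin] with l hlη (hl : 0 < l) x
  have hnn : ∀ t > 0, x ≤ x + t := fun t ht ↦ by linarith
  obtain ⟨t, htl, hle⟩ := exists_length_le hr hPQ hQ.2 (hf.continuous_interval hP x)
    (hg.continuous_interval hQ.1 x) (fun t ht ↦ hf.interval_nonneg (hnn t ht))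
    (fun t ht ↦ hg.interval_nonneg (hnn t ht)) (fun t ht ↦ hf.interval_le hP (hnn t ht))
    (fun t ht ↦ by simpa using hM x (x + t) (hnn t ht)) hl (mul_pos hη hl)
    ((mul_le_mul_of_nonneg_left hlη.le hl.le).trans_eq (mul_comm _ _))
  refine ⟨x + t, by linarith, ?_⟩
  have hloc := integral_norm_deriv_rpow_le hu hf hg hr0.le (show x < x + t by linarith)
  rw [add_sub_cancel_left] at hloc
  exact hloc.trans hle

theorem exists_integral_norm_deriv_rpow_le (hu : ContDiff ℝ 2 u) (hf : IsHolderMajorant u P c f)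
    (hg : IsHolderMajorant (deriv (deriv u)) Q c' g) (hr : 1 ≤ r) (hP : 0 ≤ P)
    (hQ : Q ∈ Icc (0 : ℝ) 1) (hPQ : r * (P + Q) = 2) (x : ℝ) {L δ : ℝ} (hL : 0 < L) (hδ : 0 < δ) :
    ∃ y ≥ x + L, ∫ s in x..y, ‖deriv u s‖ ^ r ≤
      10 ^ r * ((c * (∫ s in x..y, f s) ^ P) * (c' * (∫ s in x..y, g s) ^ Q)) ^ (r / 2) + δ := by
  have hr0 : 0 < r := by linarith
  have hu' : Continuous fun s ↦ ‖deriv u s‖ ^ r :=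
    (hu.continuous_deriv one_le_two).norm.rpow_const fun _ ↦ .inr hr0.le
  set D : ℝ → ℝ → ℝ := fun x y ↦
    10 ^ r * ((c * (∫ s in x..y, f s) ^ P) * (c' * (∫ s in x..y, g s) ^ Q)) ^ (r / 2) -
      ∫ s in x..y, ‖deriv u s‖ ^ r with hDdef
  have hDadd : ∀ x y z, x ≤ y → y ≤ z → D x y + D y z ≤ D x z := fun x y z hxy hyz ↦ by
    have hadd := intervalIntegral.integral_add_adjacent_intervals
      (hu'.intervalIntegrable (μ := volume) x y) (hu'.intervalIntegrable y z)
    have := mul_le_mul_of_nonneg_left (hf.add_le_rpow hg hr0.le hP hQ.1 hPQ hxy hyz)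
      (by positivity : (0 : ℝ) ≤ 10 ^ r)
    simp only [hDdef]
    linarith
  have hDdiag : ∀ x, 0 ≤ D x x := fun x ↦ by
    have hprod := mul_nonneg (hf.interval_nonneg (le_refl x)) (hg.interval_nonneg (le_refl x))
    simp only [hDdef, intervalIntegral.integral_same, sub_zero] at hprod ⊢
    positivity
  have hstep : ∀ η > 0, ∀ᶠ l in 𝓝[>] (0 : ℝ), ∀ x, ∃ y ≥ x + l, -(η * l) ≤ D x y := fun η hη ↦
    (eventually_exists_integral_norm_deriv_rpow_le hu hf hg hr hP hQ hPQ hη).mono fun l hl x ↦ by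
      obtain ⟨y, hy, hle⟩ := hl x
      exact ⟨y, hy, by simp only [hDdef]; linarith⟩
  obtain ⟨y, hy, hDy⟩ := exists_neg_le_of_superadditive hDadd hDdiag hstep x hL hδ
  exact ⟨y, hy, by simp only [hDdef] at hDy; linarith⟩

theorem integral_norm_deriv_rpow_le_of_hasCompactSupport (hu : ContDiff ℝ 2 u)
    (hsupp : HasCompactSupport u) (hf : IsHolderMajorant u P c f)
    (hg : IsHolderMajorant (deriv (deriv u)) Q c' g) (hr : 1 ≤ r) (hP : 0 ≤ P)
    (hQ : Q ∈ Icc (0 : ℝ) 1) (hPQ : r * (P + Q) = 2) :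
    ∫ s, ‖deriv u s‖ ^ r ≤
      10 ^ r * ((c * (∫ s, f s) ^ P) * (c' * (∫ s, g s) ^ Q)) ^ (r / 2) := by
  have hr0 : 0 < r := by linarith
  obtain ⟨ρ, hρ⟩ := hsupp.deriv.isBounded.subset_closedBall 0
  have hvanish : ∀ t, |ρ| < |t| → deriv u t = 0 := fun t ht ↦ by
    refine image_eq_zero_of_notMem_tsupport fun hmem ↦ ht.not_ge ?_
    simpa using (mem_closedBall_zero_iff.1 (hρ hmem)).trans (le_abs_self ρ)
  refine le_of_forall_pos_le_add fun δ hδ ↦ ?_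
  obtain ⟨y, hy, hle⟩ := exists_integral_norm_deriv_rpow_le hu hf hg hr hP hQ hPQ
    (-(|ρ| + 1)) (L := 2 * (|ρ| + 1)) (by positivity) hδ
  have hxy : -(|ρ| + 1) ≤ y := by linarith [abs_nonneg ρ]
  have hall : ∫ s in -(|ρ| + 1)..y, ‖deriv u s‖ ^ r = ∫ s, ‖deriv u s‖ ^ r := by
    refine intervalIntegral.integral_eq_integral_of_support_subset fun t ht ↦ ?_
    by_contra hout
    refine ht ?_
    simp only [hvanish t (lt_of_not_ge fun hle ↦ hout ⟨by linarith [(abs_le.1 hle).1],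
      by linarith [(abs_le.1 hle).2]⟩), norm_zero, Real.zero_rpow hr0.ne']
  rw [← hall]
  refine hle.trans ?_
  have hf0 := hf.interval_nonneg hxy
  have hg0 := hg.interval_nonneg hxy
  gcongr 10 ^ r * ?_ ^ (r / 2) + δ
  exact mul_le_mul (hf.interval_le hP hxy) (hg.interval_le hQ.1 hxy) hg0
    (hf0.trans (hf.interval_le hP hxy))

theorem eLpNorm_deriv_le (hu : ContDiff ℝ 2 u) (hsupp : HasCompactSupport u)
    (hP : P ∈ Icc (0 : ℝ) 1) (hQ : Q ∈ Icc (0 : ℝ) 1) (hPQ : 0 < P + Q) :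
    eLpNorm (deriv u) (lpExponent ((P + Q) / 2)) volume ≤
      10 * (eLpNorm u (lpExponent P) volume ^ (1 / 2 : ℝ) *
        eLpNorm (deriv (deriv u)) (lpExponent Q) volume ^ (1 / 2 : ℝ)) := by
  have hu' : Continuous (deriv u) := hu.continuous_deriv one_le_two
  have hu'' : Continuous (deriv (deriv u)) :=
    ((contDiff_succ_iff_deriv (n := 1)).1 hu).2.2.continuous_deriv le_rfl
  obtain ⟨c, f, hf⟩ := exists_isHolderMajorant hu.continuous hsupp hP
  obtain ⟨c', g, hg⟩ := exists_isHolderMajorant hu'' hsupp.deriv.deriv hQ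
  set r := 2 / (P + Q) with hr
  have hmain := integral_norm_deriv_rpow_le_of_hasCompactSupport hu hsupp hf hg (r := r)
    (by rw [hr, le_div_iff₀ hPQ]; linarith [hP.2, hQ.2]) hP.1 hQ (div_mul_cancel₀ 2 hPQ.ne')
  have hrR : r / 2 * ((P + Q) / 2) = 1 / 2 := by rw [hr]; field_simp
  have hX : 0 ≤ c * (∫ s, f s) ^ P :=
    mul_nonneg hf.const_nonneg (Real.rpow_nonneg (integral_nonneg hf.nonneg) _)
  have hY : 0 ≤ c' * (∫ s, g s) ^ Q :=
    mul_nonneg hg.const_nonneg (Real.rpow_nonneg (integral_nonneg hg.nonneg) _)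
  have hroot := Real.rpow_le_rpow (integral_nonneg fun s ↦ by positivity) hmain
    (by positivity : 0 ≤ (P + Q) / 2)
  rw [Real.mul_rpow (by positivity) (by positivity), ← Real.rpow_mul (by norm_num),
    ← Real.rpow_mul (mul_nonneg hX hY), hrR, show r * ((P + Q) / 2) = 1 by linarith, Real.rpow_one,
    Real.mul_rpow hX hY] at hroot
  rw [eLpNorm_lpExponent_eq_ofReal_integral hu' hsupp.deriv (by positivity), ← hf.ofReal_eq,
    ← hg.ofReal_eq, ENNReal.ofReal_rpow_of_nonneg hX (by norm_num),
    ENNReal.ofReal_rpow_of_nonneg hY (by norm_num), ← ENNReal.ofReal_mul (by positivity),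
    show (10 : ℝ≥0∞) = ENNReal.ofReal 10 by simp, ← ENNReal.ofReal_mul (by norm_num), one_div_div]
  exact ENNReal.ofReal_le_ofReal hroot

end Nirenberg

/-! ### Interpolation along coordinate lines -/

section Coordinate

variable {F : Type*} [NormedAddCommGroup F]

theorem exists_lintegral_eq_and_comp_le {α : Type*} [MeasurableSpace α] [TopologicalSpace α]
    [OpensMeasurableSpace α] {μ : Measure α} [μ.IsOpenPosMeasure] {f : α → F} (hf : Continuous f)
    {P : ℝ} (hP : 0 ≤ P) : ∃ (c : ℝ≥0∞) (g : α → ℝ≥0∞), Measurable g ∧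
      eLpNorm f (lpExponent P) μ = c * (∫⁻ x, g x ∂μ) ^ P ∧
      ∀ γ : ℝ → α, eLpNorm (fun t ↦ f (γ t)) (lpExponent P) volume ≤ c * (∫⁻ t, g (γ t)) ^ P := by
  rcases hP.eq_or_lt with rfl | hP
  · refine ⟨eLpNorm f ∞ μ, 0, measurable_zero, by simp [lpExponent_zero], fun γ ↦ ?_⟩
    rw [lpExponent_zero, ENNReal.rpow_zero, mul_one, eLpNorm_exponent_top]
    refine eLpNormEssSup_le_of_ae_enorm_bound (Eventually.of_forall fun t ↦ ?_)
    simpa using enorm_le_eLpNorm_top_restrict (μ := μ) hf isOpen_univ (mem_univ (γ t))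
  · exact ⟨1, fun x ↦ ‖f x‖ₑ ^ (1 / P), hf.enorm.measurable.pow_const _,
      by rw [one_mul, eLpNorm_lpExponent_eq_lintegral f hP],
      fun γ ↦ by rw [one_mul, eLpNorm_lpExponent_eq_lintegral _ hP]⟩

theorem toLp_insertNth_eq_add_smul {n : ℕ} (j : Fin (n + 1)) (y : Fin n → ℝ) (t : ℝ) :
    WithLp.toLp 2 (j.insertNth t y) =
      (WithLp.toLp 2 (j.insertNth 0 y) : EuclideanSpace ℝ (Fin (n + 1))) +
        t • EuclideanSpace.single j 1 := by
  ext k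
  rcases eq_or_ne k j with rfl | hkj
  · simp
  · obtain ⟨l, rfl⟩ := Fin.exists_succAbove_eq hkj
    simp

theorem lintegral_eq_lintegral_coordinate_line {n : ℕ} (j : Fin (n + 1))
    {g : EuclideanSpace ℝ (Fin (n + 1)) → ℝ≥0∞} (hg : Measurable g) :
    ∫⁻ x, g x = ∫⁻ y : Fin n → ℝ, ∫⁻ t : ℝ,
      g (WithLp.toLp 2 (j.insertNth 0 y) + t • EuclideanSpace.single j 1) := by
  rw [← (PiLp.volume_preserving_toLp (Fin (n + 1))).lintegral_comp hg,
    ← ((volume_preserving_piFinSuccAbove (fun _ ↦ ℝ) j).symm).lintegral_comp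
      (f := fun a ↦ g (WithLp.toLp 2 a)) (hg.comp (by fun_prop)),
    Measure.volume_eq_prod, lintegral_prod_symm'
      (fun z ↦ g (WithLp.toLp 2 ((MeasurableEquiv.piFinSuccAbove (fun _ ↦ ℝ) j).symm z)))
      (hg.comp (by fun_prop))]
  exact lintegral_congr fun y ↦ lintegral_congr fun t ↦
    congrArg g (toLp_insertNth_eq_add_smul j y t)

theorem mul_rpow_half_mul_rpow_half_rpow {P Q : ℝ} (hPQ : 0 < P + Q) (a b A B : ℝ≥0∞) :
    (10 * ((a * A ^ P) ^ (1 / 2 : ℝ) * (b * B ^ Q) ^ (1 / 2 : ℝ))) ^ (2 / (P + Q)) =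
      (10 * (a ^ (1 / 2 : ℝ) * b ^ (1 / 2 : ℝ))) ^ (2 / (P + Q)) *
        (A ^ (P / (P + Q)) * B ^ (Q / (P + Q))) := by
  have hr : 0 ≤ 2 / (P + Q) := by positivity
  simp only [ENNReal.mul_rpow_of_nonneg _ _ hr,
    ENNReal.mul_rpow_of_nonneg _ _ (one_half_pos (α := ℝ)).le, ← ENNReal.rpow_mul]
  rw [show P * (1 / 2) * (2 / (P + Q)) = P / (P + Q) by ring,
    show Q * (1 / 2) * (2 / (P + Q)) = Q / (P + Q) by ring]
  ring

variable {d : ℕ} {v : 𝔼 d → F}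

theorem hasCompactSupport_comp_add_smul_single (hv : HasCompactSupport v) (j : Fin d) (a : 𝔼 d) :
    HasCompactSupport fun t : ℝ ↦ v (a + t • EuclideanSpace.single j 1) := by
  refine hv.comp_isClosedEmbedding (Isometry.isClosedEmbedding (Isometry.of_dist_eq fun s t ↦ ?_))
  rw [dist_add_left, dist_eq_norm, ← sub_smul, norm_smul, PiLp.norm_single, norm_one,
    mul_one, dist_eq_norm]

variable [NormedSpace ℝ F]

/-- The partial derivative of `v` in the `j`-th coordinate direction. -/
def partialDeriv (j : Fin d) (v : 𝔼 d → F) (x : 𝔼 d) : F :=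
  fderiv ℝ v x (EuclideanSpace.single j 1)

theorem contDiff_partialDeriv {n : WithTop ℕ∞} (hv : ContDiff ℝ (n + 1) v) (j : Fin d) :
    ContDiff ℝ n (partialDeriv j v) :=
  (hv.fderiv_right le_rfl).clm_apply contDiff_const

theorem deriv_add_smul_single (hv : Differentiable ℝ v) (j : Fin d) (a : 𝔼 d) :
    deriv (fun t : ℝ ↦ v (a + t • EuclideanSpace.single j 1)) =
      fun t ↦ partialDeriv j v (a + t • EuclideanSpace.single j 1) := by
  funext t
  have hline : HasDerivAt (fun t : ℝ ↦ a + t • EuclideanSpace.single j (1 : ℝ))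
      (EuclideanSpace.single j 1) t := by
    simpa using ((hasDerivAt_id t).smul_const (EuclideanSpace.single j (1 : ℝ))).const_add a
  exact ((hv _).hasFDerivAt.comp_hasDerivAt t hline).deriv

variable [CompleteSpace F] {P Q : ℝ}

theorem eLpNorm_partialDeriv_line_le (hv : ContDiff ℝ 2 v) (hsupp : HasCompactSupport v)
    (hP : P ∈ Icc (0 : ℝ) 1) (hQ : Q ∈ Icc (0 : ℝ) 1) (hPQ : 0 < P + Q) (j : Fin d) (a : 𝔼 d) :
    eLpNorm (fun t : ℝ ↦ partialDeriv j v (a + t • EuclideanSpace.single j 1))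
        (lpExponent ((P + Q) / 2)) volume ≤
      10 * (eLpNorm (fun t : ℝ ↦ v (a + t • EuclideanSpace.single j 1))
          (lpExponent P) volume ^ (1 / 2 : ℝ) *
        eLpNorm (fun t : ℝ ↦ partialDeriv j (partialDeriv j v) (a + t • EuclideanSpace.single j 1))
          (lpExponent Q) volume ^ (1 / 2 : ℝ)) := by
  have hv' : ContDiff ℝ 1 (partialDeriv j v) := contDiff_partialDeriv (n := 1) hv j
  have hline : ContDiff ℝ 2 fun t : ℝ ↦ v (a + t • EuclideanSpace.single j 1) :=
    hv.comp (by fun_prop)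
  have h := eLpNorm_deriv_le hline (hasCompactSupport_comp_add_smul_single hsupp j a) hP hQ hPQ
  rwa [deriv_add_smul_single (hv.differentiable two_ne_zero),
    deriv_add_smul_single (hv'.differentiable one_ne_zero)] at h

theorem lintegral_partialDeriv_rpow_le {n : ℕ} {v : EuclideanSpace ℝ (Fin (n + 1)) → F}
    (hv : ContDiff ℝ 2 v) (hsupp : HasCompactSupport v) (hP : P ∈ Icc (0 : ℝ) 1)
    (hQ : Q ∈ Icc (0 : ℝ) 1) (hPQ : 0 < P + Q) (j : Fin (n + 1)) :
    ∫⁻ x, ‖partialDeriv j v x‖ₑ ^ (2 / (P + Q)) ≤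
      (10 * (eLpNorm v (lpExponent P) volume ^ (1 / 2 : ℝ) *
        eLpNorm (partialDeriv j (partialDeriv j v)) (lpExponent Q) volume ^ (1 / 2 : ℝ))) ^
          (2 / (P + Q)) := by
  have hv' : ContDiff ℝ 1 (partialDeriv j v) := contDiff_partialDeriv (n := 1) hv j
  have hv'' : Continuous (partialDeriv j (partialDeriv j v)) :=
    (contDiff_partialDeriv (n := 0) hv' j).continuous
  obtain ⟨c, g, hg, hnorm, hline⟩ :=
    exists_lintegral_eq_and_comp_le (μ := volume) hv.continuous hP.1
  obtain ⟨c', g', hg', hnorm', hline'⟩ :=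
    exists_lintegral_eq_and_comp_le (μ := volume) hv'' hQ.1
  let γ (y : Fin n → ℝ) (t : ℝ) : EuclideanSpace ℝ (Fin (n + 1)) :=
    WithLp.toLp 2 (j.insertNth 0 y) + t • EuclideanSpace.single j 1
  have hmeas : ∀ {h : EuclideanSpace ℝ (Fin (n + 1)) → ℝ≥0∞}, Measurable h →
      Measurable fun y ↦ ∫⁻ t : ℝ, h (γ y t) := fun {h} hh ↦
    Measurable.lintegral_prod_right (f := fun y t ↦ h (γ y t)) (hh.comp (by fun_prop))
  rw [lintegral_eq_lintegral_coordinate_line j (hv'.continuous.enorm.measurable.pow_const _),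
    hnorm, hnorm', mul_rpow_half_mul_rpow_half_rpow hPQ,
    lintegral_eq_lintegral_coordinate_line j hg, lintegral_eq_lintegral_coordinate_line j hg']
  have hslice : ∀ y, ∫⁻ t, ‖partialDeriv j v (γ y t)‖ₑ ^ (2 / (P + Q)) ≤
      (10 * (c ^ (1 / 2 : ℝ) * c' ^ (1 / 2 : ℝ))) ^ (2 / (P + Q)) *
        ((∫⁻ t, g (γ y t)) ^ (P / (P + Q)) * (∫⁻ t, g' (γ y t)) ^ (Q / (P + Q))) := fun y ↦ by
    have h := (eLpNorm_partialDeriv_line_le hv hsupp hP hQ hPQ j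
      (WithLp.toLp 2 (j.insertNth 0 y))).trans (mul_le_mul_right
        (mul_le_mul' (ENNReal.rpow_le_rpow (hline _) (by norm_num))
          (ENNReal.rpow_le_rpow (hline' _) (by norm_num))) 10)
    rwa [eLpNorm_lpExponent_eq_lintegral _ (by positivity), one_div_div,
      ← ENNReal.rpow_le_rpow_iff (z := 2 / (P + Q)) (by positivity), ← ENNReal.rpow_mul,
      mul_rpow_half_mul_rpow_half_rpow hPQ,
      show (P + Q) / 2 * (2 / (P + Q)) = 1 by field_simp, ENNReal.rpow_one] at h
  refine (lintegral_mono hslice).trans ?_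
  rw [lintegral_const_mul _ (by exact ((hmeas hg).pow_const _).mul ((hmeas hg').pow_const _))]
  gcongr
  exact ENNReal.lintegral_mul_norm_pow_le (hmeas hg).aemeasurable (hmeas hg').aemeasurable
    (div_nonneg hP.1 hPQ.le) (div_nonneg hQ.1 hPQ.le) (by rw [← add_div, div_self hPQ.ne'])

theorem eLpNorm_partialDeriv_le (hv : ContDiff ℝ 2 v) (hsupp : HasCompactSupport v)
    (hP : P ∈ Icc (0 : ℝ) 1) (hQ : Q ∈ Icc (0 : ℝ) 1) (hPQ : 0 < P + Q) (j : Fin d) :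
    eLpNorm (partialDeriv j v) (lpExponent ((P + Q) / 2)) volume ≤
      10 * (eLpNorm v (lpExponent P) volume ^ (1 / 2 : ℝ) *
        eLpNorm (partialDeriv j (partialDeriv j v)) (lpExponent Q) volume ^ (1 / 2 : ℝ)) := by
  obtain ⟨n, rfl⟩ := Nat.exists_eq_succ_of_ne_zero j.pos.ne'
  rw [eLpNorm_lpExponent_eq_lintegral _ (by positivity), one_div_div,
    ← ENNReal.rpow_le_rpow_iff (z := 2 / (P + Q)) (by positivity), ← ENNReal.rpow_mul,
    show (P + Q) / 2 * (2 / (P + Q)) = 1 by field_simp, ENNReal.rpow_one]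
  exact lintegral_partialDeriv_rpow_le hv hsupp hP hQ hPQ j

end Coordinate

/-! ### Interpolation between derivatives -/

section LogConvex

theorem mul_le_add_mul_succ_of_convex {b : ℕ → ℝ} {m : ℕ}
    (hb : ∀ k, k + 2 ≤ m → 2 * b (k + 1) ≤ b k + b (k + 2)) :
    ∀ k, k + 1 ≤ m → (k + 1) * b k ≤ b 0 + k * b (k + 1)
  | 0, _ => by simp
  | k + 1, hk => by
    have ih := mul_le_add_mul_succ_of_convex hb k (by omega)
    have hstep := mul_le_mul_of_nonneg_left (hb k hk) (by positivity : (0 : ℝ) ≤ k + 1)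
    push_cast
    linarith

theorem mul_le_sub_mul_add_mul_of_convex {b : ℕ → ℝ} {m : ℕ}
    (hb : ∀ k, k + 2 ≤ m → 2 * b (k + 1) ≤ b k + b (k + 2)) {k : ℕ} (hk : k ≤ m) :
    m * b k ≤ (m - k) * b 0 + k * b m := by
  induction m, hk using Nat.le_induction with
  | base => linarith
  | succ n hkn ih =>
    have ih := ih fun l hl ↦ hb l (by omega)
    have hlast := mul_le_mul_of_nonneg_left (mul_le_add_mul_succ_of_convex hb n le_rfl)
      k.cast_nonneg
    rcases n.eq_zero_or_pos with rfl | hn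
    · obtain rfl : k = 0 := by omega
      simp
    · have hn' : (0 : ℝ) < n := Nat.cast_pos.2 hn
      refine le_of_mul_le_mul_left ?_ hn'
      have := mul_le_mul_of_nonneg_left ih (by positivity : (0 : ℝ) ≤ n + 1)
      push_cast
      linarith

theorem le_rpow_mul_rpow_of_log_convex_of_pos {a : ℕ → ℝ} {C : ℝ} {m : ℕ} (hC : 0 < C)
    (hm : 0 < m) (ha : ∀ k, 0 < a k)
    (h : ∀ k, k + 2 ≤ m → a (k + 1) ≤ C * (a k ^ (1 / 2 : ℝ) * a (k + 2) ^ (1 / 2 : ℝ)))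
    {k : ℕ} (hk : k ≤ m) :
    a k ≤ C ^ (k * (m - k)) * (a 0 ^ (1 - (k : ℝ) / m) * a m ^ ((k : ℝ) / m)) := by
  have hm' : (0 : ℝ) < m := Nat.cast_pos.2 hm
  have hconv := mul_le_sub_mul_add_mul_of_convex (b := fun k ↦ Real.log (a k) + k ^ 2 * Real.log C)
    (m := m) (fun k hk ↦ by
      have hlog := Real.log_le_log (ha (k + 1)) (h k hk)
      rw [Real.log_mul hC.ne' (mul_pos (Real.rpow_pos_of_pos (ha _) _)
        (Real.rpow_pos_of_pos (ha _) _)).ne', Real.log_mul (Real.rpow_pos_of_pos (ha _) _).ne'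
        (Real.rpow_pos_of_pos (ha _) _).ne', Real.log_rpow (ha _), Real.log_rpow (ha _)] at hlog
      push_cast
      linarith) hk
  have ha0 : 0 < a 0 ^ (1 - (k : ℝ) / m) := Real.rpow_pos_of_pos (ha 0) _
  have ham : 0 < a m ^ ((k : ℝ) / m) := Real.rpow_pos_of_pos (ha m) _
  rw [← Real.log_le_log_iff (ha k) (by positivity), Real.log_mul (by positivity) (by positivity),
    Real.log_mul ha0.ne' ham.ne', Real.log_rpow (ha 0), Real.log_rpow (ha m), Real.log_pow,
    ← mul_le_mul_iff_right₀ hm']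
  refine le_trans ?_ (le_of_eq (a := (m - k) * Real.log (a 0) + k * Real.log (a m) +
    m * (k * (m - k) * Real.log C)) ?_)
  · simp only [Nat.cast_zero] at hconv
    linarith
  · rw [Nat.cast_mul, Nat.cast_sub hk]
    field_simp
    ring

theorem le_rpow_mul_rpow_of_log_convex {a : ℕ → ℝ} {C : ℝ} {m : ℕ} (hC : 1 ≤ C) (hm : 0 < m)
    (ha : ∀ k, 0 ≤ a k)
    (h : ∀ k, k + 2 ≤ m → a (k + 1) ≤ C * (a k ^ (1 / 2 : ℝ) * a (k + 2) ^ (1 / 2 : ℝ)))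
    {k : ℕ} (hk : k ≤ m) :
    a k ≤ C ^ (k * (m - k)) * (a 0 ^ (1 - (k : ℝ) / m) * a m ^ ((k : ℝ) / m)) := by
  have hθ : 0 ≤ 1 - (k : ℝ) / m :=
    sub_nonneg.2 (div_le_one_of_le₀ (Nat.cast_le.2 hk) m.cast_nonneg)
  have hpert : ∀ η > 0, a k + η ≤ C ^ (k * (m - k)) *
      ((a 0 + η) ^ (1 - (k : ℝ) / m) * (a m + η) ^ ((k : ℝ) / m)) := fun η hη ↦ by
    refine le_rpow_mul_rpow_of_log_convex_of_pos (a := fun k ↦ a k + η) (by linarith) hm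
      (fun l ↦ by linarith [ha l]) (fun l hl ↦ ?_) hk
    have hη' : η ≤ C * (η ^ (1 / 2 : ℝ) * η ^ (1 / 2 : ℝ)) := by
      rw [← Real.rpow_add hη, add_halves, Real.rpow_one]
      exact le_mul_of_one_le_left hη.le hC
    have hsum := rpow_mul_rpow_add_le (ha l) hη.le (ha (l + 2)) hη.le (one_half_pos (α := ℝ)).le
      (one_half_pos (α := ℝ)).le (add_halves 1)
    linarith [h l hl, mul_le_mul_of_nonneg_left hsum (zero_le_one.trans hC)]
  have hcont : Continuous fun η : ℝ ↦ C ^ (k * (m - k)) *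
      ((a 0 + η) ^ (1 - (k : ℝ) / m) * (a m + η) ^ ((k : ℝ) / m)) :=
    continuous_const.mul (((continuous_const.add continuous_id).rpow_const fun _ ↦ .inr hθ).mul
      ((continuous_const.add continuous_id).rpow_const fun _ ↦ .inr (by positivity)))
  have hlim := le_of_tendsto_of_tendsto (((continuous_const.add continuous_id).tendsto 0).mono_left
    nhdsWithin_le_nhds) ((hcont.tendsto 0).mono_left nhdsWithin_le_nhds)
    (eventually_nhdsWithin_of_forall (s := Ioi 0) hpert)
  simpa using hlim

theorem ennreal_le_rpow_mul_rpow_of_log_convex {a : ℕ → ℝ≥0∞} {C : ℝ≥0} {m : ℕ} (hC : 1 ≤ C)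
    (hm : 0 < m) (ha : ∀ k, a k ≠ ⊤)
    (h : ∀ k, k + 2 ≤ m → a (k + 1) ≤ C * (a k ^ (1 / 2 : ℝ) * a (k + 2) ^ (1 / 2 : ℝ)))
    {k : ℕ} (hk : k ≤ m) :
    a k ≤ (C ^ (k * (m - k)) : ℝ≥0) * (a 0 ^ (1 - (k : ℝ) / m) * a m ^ ((k : ℝ) / m)) := by
  have hθ : 0 ≤ 1 - (k : ℝ) / m :=
    sub_nonneg.2 (div_le_one_of_le₀ (Nat.cast_le.2 hk) m.cast_nonneg)
  have hθ' : 0 ≤ (k : ℝ) / m := by positivity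
  lift a to ℕ → ℝ≥0 using ha
  simp only [← ENNReal.coe_rpow_of_nonneg _ (one_half_pos (α := ℝ)).le,
    ← ENNReal.coe_rpow_of_nonneg _ hθ, ← ENNReal.coe_rpow_of_nonneg _ hθ', ← ENNReal.coe_mul,
    ENNReal.coe_le_coe, ← NNReal.coe_le_coe, NNReal.coe_mul, NNReal.coe_rpow, NNReal.coe_pow]
    at h ⊢
  exact le_rpow_mul_rpow_of_log_convex (a := fun k ↦ a k) (by exact_mod_cast hC) hm
    (fun k ↦ (a k).coe_nonneg) h hk

end LogConvex

section Endpoint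

theorem norm_iteratedFDeriv_iteratedFDeriv {𝕜 E F : Type*} [NontriviallyNormedField 𝕜]
    [NormedAddCommGroup E] [NormedSpace 𝕜 E] [NormedAddCommGroup F] [NormedSpace 𝕜 F] (n k : ℕ)
    (f : E → F) (x : E) :
    ‖iteratedFDeriv 𝕜 n (iteratedFDeriv 𝕜 k f) x‖ = ‖iteratedFDeriv 𝕜 (n + k) f x‖ := by
  induction n generalizing k with
  | zero => rw [norm_iteratedFDeriv_zero, zero_add]
  | succ n ih =>
    rw [← norm_iteratedFDeriv_fderiv, fderiv_iteratedFDeriv,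
      LinearIsometryEquiv.norm_iteratedFDeriv_comp_left, ih, add_right_comm, add_assoc]

theorem eLpNorm_iteratedFDeriv_iteratedFDeriv {E F : Type*} [NormedAddCommGroup E]
    [NormedSpace ℝ E] [MeasurableSpace E] [NormedAddCommGroup F] [NormedSpace ℝ F] (n k : ℕ)
    (f : E → F) (p : ℝ≥0∞) (μ : Measure E) :
    eLpNorm (iteratedFDeriv ℝ n (iteratedFDeriv ℝ k f)) p μ =
      eLpNorm (iteratedFDeriv ℝ (n + k) f) p μ :=
  eLpNorm_congr_norm_ae (Eventually.of_forall fun x ↦ norm_iteratedFDeriv_iteratedFDeriv n k f x)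

theorem eLpNorm_fderiv_iteratedFDeriv {E F : Type*} [NormedAddCommGroup E] [NormedSpace ℝ E]
    [MeasurableSpace E] [NormedAddCommGroup F] [NormedSpace ℝ F] (k : ℕ) (f : E → F) (p : ℝ≥0∞)
    (μ : Measure E) :
    eLpNorm (fderiv ℝ (iteratedFDeriv ℝ k f)) p μ = eLpNorm (iteratedFDeriv ℝ (k + 1) f) p μ := by
  rw [← eLpNorm_norm (fderiv ℝ (iteratedFDeriv ℝ k f)),
    ← eLpNorm_norm (iteratedFDeriv ℝ (k + 1) f)]
  simp only [norm_fderiv_iteratedFDeriv]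

theorem contDiff_infty_iteratedFDeriv {E F : Type*} [NormedAddCommGroup E] [NormedSpace ℝ E]
    [NormedAddCommGroup F] [NormedSpace ℝ F] {f : E → F} (hf : ContDiff ℝ ∞ f) (k : ℕ) :
    ContDiff ℝ ∞ (iteratedFDeriv ℝ k f) :=
  hf.iteratedFDeriv_right (by exact_mod_cast le_top)

variable {d : ℕ} {F : Type*} [NormedAddCommGroup F] [NormedSpace ℝ F] {v : 𝔼 d → F}

theorem norm_fderiv_le_sum_partialDeriv (v : 𝔼 d → F) (x : 𝔼 d) :
    ‖fderiv ℝ v x‖ ≤ ∑ j, ‖partialDeriv j v x‖ := by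
  refine ContinuousLinearMap.opNorm_le_bound _ (by positivity) fun w ↦ ?_
  have hw : w = ∑ j, w j • EuclideanSpace.single j (1 : ℝ) := by
    simpa using ((EuclideanSpace.basisFun (Fin d) ℝ).sum_repr w).symm
  calc ‖fderiv ℝ v x w‖ = ‖∑ j, w j • partialDeriv j v x‖ := by
        conv_lhs => rw [hw, map_sum]
        simp only [map_smul, partialDeriv]
    _ ≤ ∑ j, ‖partialDeriv j v x‖ * ‖w‖ := norm_sum_le_of_le _ fun j _ ↦ by
        rw [norm_smul, mul_comm]
        exact mul_le_mul_of_nonneg_left (PiLp.norm_apply_le w j) (norm_nonneg _)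
    _ = _ := (Finset.sum_mul ..).symm

theorem norm_partialDeriv_partialDeriv_le (hv : ContDiff ℝ 2 v) (j : Fin d) (x : 𝔼 d) :
    ‖partialDeriv j (partialDeriv j v) x‖ ≤ ‖iteratedFDeriv ℝ 2 v x‖ := by
  have hv' : DifferentiableAt ℝ (fderiv ℝ v) x :=
    (hv.fderiv_right (m := 1) le_rfl).differentiable one_ne_zero x
  have hsecond : partialDeriv j (partialDeriv j v) x =
      fderiv ℝ (fderiv ℝ v) x (EuclideanSpace.single j 1) (EuclideanSpace.single j 1) := by
    unfold partialDeriv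
    rw [fderiv_clm_apply hv' (differentiableAt_const _)]
    simp
  have hnorm : ‖fderiv ℝ (fderiv ℝ v) x‖ = ‖iteratedFDeriv ℝ 2 v x‖ := by
    rw [← norm_iteratedFDeriv_one, norm_iteratedFDeriv_fderiv]
  rw [hsecond, ← hnorm]
  simpa using (fderiv ℝ (fderiv ℝ v) x).le_opNorm₂ (EuclideanSpace.single j 1)
    (EuclideanSpace.single j 1)

variable [CompleteSpace F] {P Q : ℝ}

theorem eLpNorm_fderiv_le_interpolation (hv : ContDiff ℝ 2 v) (hsupp : HasCompactSupport v)
    (hP : P ∈ Icc (0 : ℝ) 1) (hQ : Q ∈ Icc (0 : ℝ) 1) (hPQ : 0 < P + Q) :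
    eLpNorm (fderiv ℝ v) (lpExponent ((P + Q) / 2)) volume ≤
      (d * 10 : ℝ≥0) * (eLpNorm v (lpExponent P) volume ^ (1 / 2 : ℝ) *
        eLpNorm (iteratedFDeriv ℝ 2 v) (lpExponent Q) volume ^ (1 / 2 : ℝ)) := by
  calc eLpNorm (fderiv ℝ v) (lpExponent ((P + Q) / 2)) volume
      ≤ eLpNorm (∑ j, fun x ↦ ‖partialDeriv j v x‖) (lpExponent ((P + Q) / 2)) volume :=
        eLpNorm_mono_real fun x ↦ by
          rw [Finset.sum_apply]
          exact norm_fderiv_le_sum_partialDeriv v x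
    _ ≤ ∑ j, eLpNorm (partialDeriv j v) (lpExponent ((P + Q) / 2)) volume := by
        simp_rw [← eLpNorm_norm (partialDeriv _ v)]
        exact eLpNorm_sum_le (fun j _ ↦ (contDiff_partialDeriv (n := 1) hv
          j).continuous.norm.aestronglyMeasurable) (one_le_lpExponent (by linarith [hP.2, hQ.2]))
    _ ≤ ∑ _ : Fin d, 10 * (eLpNorm v (lpExponent P) volume ^ (1 / 2 : ℝ) *
          eLpNorm (iteratedFDeriv ℝ 2 v) (lpExponent Q) volume ^ (1 / 2 : ℝ)) := by
        refine Finset.sum_le_sum fun j _ ↦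
          (eLpNorm_partialDeriv_le hv hsupp hP hQ hPQ j).trans ?_
        gcongr
        exact eLpNorm_mono fun x ↦ norm_partialDeriv_partialDeriv_le hv j x
    _ = _ := by simp [mul_assoc]

theorem eLpNorm_iteratedFDeriv_succ_le {f : 𝔼 d → F} (hf : ContDiff ℝ ∞ f)
    (hsupp : HasCompactSupport f) (k : ℕ) (hP : P ∈ Icc (0 : ℝ) 1) (hQ : Q ∈ Icc (0 : ℝ) 1)
    (hPQ : 0 < P + Q) :
    eLpNorm (iteratedFDeriv ℝ (k + 1) f) (lpExponent ((P + Q) / 2)) volume ≤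
      (d * 10 : ℝ≥0) * (eLpNorm (iteratedFDeriv ℝ k f) (lpExponent P) volume ^ (1 / 2 : ℝ) *
        eLpNorm (iteratedFDeriv ℝ (k + 2) f) (lpExponent Q) volume ^ (1 / 2 : ℝ)) := by
  have h := eLpNorm_fderiv_le_interpolation (v := iteratedFDeriv ℝ k f)
    (mod_cast contDiff_infty.1 (contDiff_infty_iteratedFDeriv hf k) 2)
    (hsupp.iteratedFDeriv k) hP hQ hPQ
  rwa [eLpNorm_iteratedFDeriv_iteratedFDeriv, add_comm 2 k, eLpNorm_fderiv_iteratedFDeriv] at h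

theorem exists_eLpNorm_iteratedFDeriv_le_endpoint (d : ℕ) {F : Type*} [NormedAddCommGroup F]
    [NormedSpace ℝ F] [CompleteSpace F] {k m : ℕ} (hm : 0 < m) (hk : k ≤ m)
    (hP : P ∈ Icc (0 : ℝ) 1) (hQ : Q ∈ Icc (0 : ℝ) 1) (hPQ : 0 < P + Q) :
    ∃ C : ℝ≥0, ∀ f : 𝔼 d → F, ContDiff ℝ ∞ f → HasCompactSupport f →
      eLpNorm (iteratedFDeriv ℝ k f) (lpExponent ((1 - (k : ℝ) / m) * P + (k : ℝ) / m * Q)) volume ≤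
        C * (eLpNorm f (lpExponent P) volume ^ (1 - (k : ℝ) / m) *
          eLpNorm (iteratedFDeriv ℝ m f) (lpExponent Q) volume ^ ((k : ℝ) / m)) := by
  have hm' : (0 : ℝ) < m := Nat.cast_pos.2 hm
  refine ⟨(d * 10 + 1) ^ (k * (m - k)), fun f hf hsupp ↦ ?_⟩
  set X : ℕ → ℝ := fun k ↦ (1 - (k : ℝ) / m) * P + (k : ℝ) / m * Q with hX
  have hX01 : ∀ k ≤ m, X k ∈ Icc (0 : ℝ) 1 := fun k hk ↦ convex_Icc 0 1 hP hQ
    (sub_nonneg.2 ((div_le_one hm').2 (Nat.cast_le.2 hk))) (by positivity)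
    (sub_add_cancel _ _)
  have hXmid : ∀ k, (X k + X (k + 2)) / 2 = X (k + 1) := fun k ↦ by
    simp only [hX]
    push_cast
    ring
  have hXpos : ∀ k, k + 2 ≤ m → 0 < X k + X (k + 2) := fun k hk ↦ by
    have hlt : ((k : ℝ) + 1) / m < 1 := by
      rw [div_lt_one hm']; exact_mod_cast (by omega : k + 1 < m)
    have : 0 < ((k : ℝ) + 1) / m := by positivity
    have hmid : X k + X (k + 2) = 2 * ((1 - (k + 1 : ℝ) / m) * P + (k + 1 : ℝ) / m * Q) := by
      simp only [hX]
      push_cast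
      ring
    rcases hP.1.eq_or_lt with h0 | h0 <;> nlinarith [hQ.1, hP.1]
  have hmain := ennreal_le_rpow_mul_rpow_of_log_convex
    (a := fun k ↦ eLpNorm (iteratedFDeriv ℝ k f) (lpExponent (X k)) volume) (C := d * 10 + 1)
    le_add_self hm (fun k ↦ ((contDiff_infty_iteratedFDeriv hf
      k).continuous.memLp_of_hasCompactSupport (hsupp.iteratedFDeriv k)).2.ne)
    (fun l hl ↦ by
      have h := eLpNorm_iteratedFDeriv_succ_le hf hsupp l (hX01 l (by omega)) (hX01 _ hl)
        (hXpos l hl)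
      rw [hXmid] at h
      exact h.trans (mul_le_mul_left (ENNReal.coe_le_coe.2 le_self_add) _)) hk
  have hX0 : X 0 = P := by simp [hX]
  have hXm : X m = Q := by simp [hX, hm'.ne']
  simpa only [hX0, hXm, eLpNorm_congr_norm_ae
    (Eventually.of_forall fun _ ↦ norm_iteratedFDeriv_zero (𝕜 := ℝ) (f := f))] using hmain

end Endpoint

/-! ### The Gagliardo–Nirenberg inequality on the whole space -/

theorem finiteDimensional_continuousMultilinearMap {E F : Type*} [NormedAddCommGroup E]
    [NormedSpace ℝ E] [FiniteDimensional ℝ E] [NormedAddCommGroup F] [NormedSpace ℝ F]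
    [FiniteDimensional ℝ F] (k : ℕ) : FiniteDimensional ℝ (E [×k]→L[ℝ] F) :=
  FiniteDimensional.of_injective (ContinuousMultilinearMap.toMultilinearMapLinear (R' := ℝ))
    ContinuousMultilinearMap.toMultilinearMap_injective

theorem rpow_interpolation_mul_rpow_interpolation (a b : ℝ≥0∞) (C D : ℝ≥0) {s t τ θ : ℝ}
    (hs : s ∈ Icc (0 : ℝ) 1) (ht : t ∈ Icc (0 : ℝ) 1) (hτ : τ ∈ Icc (0 : ℝ) 1)
    (hθ : θ = (1 - τ) * s + τ * t) :
    (C * (a ^ (1 - s) * b ^ s)) ^ (1 - τ) * (D * (a ^ (1 - t) * b ^ t)) ^ τ =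
      (C ^ (1 - τ) * D ^ τ : ℝ≥0) * (a ^ (1 - θ) * b ^ θ) := by
  have hτ' : 0 ≤ 1 - τ := sub_nonneg.2 hτ.2
  rw [show 1 - θ = (1 - s) * (1 - τ) + (1 - t) * τ by rw [hθ]; ring,
    show θ = s * (1 - τ) + t * τ by rw [hθ]; ring,
    ENNReal.rpow_add_of_nonneg _ _ (mul_nonneg (sub_nonneg.2 hs.2) hτ')
      (mul_nonneg (sub_nonneg.2 ht.2) hτ.1),
    ENNReal.rpow_add_of_nonneg _ _ (mul_nonneg hs.1 hτ') (mul_nonneg ht.1 hτ.1)]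
  simp only [ENNReal.mul_rpow_of_nonneg _ _ hτ', ENNReal.mul_rpow_of_nonneg _ _ hτ.1,
    ← ENNReal.rpow_mul, ENNReal.coe_mul, ← ENNReal.coe_rpow_of_nonneg _ hτ',
    ← ENNReal.coe_rpow_of_nonneg _ hτ.1]
  ring

section Sobolev

variable {d : ℕ}

theorem eLpNorm_top_le_eLpNorm_fderiv_one {F : Type*} [NormedAddCommGroup F] [NormedSpace ℝ F]
    {v : 𝔼 1 → F} (hv : ContDiff ℝ 1 v) (hsupp : HasCompactSupport v) :
    eLpNorm v ∞ volume ≤ eLpNorm (fderiv ℝ v) 1 volume := by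
  have hv' : Continuous (fderiv ℝ v) := hv.continuous_fderiv one_ne_zero
  set a : 𝔼 1 := WithLp.toLp 2 (Fin.insertNth 0 0 default) with ha
  have hline : ∀ x : 𝔼 1, x = a + x 0 • EuclideanSpace.single 0 1 := fun x ↦ by
    ext k
    obtain rfl : k = 0 := Subsingleton.elim _ _
    simp [ha]
  rw [eLpNorm_exponent_top, eLpNorm_one_eq_lintegral_enorm,
    lintegral_eq_lintegral_coordinate_line (n := 0) 0 hv'.enorm.measurable, lintegral_unique,
    volume_pi, Measure.pi_univ, Finset.univ_eq_empty, Finset.prod_empty, mul_one]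
  refine eLpNormEssSup_le_of_ae_enorm_bound (Eventually.of_forall fun x ↦ ?_)
  have hcurve : ContDiff ℝ 1 fun t : ℝ ↦ v (a + t • EuclideanSpace.single 0 1) :=
    hv.comp (by fun_prop)
  have hbound := (hasCompactSupport_comp_add_smul_single hsupp 0 a).enorm_le_lintegral_Ici_deriv
    hcurve (x 0)
  rw [deriv_add_smul_single (hv.differentiable one_ne_zero), ← hline x] at hbound
  refine hbound.trans ((setLIntegral_le_lintegral _ _).trans (lintegral_mono fun t ↦ ?_))
  have hpartial := (fderiv ℝ v (a + t • EuclideanSpace.single 0 1)).le_opENorm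
    (EuclideanSpace.single 0 1)
  rw [show ‖(EuclideanSpace.single 0 1 : 𝔼 1)‖ₑ = 1 by simp [← ofReal_norm], mul_one] at hpartial
  convert hpartial
  rfl

theorem exists_eLpNorm_le_eLpNorm_fderiv (F : Type*) [NormedAddCommGroup F] [NormedSpace ℝ F]
    [FiniteDimensional ℝ F] (hd : 0 < d) {S : ℝ} (hS1 : S ≤ 1) (hS : 1 / (d : ℝ) < S ∨ S = 1) :
    ∃ C : ℝ≥0, ∀ v : 𝔼 d → F, ContDiff ℝ 1 v → HasCompactSupport v →
      eLpNorm v (lpExponent (S - 1 / d)) volume ≤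
        C * eLpNorm (fderiv ℝ v) (lpExponent S) volume := by
  by_cases hSd : 1 / (d : ℝ) < S
  · have hS0 : 0 < S := lt_of_le_of_lt (by positivity) hSd
    have hS' : 0 < S - 1 / d := sub_pos.2 hSd
    refine ⟨SNormLESNormFDerivOfEqConst F (volume : Measure (𝔼 d)) S⁻¹.toNNReal,
      fun v hv hsupp ↦ ?_⟩
    rw [lpExponent_eq_ofReal_inv hS0, lpExponent_eq_ofReal_inv hS']
    refine eLpNorm_le_eLpNorm_fderiv_of_eq volume hv hsupp (Real.one_le_toNNReal.2
      ((one_le_inv₀ hS0).2 hS1)) (by simpa using hd) ?_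
    rw [NNReal.coe_inv, Real.coe_toNNReal _ (inv_pos.2 hS0).le,
      Real.coe_toNNReal _ (inv_pos.2 hS').le]
    simp
  · obtain rfl : S = 1 := hS.resolve_left hSd
    obtain rfl : d = 1 := by
      by_contra hne
      refine hSd ((div_lt_one (by positivity)).2 ?_)
      exact_mod_cast (by omega : 1 < d)
    refine ⟨1, fun v hv hsupp ↦ ?_⟩
    simpa [lpExponent_zero, lpExponent_one] using eLpNorm_top_le_eLpNorm_fderiv_one hv hsupp

section Hilbert

variable {H : Type*} [NormedAddCommGroup H] [InnerProductSpace ℝ H] {A B S R γ τ : ℝ}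

theorem eLpNorm_fderiv_norm_rpow_le {v : 𝔼 d → H} (hv : ContDiff ℝ 1 v) (hA : 0 ≤ A) (hB : 0 ≤ B)
    (hγ : 1 < γ) :
    eLpNorm (fderiv ℝ fun x ↦ ‖v x‖ ^ γ) (lpExponent (B + (γ - 1) * A)) volume ≤
      ENNReal.ofReal γ * (eLpNorm v (lpExponent A) volume ^ (γ - 1) *
        eLpNorm (fderiv ℝ v) (lpExponent B) volume) := by
  have hγ' : 0 < γ - 1 := sub_pos.2 hγ
  calc eLpNorm (fderiv ℝ fun x ↦ ‖v x‖ ^ γ) (lpExponent (B + (γ - 1) * A)) volume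
      ≤ ENNReal.ofReal γ * eLpNorm ((fun x ↦ ‖v x‖ ^ (γ - 1)) * fun x ↦ ‖fderiv ℝ v x‖)
          (lpExponent (B + (γ - 1) * A)) volume :=
        eLpNorm_le_mul_eLpNorm_of_ae_le_mul (Eventually.of_forall fun x ↦ by
          rw [Pi.mul_apply, norm_mul, norm_norm,
            Real.norm_of_nonneg (Real.rpow_nonneg (norm_nonneg _) _), ← mul_assoc]
          exact norm_fderiv_norm_rpow_le (hv.differentiable one_ne_zero) hγ) _
    _ ≤ _ := by
        gcongr
        have hHolder := eLpNorm_mul_le_lpExponent (A := (γ - 1) * A) (by positivity) hB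
          (hv.continuous.norm.rpow_const fun _ ↦ .inr hγ'.le).aestronglyMeasurable
          (hv.continuous_fderiv one_ne_zero).norm.aestronglyMeasurable (μ := volume)
        rwa [eLpNorm_norm_rpow_lpExponent v _ hγ', mul_div_cancel_left₀ _ hγ'.ne', eLpNorm_norm,
          add_comm] at hHolder

theorem exists_eLpNorm_le_of_sobolev_norm_rpow (H : Type*) [NormedAddCommGroup H]
    [InnerProductSpace ℝ H] [FiniteDimensional ℝ H] (hd : 0 < d) (hA : 0 ≤ A) (hB : 0 ≤ B)
    (hγ : 1 ≤ γ) (hS : S = B + (γ - 1) * A) (hS1 : S ≤ 1) (hSd : 1 / (d : ℝ) < S ∨ S = 1) :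
    ∃ C : ℝ≥0, ∀ v : 𝔼 d → H, ContDiff ℝ 1 v → HasCompactSupport v →
      eLpNorm v (lpExponent ((S - 1 / d) / γ)) volume ≤
        C * (eLpNorm v (lpExponent A) volume ^ (1 - 1 / γ) *
          eLpNorm (fderiv ℝ v) (lpExponent B) volume ^ (1 / γ)) := by
  rcases hγ.eq_or_lt with rfl | hγ
  · obtain rfl : S = B := by linarith
    simpa using exists_eLpNorm_le_eLpNorm_fderiv H hd hS1 hSd
  have hγ0 : 0 < γ := one_pos.trans hγ
  obtain ⟨C, hC⟩ := exists_eLpNorm_le_eLpNorm_fderiv ℝ hd hS1 hSd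
  refine ⟨(C * γ.toNNReal) ^ (1 / γ), fun v hv hsupp ↦ ?_⟩
  have hpow := (hC _ (hv.norm_rpow hγ) (hsupp.comp_left (g := fun y ↦ ‖y‖ ^ γ)
    (by simp [hγ0.ne']))).trans (mul_le_mul_right (hS ▸ eLpNorm_fderiv_norm_rpow_le hv hA hB hγ) _)
  have hroot := ENNReal.rpow_le_rpow hpow (z := 1 / γ) (by positivity)
  rw [eLpNorm_norm_rpow_lpExponent v _ hγ0, ← ENNReal.rpow_mul, mul_one_div_cancel hγ0.ne',
    ENNReal.rpow_one, ← mul_assoc, ENNReal.mul_rpow_of_nonneg _ _ (by positivity),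
    ENNReal.mul_rpow_of_nonneg (eLpNorm v _ _ ^ _) _ (by positivity), ← ENNReal.rpow_mul,
    show (γ - 1) * (1 / γ) = 1 - 1 / γ by field_simp] at hroot
  rwa [ENNReal.coe_rpow_of_nonneg _ (by positivity), ENNReal.coe_mul]

-- Sobolev's inequality for `‖v‖ ^ (1 / τ)` would need an exponent below `1`; stop at `1` and
-- interpolate the result against `L^A`.
theorem exists_eLpNorm_le_interpolation_fderiv_hilbert_of_one_lt (H : Type*) [NormedAddCommGroup H]
    [InnerProductSpace ℝ H] [FiniteDimensional ℝ H] (hd : 0 < d) (hA : 0 < A)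
    (hB : B ∈ Icc (0 : ℝ) 1) (hτ : 0 < τ)
    (hR : R = (1 - τ) * A + τ * (B - 1 / d)) (hS : 1 < B + (1 / τ - 1) * A) :
    ∃ C : ℝ≥0, ∀ v : 𝔼 d → H, ContDiff ℝ 1 v → HasCompactSupport v →
      eLpNorm v (lpExponent R) volume ≤ C * (eLpNorm v (lpExponent A) volume ^ (1 - τ) *
        eLpNorm (fderiv ℝ v) (lpExponent B) volume ^ τ) := by
  set γ := 1 + (1 - B) / A with hγ
  have hγ1 : 1 ≤ γ := le_add_of_nonneg_right (div_nonneg (by linarith [hB.2]) hA.le)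
  have hγ0 : 0 < γ := one_pos.trans_le hγ1
  have hγA : (γ - 1) * A = 1 - B := by rw [hγ]; field_simp; ring
  obtain ⟨C, hC⟩ := exists_eLpNorm_le_of_sobolev_norm_rpow H hd hA.le hB.1 hγ1
    (S := 1) (by rw [hγA]; ring) le_rfl (.inr rfl)
  have hτγ1 : τ * γ < 1 := by
    have : γ - 1 < 1 / τ - 1 := lt_of_mul_lt_mul_right (by linarith : _ < _) hA.le
    have := mul_lt_mul_of_pos_left (by linarith : γ < 1 / τ) hτ
    rwa [mul_one_div_cancel hτ.ne'] at this
  have hτγ0 : 0 < τ * γ := by positivity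
  have hd1 : 0 ≤ 1 - 1 / (d : ℝ) := by
    rw [sub_nonneg, div_le_one (Nat.cast_pos.2 hd)]
    exact_mod_cast hd
  refine ⟨C ^ (τ * γ), fun v hv hsupp ↦ ?_⟩
  have hlyap := eLpNorm_lpExponent_interpolation (hv.continuous.aestronglyMeasurable (μ := volume))
    hA.le (by positivity : 0 ≤ (1 - 1 / (d : ℝ)) / γ) hτγ0 hτγ1
  have hexp : (1 - τ * γ) * A + τ * γ * ((1 - 1 / d) / γ) = R := by
    rw [hR, mul_assoc τ γ, mul_div_cancel₀ _ hγ0.ne']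
    linear_combination (-τ) * hγA
  rw [hexp] at hlyap
  have hγ' : 1 / γ ∈ Icc (0 : ℝ) 1 := ⟨by positivity, (div_le_one hγ0).2 hγ1⟩
  have hmix := rpow_interpolation_mul_rpow_interpolation (eLpNorm v (lpExponent A) volume)
    (eLpNorm (fderiv ℝ v) (lpExponent B) volume) 1 C (s := 0) (by simp) hγ' ⟨hτγ0.le, hτγ1.le⟩
    (show τ = (1 - τ * γ) * 0 + τ * γ * (1 / γ) by field_simp; simp)
  simp only [sub_zero, ENNReal.rpow_one, ENNReal.rpow_zero, mul_one, ENNReal.coe_one, one_mul,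
    NNReal.one_rpow] at hmix
  rw [← hmix]
  exact hlyap.trans (mul_le_mul_right (ENNReal.rpow_le_rpow (hC v hv hsupp) hτγ0.le) _)

theorem exists_eLpNorm_le_interpolation_fderiv_hilbert (H : Type*) [NormedAddCommGroup H]
    [InnerProductSpace ℝ H] [FiniteDimensional ℝ H] (hd : 0 < d) (hA : 0 < A)
    (hB : B ∈ Icc (0 : ℝ) 1) (hτ : 0 < τ) (hτ1 : τ < 1)
    (hR : R = (1 - τ) * A + τ * (B - 1 / d)) (hR0 : 0 < R) :
    ∃ C : ℝ≥0, ∀ v : 𝔼 d → H, ContDiff ℝ 1 v → HasCompactSupport v →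
      eLpNorm v (lpExponent R) volume ≤ C * (eLpNorm v (lpExponent A) volume ^ (1 - τ) *
        eLpNorm (fderiv ℝ v) (lpExponent B) volume ^ τ) := by
  rcases le_or_gt (B + (1 / τ - 1) * A) 1 with hS | hS
  · have hRτ : B + (1 / τ - 1) * A - 1 / d = R / τ := by rw [hR]; field_simp; ring
    have hRτ0 : 0 < R / τ := by positivity
    obtain ⟨C, hC⟩ := exists_eLpNorm_le_of_sobolev_norm_rpow H hd hA.le hB.1
      ((one_le_div hτ).2 hτ1.le) rfl hS (.inl (by linarith))
    rw [hRτ, one_div_one_div, div_div, mul_one_div_cancel hτ.ne', div_one] at hC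
    exact ⟨C, hC⟩
  · exact exists_eLpNorm_le_interpolation_fderiv_hilbert_of_one_lt H hd hA hB hτ hR hS

end Hilbert

variable {A B R τ : ℝ}

theorem exists_eLpNorm_le_interpolation_fderiv (F : Type*) [NormedAddCommGroup F] [NormedSpace ℝ F]
    [FiniteDimensional ℝ F] (hd : 0 < d) (hA : 0 < A) (hB : B ∈ Icc (0 : ℝ) 1) (hτ : 0 < τ)
    (hτ1 : τ < 1) (hR : R = (1 - τ) * A + τ * (B - 1 / d)) (hR0 : 0 < R) :
    ∃ C : ℝ≥0, ∀ v : 𝔼 d → F, ContDiff ℝ 1 v → HasCompactSupport v →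
      eLpNorm v (lpExponent R) volume ≤ C * (eLpNorm v (lpExponent A) volume ^ (1 - τ) *
        eLpNorm (fderiv ℝ v) (lpExponent B) volume ^ τ) := by
  let L : F ≃L[ℝ] 𝔼 (Module.finrank ℝ F) := toEuclidean
  obtain ⟨C, hC⟩ := exists_eLpNorm_le_interpolation_fderiv_hilbert (𝔼 (Module.finrank ℝ F)) hd hA
    hB hτ hτ1 hR hR0
  set K : ℝ≥0 := ‖(L.symm : 𝔼 (Module.finrank ℝ F) →L[ℝ] F)‖₊
  set M : ℝ≥0 := ‖(L : F →L[ℝ] 𝔼 (Module.finrank ℝ F))‖₊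
  refine ⟨K * (C * (M ^ (1 - τ) * M ^ τ)), fun v hv hsupp ↦ ?_⟩
  have hK : eLpNorm v (lpExponent R) volume ≤ K * eLpNorm (L ∘ v) (lpExponent R) volume :=
    eLpNorm_le_nnreal_smul_eLpNorm_of_ae_le_mul (Eventually.of_forall fun x ↦ by
      simpa using (L.symm : 𝔼 (Module.finrank ℝ F) →L[ℝ] F).le_opNNNorm (L (v x))) _
  have hM : eLpNorm (L ∘ v) (lpExponent A) volume ≤ M * eLpNorm v (lpExponent A) volume :=
    eLpNorm_le_nnreal_smul_eLpNorm_of_ae_le_mul (Eventually.of_forall fun x ↦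
      (L : F →L[ℝ] 𝔼 (Module.finrank ℝ F)).le_opNNNorm (v x)) _
  have hM' : eLpNorm (fderiv ℝ (L ∘ v)) (lpExponent B) volume ≤
      M * eLpNorm (fderiv ℝ v) (lpExponent B) volume :=
    eLpNorm_le_nnreal_smul_eLpNorm_of_ae_le_mul (Eventually.of_forall fun x ↦ by
      rw [L.comp_fderiv]
      exact ContinuousLinearMap.opNNNorm_comp_le _ _) _
  have hτ' : 0 ≤ 1 - τ := sub_nonneg.2 hτ1.le
  calc eLpNorm v (lpExponent R) volume
      ≤ K * (C * (eLpNorm (L ∘ v) (lpExponent A) volume ^ (1 - τ) *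
          eLpNorm (fderiv ℝ (L ∘ v)) (lpExponent B) volume ^ τ)) :=
        hK.trans (mul_le_mul_right (hC _ (L.contDiff.comp hv)
          (hsupp.comp_left (map_zero L))) _)
    _ ≤ K * (C * ((M * eLpNorm v (lpExponent A) volume) ^ (1 - τ) *
          (M * eLpNorm (fderiv ℝ v) (lpExponent B) volume) ^ τ)) := by gcongr
    _ = _ := by
        rw [ENNReal.mul_rpow_of_nonneg _ _ hτ', ENNReal.mul_rpow_of_nonneg _ _ hτ.le,
          ← ENNReal.coe_rpow_of_nonneg _ hτ', ← ENNReal.coe_rpow_of_nonneg _ hτ.le]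
        push_cast
        ring

variable (F : Type*) [NormedAddCommGroup F] [NormedSpace ℝ F] [FiniteDimensional ℝ F]

theorem exists_eLpNorm_iteratedFDeriv_le_interpolation (hd : 0 < d) (k : ℕ) (hA : 0 < A)
    (hB : B ∈ Icc (0 : ℝ) 1) (hτ : 0 ≤ τ) (hτ1 : τ < 1)
    (hR : R = (1 - τ) * A + τ * (B - 1 / d)) (hR0 : 0 < R) :
    ∃ C : ℝ≥0, ∀ f : 𝔼 d → F, ContDiff ℝ ∞ f → HasCompactSupport f →
      eLpNorm (iteratedFDeriv ℝ k f) (lpExponent R) volume ≤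
        C * (eLpNorm (iteratedFDeriv ℝ k f) (lpExponent A) volume ^ (1 - τ) *
          eLpNorm (iteratedFDeriv ℝ (k + 1) f) (lpExponent B) volume ^ τ) := by
  rcases hτ.eq_or_lt with rfl | hτ
  · exact ⟨1, fun f _ _ ↦ by simp [hR]⟩
  have := finiteDimensional_continuousMultilinearMap (E := 𝔼 d) (F := F) k
  obtain ⟨C, hC⟩ := exists_eLpNorm_le_interpolation_fderiv (𝔼 d [×k]→L[ℝ] F) hd hA hB hτ hτ1 hR hR0
  refine ⟨C, fun f hf hsupp ↦ ?_⟩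
  simpa only [eLpNorm_fderiv_iteratedFDeriv] using hC _
    ((contDiff_infty_iteratedFDeriv hf k).of_le (mod_cast le_top)) (hsupp.iteratedFDeriv k)

theorem exists_eLpNorm_iteratedFDeriv_le_sobolev (hd : 0 < d) (n k : ℕ) (hR : 0 < R)
    (hRn : R + n / d ≤ 1) :
    ∃ C : ℝ≥0, ∀ f : 𝔼 d → F, ContDiff ℝ ∞ f → HasCompactSupport f →
      eLpNorm (iteratedFDeriv ℝ k f) (lpExponent R) volume ≤
        C * eLpNorm (iteratedFDeriv ℝ (k + n) f) (lpExponent (R + n / d)) volume := by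
  induction n generalizing k R with
  | zero => exact ⟨1, fun f _ _ ↦ by simp⟩
  | succ n ih =>
    have hsplit : R + 1 / d + n / d = R + (n + 1 : ℕ) / d := by push_cast; ring
    have hn : 0 ≤ (n : ℝ) / d := by positivity
    have := finiteDimensional_continuousMultilinearMap (E := 𝔼 d) (F := F) k
    obtain ⟨C, hC⟩ := exists_eLpNorm_le_eLpNorm_fderiv (𝔼 d [×k]→L[ℝ] F) (S := R + 1 / d) hd
      (by linarith) (.inl (by linarith))
    obtain ⟨D, hD⟩ := ih (R := R + 1 / d) (k + 1) (by positivity) (by linarith)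
    refine ⟨C * D, fun f hf hsupp ↦ ?_⟩
    have hstep := hC _ ((contDiff_infty_iteratedFDeriv hf k).of_le (mod_cast le_top))
      (hsupp.iteratedFDeriv k)
    rw [add_sub_cancel_right, eLpNorm_fderiv_iteratedFDeriv] at hstep
    have hrest := hD f hf hsupp
    rw [hsplit, add_right_comm, add_assoc] at hrest
    rw [ENNReal.coe_mul, mul_assoc]
    exact hstep.trans (mul_le_mul_right hrest _)

end Sobolev

/-- The exponents for which `‖∇ⁱ f‖_{1/R} ≲ ‖f‖_{1/P} ^ (1 - θ) * ‖∇ᵐ f‖_{1/Q} ^ θ` is invariant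
under dilations of `ℝ^d`, with `P`, `Q`, `R` the reciprocals of the Lebesgue exponents, and for
which the Gagliardo–Nirenberg inequality holds. -/
structure IsAdmissible (d i m : ℕ) (P Q R θ : ℝ) : Prop where
  dim_pos : 0 < d
  order_pos : 0 < i
  top_order_pos : 0 < m
  mem_P : P ∈ Icc (0 : ℝ) 1
  mem_Q : Q ∈ Icc (0 : ℝ) 1
  pos_R : 0 < R
  div_le_theta : (i : ℝ) / m ≤ θ
  theta_lt_one : θ < 1
  scaling : R = i / d + θ * (Q - m / d) + (1 - θ) * P

namespace IsAdmissible

variable {d i m : ℕ} {P Q R θ : ℝ}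

theorem theta_pos (h : IsAdmissible d i m P Q R θ) : 0 < θ :=
  (div_pos (Nat.cast_pos.2 h.order_pos) (Nat.cast_pos.2 h.top_order_pos)).trans_le h.div_le_theta

theorem order_le (h : IsAdmissible d i m P Q R θ) : (i : ℝ) ≤ θ * m :=
  (div_le_iff₀ (Nat.cast_pos.2 h.top_order_pos)).1 h.div_le_theta

theorem add_div_eq (h : IsAdmissible d i m P Q R θ) :
    R + (θ * m - i) / d = (1 - θ) * P + θ * Q := by
  rw [h.scaling]
  ring

theorem le_mix (h : IsAdmissible d i m P Q R θ) : R ≤ (1 - θ) * P + θ * Q := by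
  have := div_nonneg (sub_nonneg.2 h.order_le) d.cast_nonneg
  linarith [h.add_div_eq]

theorem mix_le_one (h : IsAdmissible d i m P Q R θ) : (1 - θ) * P + θ * Q ≤ 1 :=
  (convex_Icc (0 : ℝ) 1 h.mem_P h.mem_Q (sub_nonneg.2 h.theta_lt_one.le) h.theta_pos.le
    (sub_add_cancel _ _)).2

theorem add_pos (h : IsAdmissible d i m P Q R θ) : 0 < P + Q := by
  have hmix := h.pos_R.trans_le h.le_mix
  by_contra hneg
  nlinarith [h.mem_P.1, h.mem_Q.1, h.theta_pos]

theorem exists_order_add_eq (h : IsAdmissible d i m P Q R θ) :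
    ∃ n : ℕ, ∃ τ ∈ Ico (0 : ℝ) 1, i + n < m ∧ θ * m = (i + n : ℕ) + τ := by
  have hm : (0 : ℝ) < m := Nat.cast_pos.2 h.top_order_pos
  obtain ⟨n, hn⟩ := Nat.exists_eq_add_of_le (Nat.le_floor h.order_le)
  have hle : ((i + n : ℕ) : ℝ) ≤ θ * m := hn ▸ Nat.floor_le (by have := h.theta_pos; positivity)
  have hlt : θ * m < (i + n : ℕ) + 1 := hn ▸ Nat.lt_floor_add_one (θ * m)
  refine ⟨n, θ * m - (i + n : ℕ), ⟨by linarith, by linarith⟩, ?_, by ring⟩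
  exact_mod_cast hle.trans_lt (mul_lt_of_lt_one_left hm h.theta_lt_one)

end IsAdmissible

theorem convex_combination_pos {P Q t : ℝ} (hP : 0 ≤ P) (hQ : 0 ≤ Q) (hPQ : 0 < P + Q)
    (ht : 0 < t) (ht1 : t < 1) : 0 < (1 - t) * P + t * Q := by
  have := sub_pos.2 ht1
  rcases hP.eq_or_lt with rfl | hP
  · rw [zero_add] at hPQ
    positivity
  · positivity

theorem exists_eLpNorm_iteratedFDeriv_le_of_hasCompactSupport {d i m : ℕ} {P Q R θ : ℝ}
    (h : IsAdmissible d i m P Q R θ) (F : Type*) [NormedAddCommGroup F] [NormedSpace ℝ F]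
    [FiniteDimensional ℝ F] :
    ∃ C : ℝ≥0, ∀ f : 𝔼 d → F, ContDiff ℝ ∞ f → HasCompactSupport f →
      eLpNorm (iteratedFDeriv ℝ i f) (lpExponent R) volume ≤
        C * (eLpNorm f (lpExponent P) volume ^ (1 - θ) *
          eLpNorm (iteratedFDeriv ℝ m f) (lpExponent Q) volume ^ θ) := by
  have := FiniteDimensional.complete ℝ F
  have hm : (0 : ℝ) < m := Nat.cast_pos.2 h.top_order_pos
  -- Interpolate between the orders `i + n` and `i + n + 1` around `θ m`, then descend to `i`.
  obtain ⟨n, τ, hτ, hlt, hθ⟩ := h.exists_order_add_eq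
  have hRn : R + n / d = (1 - θ) * P + θ * Q - τ / d := by
    rw [← h.add_div_eq, hθ]
    push_cast
    ring
  have hmix : θ = (1 - τ) * ((i + n : ℕ) / m) + τ * ((i + n + 1 : ℕ) / m) := by
    field_simp
    push_cast at hθ ⊢
    linarith
  have hk : ((i + n : ℕ) : ℝ) / m ∈ Icc (0 : ℝ) 1 :=
    ⟨by positivity, (div_le_one hm).2 (Nat.cast_le.2 hlt.le)⟩
  have hk' : ((i + n + 1 : ℕ) : ℝ) / m ∈ Icc (0 : ℝ) 1 :=
    ⟨by positivity, (div_le_one hm).2 (Nat.cast_le.2 hlt)⟩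
  obtain ⟨C₁, hC₁⟩ := exists_eLpNorm_iteratedFDeriv_le_sobolev F h.dim_pos n i h.pos_R
    (by linarith [h.mix_le_one, div_nonneg hτ.1 (d.cast_nonneg (α := ℝ))])
  obtain ⟨C₂, hC₂⟩ := exists_eLpNorm_iteratedFDeriv_le_endpoint d (F := F) h.top_order_pos hlt.le
    h.mem_P h.mem_Q h.add_pos
  obtain ⟨C₃, hC₃⟩ := exists_eLpNorm_iteratedFDeriv_le_endpoint d (F := F) h.top_order_pos hlt
    h.mem_P h.mem_Q h.add_pos
  obtain ⟨C₄, hC₄⟩ := exists_eLpNorm_iteratedFDeriv_le_interpolation F h.dim_pos (i + n)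
    (R := R + n / d) (convex_combination_pos h.mem_P.1 h.mem_Q.1 h.add_pos
      (div_pos (by exact_mod_cast Nat.add_pos_left h.order_pos n) hm)
      ((div_lt_one hm).2 (Nat.cast_lt.2 hlt)))
    (convex_Icc 0 1 h.mem_P h.mem_Q (sub_nonneg.2 hk'.2) hk'.1 (sub_add_cancel _ _)) hτ.1 hτ.2
    (by rw [hRn]; linear_combination (Q - P) * hmix)
    (add_pos_of_pos_of_nonneg h.pos_R (by positivity))
  refine ⟨C₁ * (C₄ * (C₂ ^ (1 - τ) * C₃ ^ τ)), fun f hf hsupp ↦ ?_⟩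
  have := sub_nonneg.2 hτ.2.le
  have := hτ.1
  rw [ENNReal.coe_mul, ENNReal.coe_mul, mul_assoc, mul_assoc,
    ← rpow_interpolation_mul_rpow_interpolation _ _ C₂ C₃ hk hk' ⟨hτ.1, hτ.2.le⟩ hmix]
  refine (hC₁ f hf hsupp).trans (mul_le_mul_right ?_ _)
  refine (hC₄ f hf hsupp).trans (mul_le_mul_right ?_ _)
  gcongr
  exacts [hC₂ f hf hsupp, hC₃ f hf hsupp]

/-! ### Poincaré inequalities on bounded convex sets -/

section Segment

variable {E F : Type*} [NormedAddCommGroup E] [NormedSpace ℝ E] [NormedAddCommGroup F]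
  [NormedSpace ℝ F] {u : E → F}

theorem enorm_sub_le_lintegral_enorm_fderiv_segment (hu : ContDiff ℝ 1 u) (x y : E) :
    ‖u y - u x‖ₑ ≤
      ‖y - x‖ₑ * ∫⁻ t in Icc (0 : ℝ) 1, ‖fderiv ℝ u ((1 - t) • x + t • y)‖ₑ := by
  set c : ℝ → E := fun t ↦ (1 - t) • x + t • y with hc
  have hderiv : ∀ t, HasDerivAt (u ∘ c) (fderiv ℝ u (c t) (y - x)) t := fun t ↦ by
    refine (hu.differentiable one_ne_zero _).hasFDerivAt.comp_hasDerivAt t ?_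
    exact ((((hasDerivAt_id t).const_sub 1).smul_const x).add
      ((hasDerivAt_id t).smul_const y)).congr_deriv (by module)
  have hbound := enorm_sub_le_lintegral_deriv_of_contDiffOn_Icc
    ((hu.comp (by fun_prop : ContDiff ℝ 1 c)).contDiffOn (s := Icc 0 1)) zero_le_one
  rw [← lintegral_const_mul' _ _ enorm_ne_top]
  calc ‖u y - u x‖ₑ = ‖(u ∘ c) 1 - (u ∘ c) 0‖ₑ := by simp [hc]
    _ ≤ ∫⁻ t in Icc 0 1, ‖deriv (u ∘ c) t‖ₑ := hbound
    _ ≤ _ := lintegral_mono fun t ↦ by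
      rw [(hderiv t).deriv, mul_comm]
      exact ContinuousLinearMap.le_opENorm _ _

theorem enorm_sub_rpow_le_lintegral_enorm_fderiv_segment (hu : ContDiff ℝ 1 u) {q : ℝ}
    (hq : 1 ≤ q) (x y : E) :
    ‖u y - u x‖ₑ ^ q ≤
      ‖y - x‖ₑ ^ q * ∫⁻ t in Icc (0 : ℝ) 1, ‖fderiv ℝ u ((1 - t) • x + t • y)‖ₑ ^ q := by
  have hq0 : 0 ≤ q := zero_le_one.trans hq
  have hcont : Continuous fun t : ℝ ↦ fderiv ℝ u ((1 - t) • x + t • y) :=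
    (hu.continuous_fderiv one_ne_zero).comp (by fun_prop)
  have hJensen := rpow_lintegral_le (μ := volume.restrict (Icc (0 : ℝ) 1))
    hcont.enorm.aemeasurable hq
  rw [Measure.restrict_apply_univ, Real.volume_Icc, sub_zero, ENNReal.ofReal_one,
    ENNReal.one_rpow, one_mul] at hJensen
  calc ‖u y - u x‖ₑ ^ q
      ≤ (‖y - x‖ₑ * ∫⁻ t in Icc (0 : ℝ) 1, ‖fderiv ℝ u ((1 - t) • x + t • y)‖ₑ) ^ q := by
        gcongr
        exact enorm_sub_le_lintegral_enorm_fderiv_segment hu x y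
    _ ≤ _ := by
        rw [ENNReal.mul_rpow_of_nonneg _ _ hq0]
        gcongr

end Segment

theorem enorm_sub_integral_smul_le {E F : Type*} [NormedAddCommGroup E] [MeasurableSpace E]
    [BorelSpace E] [NormedAddCommGroup F] [NormedSpace ℝ F] [CompleteSpace F] {μ : Measure E}
    [IsFiniteMeasureOnCompacts μ] {B : Set E} {u : E → F} {η : E → ℝ} (hB : MeasurableSet B)
    (hη : Continuous η) (hη_supp : HasCompactSupport η) (hηB : Function.support η ⊆ B)
    (hη_one : ∫ x, η x ∂μ = 1) {K : ℝ≥0∞} (hK : ∀ x, ‖η x‖ₑ ≤ K) (hu : Continuous u) (x : E) :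
    ‖u x - ∫ y, η y • u y ∂μ‖ₑ ≤ K * ∫⁻ y in B, ‖u y - u x‖ₑ ∂μ := by
  have hint : Integrable η μ := hη.integrable_of_hasCompactSupport hη_supp
  have hint' : Integrable (fun y ↦ η y • u y) μ :=
    (hη.smul hu).integrable_of_hasCompactSupport hη_supp.smul_right
  have hmean : u x - ∫ y, η y • u y ∂μ = ∫ y, η y • (u x - u y) ∂μ := by
    simp_rw [smul_sub]
    rw [integral_sub (hint.smul_const _) hint', integral_smul_const, hη_one, one_smul]
  have hmeas : Measurable fun y ↦ ‖u y - u x‖ₑ := (hu.sub continuous_const).enorm.measurable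
  rw [hmean, ← lintegral_const_mul _ hmeas, ← lintegral_indicator hB]
  refine (enorm_integral_le_lintegral_enorm _).trans (lintegral_mono fun y ↦ ?_)
  by_cases hy : y ∈ B
  · rw [indicator_of_mem hy, enorm_smul, enorm_sub_rev]
    gcongr
    exact hK y
  · rw [Function.notMem_support.1 fun h ↦ hy (hηB h)]
    simp

theorem eLpNorm_top_sub_integral_smul_le {E F : Type*} [NormedAddCommGroup E] [NormedSpace ℝ E]
    [MeasurableSpace E] [BorelSpace E] [NormedAddCommGroup F] [NormedSpace ℝ F] [CompleteSpace F]
    {μ : Measure E} [IsFiniteMeasureOnCompacts μ] [μ.IsOpenPosMeasure] {B : Set E} {u : E → F}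
    {η : E → ℝ} (hc : Convex ℝ B) (hB : IsOpen B) (hη : Continuous η)
    (hη_supp : HasCompactSupport η) (hηB : Function.support η ⊆ B) (hη_one : ∫ x, η x ∂μ = 1)
    {K : ℝ≥0∞} (hK : ∀ x, ‖η x‖ₑ ≤ K) (hu : ContDiff ℝ 1 u) :
    eLpNorm (fun x ↦ u x - ∫ y, η y • u y ∂μ) ∞ (μ.restrict B) ≤
      K * μ B * Metric.ediam B * eLpNorm (fderiv ℝ u) ∞ (μ.restrict B) := by
  have hosc : ∀ x ∈ B, ∀ y ∈ B, ‖u y - u x‖ₑ ≤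
      Metric.ediam B * eLpNorm (fderiv ℝ u) ∞ (μ.restrict B) := fun x hx y hy ↦
    calc ‖u y - u x‖ₑ
        ≤ ‖y - x‖ₑ * ∫⁻ t in Icc (0 : ℝ) 1, ‖fderiv ℝ u ((1 - t) • x + t • y)‖ₑ :=
          enorm_sub_le_lintegral_enorm_fderiv_segment hu x y
      _ ≤ Metric.ediam B * ∫⁻ _ in Icc (0 : ℝ) 1, eLpNorm (fderiv ℝ u) ∞ (μ.restrict B) := by
          gcongr ?_ * ?_
          · rw [← edist_eq_enorm_sub]
            exact Metric.edist_le_ediam_of_mem hy hx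
          · exact setLIntegral_mono' measurableSet_Icc fun t ht ↦
              enorm_le_eLpNorm_top_restrict (hu.continuous_fderiv one_ne_zero) hB
                (hc hx hy (sub_nonneg.2 ht.2) ht.1 (sub_add_cancel _ _))
      _ = _ := by simp
  rw [eLpNorm_exponent_top]
  refine eLpNormEssSup_le_of_ae_enorm_bound ?_
  filter_upwards [ae_restrict_mem hB.measurableSet] with x hx
  calc ‖u x - ∫ y, η y • u y ∂μ‖ₑ ≤ K * ∫⁻ y in B, ‖u y - u x‖ₑ ∂μ :=
        enorm_sub_integral_smul_le hB.measurableSet hη hη_supp hηB hη_one hK hu.continuous x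
    _ ≤ K * ∫⁻ _ in B, Metric.ediam B * eLpNorm (fderiv ℝ u) ∞ (μ.restrict B) ∂μ :=
        mul_le_mul_right (setLIntegral_mono' hB.measurableSet (hosc x hx)) _
    _ = _ := by rw [setLIntegral_const]; ring

section Poincare

variable {E F : Type*} [NormedAddCommGroup E] [NormedSpace ℝ E] [FiniteDimensional ℝ E]
  [MeasurableSpace E] [BorelSpace E] [NormedAddCommGroup F] [NormedSpace ℝ F]
  {μ : Measure E} [μ.IsAddHaarMeasure] {B : Set E} {G : E → ℝ≥0∞} {u : E → F} {η : E → ℝ}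

theorem map_smul_add_addHaar (μ : Measure E) [μ.IsAddHaarMeasure] {s : ℝ} (hs : s ≠ 0) (a : E) :
    μ.map (fun x ↦ s • x + a) = ENNReal.ofReal |(s ^ Module.finrank ℝ E)⁻¹| • μ := by
  have hcomp : (fun x : E ↦ s • x + a) = (· + a) ∘ (s • ·) := rfl
  rw [hcomp, ← Measure.map_map (measurable_add_const a) (measurable_const_smul s),
    Measure.map_addHaar_smul μ hs, Measure.map_smul, map_add_right_eq_self]

theorem lintegral_comp_smul_add (hG : Measurable G) {s : ℝ} (hs : s ≠ 0) (a : E) :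
    ∫⁻ x, G (s • x + a) ∂μ =
      ENNReal.ofReal |(s ^ Module.finrank ℝ E)⁻¹| * ∫⁻ x, G x ∂μ := by
  rw [← lintegral_map hG (by fun_prop : Measurable fun x : E ↦ s • x + a),
    map_smul_add_addHaar μ hs, lintegral_smul_measure, smul_eq_mul]

theorem setLIntegral_comp_homothety_le (hc : Convex ℝ B) (hB : MeasurableSet B)
    (hG : Measurable G) {s : ℝ} (hs : s ∈ Icc (1 / 2 : ℝ) 1) {y : E} (hy : y ∈ B) :
    ∫⁻ x in B, G (s • x + (1 - s) • y) ∂μ ≤ 2 ^ Module.finrank ℝ E * ∫⁻ x in B, G x ∂μ := by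
  have hs0 : 0 < s := lt_of_lt_of_le (by norm_num) hs.1
  have hscale : ENNReal.ofReal |(s ^ Module.finrank ℝ E)⁻¹| ≤ 2 ^ Module.finrank ℝ E := by
    rw [abs_of_pos (by positivity), ← inv_pow, ENNReal.ofReal_pow (by positivity)]
    gcongr
    rw [← ENNReal.ofReal_ofNat 2]
    exact ENNReal.ofReal_le_ofReal (by rw [inv_le_comm₀ hs0 two_pos]; linarith [hs.1])
  rw [← lintegral_indicator hB, ← lintegral_indicator hB]
  calc ∫⁻ x, B.indicator (fun x ↦ G (s • x + (1 - s) • y)) x ∂μ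
      ≤ ∫⁻ x, B.indicator G (s • x + (1 - s) • y) ∂μ := by
        refine lintegral_mono fun x ↦ ?_
        by_cases hx : x ∈ B
        · rw [indicator_of_mem hx, indicator_of_mem
            (hc hx hy hs0.le (sub_nonneg.2 hs.2) (add_sub_cancel _ _))]
        · rw [indicator_of_notMem hx]
          exact zero_le
    _ ≤ _ := by
        rw [lintegral_comp_smul_add (hG.indicator hB) hs0.ne']
        gcongr

-- By the symmetry `(x, y, t) ↔ (y, x, 1 - t)` one may contract towards the endpoint that leaves
-- a dilation factor of at least `1 / 2`, which bounds the Jacobian.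
theorem lintegral_lintegral_segment_le (hc : Convex ℝ B) (hB : MeasurableSet B)
    (hG : Measurable G) {t : ℝ} (ht : t ∈ Icc (0 : ℝ) 1) :
    ∫⁻ x in B, ∫⁻ y in B, G ((1 - t) • x + t • y) ∂μ ∂μ ≤
      2 ^ Module.finrank ℝ E * μ B * ∫⁻ x in B, G x ∂μ := by
  have hcontract : ∀ s ∈ Icc (1 / 2 : ℝ) 1, ∫⁻ y in B, ∫⁻ x in B, G (s • x + (1 - s) • y) ∂μ ∂μ ≤
      2 ^ Module.finrank ℝ E * μ B * ∫⁻ x in B, G x ∂μ := fun s hs ↦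
    calc ∫⁻ y in B, ∫⁻ x in B, G (s • x + (1 - s) • y) ∂μ ∂μ
        ≤ ∫⁻ _ in B, 2 ^ Module.finrank ℝ E * ∫⁻ x in B, G x ∂μ ∂μ :=
          setLIntegral_mono' hB fun y hy ↦ setLIntegral_comp_homothety_le hc hB hG hs hy
      _ = _ := by rw [setLIntegral_const, mul_right_comm]
  have hG' : Measurable (Function.uncurry fun x y : E ↦ G ((1 - t) • x + t • y)) :=
    hG.comp (by fun_prop)
  rcases le_total t (1 / 2) with h | h
  · rw [lintegral_lintegral_swap hG'.aemeasurable]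
    simpa only [sub_sub_cancel] using hcontract (1 - t) ⟨by linarith, by linarith [ht.1]⟩
  · simpa only [add_comm] using hcontract t ⟨h, ht.2⟩

theorem lintegral_lintegral_enorm_sub_rpow_le (hc : Convex ℝ B) (hB : MeasurableSet B)
    (hu : ContDiff ℝ 1 u) {q : ℝ} (hq : 1 ≤ q) :
    ∫⁻ x in B, ∫⁻ y in B, ‖u y - u x‖ₑ ^ q ∂μ ∂μ ≤ Metric.ediam B ^ q *
      (2 ^ Module.finrank ℝ E * μ B * ∫⁻ x in B, ‖fderiv ℝ u x‖ₑ ^ q ∂μ) := by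
  have hG : Measurable fun z ↦ ‖fderiv ℝ u z‖ₑ ^ q :=
    (hu.continuous_fderiv one_ne_zero).enorm.measurable.pow_const q
  set G : E → ℝ≥0∞ := fun z ↦ ‖fderiv ℝ u z‖ₑ ^ q
  have hG₂ : Measurable fun z : (E × E) × ℝ ↦ G ((1 - z.2) • z.1.1 + z.2 • z.1.2) :=
    hG.comp (by fun_prop)
  have hG₁ : Measurable fun z : (E × ℝ) × E ↦ G ((1 - z.1.2) • z.1.1 + z.1.2 • z.2) :=
    hG.comp (by fun_prop)
  have hG₀ : ∀ x, Measurable (Function.uncurry fun (y : E) (t : ℝ) ↦ G ((1 - t) • x + t • y)) :=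
    fun x ↦ hG.comp (by fun_prop)
  calc ∫⁻ x in B, ∫⁻ y in B, ‖u y - u x‖ₑ ^ q ∂μ ∂μ
      ≤ ∫⁻ x in B, ∫⁻ y in B, Metric.ediam B ^ q *
          (∫⁻ t in Icc (0 : ℝ) 1, G ((1 - t) • x + t • y)) ∂μ ∂μ :=
        setLIntegral_mono' hB fun x hx ↦ setLIntegral_mono' hB fun y hy ↦
          (enorm_sub_rpow_le_lintegral_enorm_fderiv_segment hu hq x y).trans <| by
            gcongr
            rw [← edist_eq_enorm_sub]
            exact Metric.edist_le_ediam_of_mem hy hx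
    _ = Metric.ediam B ^ q * ∫⁻ x in B, ∫⁻ y in B,
          (∫⁻ t in Icc (0 : ℝ) 1, G ((1 - t) • x + t • y)) ∂μ ∂μ := by
        rw [← lintegral_const_mul _ hG₂.lintegral_prod_right'.lintegral_prod_right']
        exact lintegral_congr fun x ↦ lintegral_const_mul _ (hG₀ x).lintegral_prod_right
    _ = Metric.ediam B ^ q *
          ∫⁻ t in Icc (0 : ℝ) 1, ∫⁻ x in B, ∫⁻ y in B, G ((1 - t) • x + t • y) ∂μ ∂μ := by
        have hswap : ∀ x, ∫⁻ y in B, (∫⁻ t in Icc (0 : ℝ) 1, G ((1 - t) • x + t • y)) ∂μ =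
            ∫⁻ t in Icc (0 : ℝ) 1, ∫⁻ y in B, G ((1 - t) • x + t • y) ∂μ := fun x ↦
          lintegral_lintegral_swap (hG₀ x).aemeasurable
        simp only [hswap]
        rw [lintegral_lintegral_swap hG₁.lintegral_prod_right'.aemeasurable]
    _ ≤ Metric.ediam B ^ q * ∫⁻ _ in Icc (0 : ℝ) 1,
          2 ^ Module.finrank ℝ E * μ B * ∫⁻ x in B, G x ∂μ :=
        mul_le_mul_right (setLIntegral_mono' measurableSet_Icc fun t ht ↦
          lintegral_lintegral_segment_le hc hB hG ht) _
    _ = _ := by simp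

theorem lintegral_enorm_sub_integral_smul_rpow_le [CompleteSpace F] (hc : Convex ℝ B)
    (hB : MeasurableSet B) (hη : Continuous η) (hη_supp : HasCompactSupport η)
    (hηB : Function.support η ⊆ B) (hη_one : ∫ x, η x ∂μ = 1) {K : ℝ≥0∞} (hK : ∀ x, ‖η x‖ₑ ≤ K)
    (hu : ContDiff ℝ 1 u) {q : ℝ} (hq : 1 ≤ q) :
    ∫⁻ x in B, ‖u x - ∫ y, η y • u y ∂μ‖ₑ ^ q ∂μ ≤
      K ^ q * μ B ^ (q - 1) * (Metric.ediam B ^ q * (2 ^ Module.finrank ℝ E * μ B)) *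
        ∫⁻ x in B, ‖fderiv ℝ u x‖ₑ ^ q ∂μ := by
  have hq0 : 0 ≤ q := zero_le_one.trans hq
  have hdiff : Continuous fun z : E × E ↦ ‖u z.2 - u z.1‖ₑ := by
    have := hu.continuous
    fun_prop
  calc ∫⁻ x in B, ‖u x - ∫ y, η y • u y ∂μ‖ₑ ^ q ∂μ
      ≤ ∫⁻ x in B, K ^ q * μ B ^ (q - 1) * ∫⁻ y in B, ‖u y - u x‖ₑ ^ q ∂μ ∂μ :=
        lintegral_mono fun x ↦ by
          refine (ENNReal.rpow_le_rpow (enorm_sub_integral_smul_le hB hη hη_supp hηB hη_one hK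
            hu.continuous x) hq0).trans ?_
          rw [ENNReal.mul_rpow_of_nonneg _ _ hq0, mul_assoc]
          gcongr
          simpa using rpow_lintegral_le (μ := μ.restrict B)
            (hu.continuous.sub continuous_const).enorm.aemeasurable hq
    _ = K ^ q * μ B ^ (q - 1) * ∫⁻ x in B, ∫⁻ y in B, ‖u y - u x‖ₑ ^ q ∂μ ∂μ :=
        lintegral_const_mul _ (hdiff.measurable.pow_const q).lintegral_prod_right'
    _ ≤ _ := by
        rw [mul_assoc _ (_ * _) (lintegral _ _), mul_assoc (Metric.ediam B ^ q)]
        gcongr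
        exact lintegral_lintegral_enorm_sub_rpow_le hc hB hu hq

theorem exists_eLpNorm_sub_integral_smul_le (F : Type*) [NormedAddCommGroup F]
    [NormedSpace ℝ F] [CompleteSpace F] (hc : Convex ℝ B) (hB : IsOpen B)
    (hB_bdd : Bornology.IsBounded B) (hη : Continuous η) (hη_supp : HasCompactSupport η)
    (hηB : Function.support η ⊆ B) (hη_one : ∫ x, η x ∂μ = 1) {Q : ℝ} (hQ : Q ∈ Icc (0 : ℝ) 1) :
    ∃ C : ℝ≥0, ∀ u : E → F, ContDiff ℝ 1 u →
      eLpNorm (fun x ↦ u x - ∫ y, η y • u y ∂μ) (lpExponent Q) (μ.restrict B) ≤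
        C * eLpNorm (fderiv ℝ u) (lpExponent Q) (μ.restrict B) := by
  obtain ⟨K, hK⟩ := hη.bounded_above_of_compact_support hη_supp
  have hK' : ∀ x, ‖η x‖ₑ ≤ K.toNNReal := fun x ↦ by
    rw [← ofReal_norm]
    exact ENNReal.ofReal_le_ofReal (hK x)
  have hμB : μ B ≠ ⊤ := hB_bdd.measure_lt_top.ne
  have hdiam : Metric.ediam B ≠ ⊤ := hB_bdd.ediam_ne_top
  rcases hQ.1.eq_or_lt with rfl | hQ0
  · lift μ B * Metric.ediam B to ℝ≥0 using by finiteness with D hD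
    refine ⟨K.toNNReal * D, fun u hu ↦ ?_⟩
    rw [lpExponent_zero, ENNReal.coe_mul, hD, ← mul_assoc]
    exact eLpNorm_top_sub_integral_smul_le hc hB hη hη_supp hηB hη_one hK' hu
  · have hq : 1 ≤ 1 / Q := (one_le_div hQ0).2 hQ.2
    have hq0 : 0 ≤ 1 / Q := zero_le_one.trans hq
    set A : ℝ≥0∞ := K.toNNReal ^ (1 / Q) * μ B ^ (1 / Q - 1) *
      (Metric.ediam B ^ (1 / Q) * (2 ^ Module.finrank ℝ E * μ B)) with hA
    have hA_top : A ≠ ⊤ := by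
      have := sub_nonneg.2 hq
      finiteness
    lift A to ℝ≥0 using hA_top with A' hA'
    refine ⟨A' ^ Q, fun u hu ↦ ?_⟩
    rw [eLpNorm_lpExponent_eq_lintegral _ hQ0, eLpNorm_lpExponent_eq_lintegral _ hQ0,
      ENNReal.coe_rpow_of_nonneg _ hQ0.le, ← ENNReal.mul_rpow_of_nonneg _ _ hQ0.le, hA]
    gcongr
    exact lintegral_enorm_sub_integral_smul_rpow_le hc hB.measurableSet hη hη_supp hηB hη_one hK'
      hu hq

end Poincare

/-! ### Intermediate derivatives on bounded convex sets -/

theorem exists_enorm_le_sum_enorm_apply {ι E : Type*} (F : Type*) [Fintype ι]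
    [NormedAddCommGroup E] [NormedSpace ℝ E] [NormedAddCommGroup F] [NormedSpace ℝ F]
    (b : Module.Basis ι ℝ E) :
    ∃ C : ℝ≥0, ∀ L : E →L[ℝ] F, ‖L‖ₑ ≤ C * ∑ j, ‖L (b j)‖ₑ := by
  obtain ⟨C, -, hC⟩ := b.exists_opNNNorm_le (F := F)
  refine ⟨C, fun L ↦ ?_⟩
  simp only [enorm_eq_nnnorm]
  exact_mod_cast hC (∑ j, ‖L (b j)‖₊) fun j ↦
    Finset.single_le_sum (f := fun j ↦ ‖L (b j)‖₊) (fun _ _ ↦ zero_le) (Finset.mem_univ j)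

section IntermediateDerivatives

variable {E : Type*} [NormedAddCommGroup E] [NormedSpace ℝ E] [FiniteDimensional ℝ E]
  [MeasurableSpace E] [BorelSpace E] {μ : Measure E} [μ.IsAddHaarMeasure] {B : Set E} {η : E → ℝ}

theorem integral_smul_fderiv_apply_eq_neg {F : Type*} [NormedAddCommGroup F] [NormedSpace ℝ F]
    (hη : ContDiff ℝ 1 η) (hη_supp : HasCompactSupport η) {w : E → F} (hw : ContDiff ℝ 1 w)
    (e : E) :
    (∫ x, η x • fderiv ℝ w x ∂μ) e = -∫ x, fderiv ℝ η x e • w x ∂μ := by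
  have hη' := hη.continuous_fderiv one_ne_zero
  have hw' := hw.continuous_fderiv one_ne_zero
  refine (ContinuousLinearMap.integral_apply
    ((hη.continuous.smul hw').integrable_of_hasCompactSupport hη_supp.smul_right) e).trans ?_
  exact integral_smul_fderiv_eq_neg_fderiv_smul_of_integrable
    (((hη'.clm_apply continuous_const).smul hw.continuous).integrable_of_hasCompactSupport
      (hη_supp.fderiv_apply ℝ e).smul_right)
    ((hη.continuous.smul (hw'.clm_apply continuous_const)).integrable_of_hasCompactSupport
      hη_supp.smul_right)
    ((hη.continuous.smul hw.continuous).integrable_of_hasCompactSupport hη_supp.smul_right)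
    (fun x _ ↦ hη.differentiable one_ne_zero x) (fun x _ ↦ hw.differentiable one_ne_zero x)

theorem exists_enorm_integral_smul_iteratedFDeriv_le (F : Type*) [NormedAddCommGroup F]
    [NormedSpace ℝ F] (hB : MeasurableSet B) (hη : ContDiff ℝ ∞ η)
    (hη_supp : HasCompactSupport η) (hηB : tsupport η ⊆ B) (k : ℕ) :
    ∃ C : ℝ≥0, ∀ v : E → F, ContDiff ℝ ∞ v →
      ‖∫ x, η x • iteratedFDeriv ℝ k v x ∂μ‖ₑ ≤ C * ∫⁻ x in B, ‖v x‖ₑ ∂μ := by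
  induction k generalizing η with
  | zero =>
    obtain ⟨C, hC⟩ := hη.continuous.bounded_above_of_compact_support hη_supp
    refine ⟨C.toNNReal, fun v hv ↦ ?_⟩
    rw [← lintegral_const_mul _ hv.continuous.enorm.measurable, ← lintegral_indicator hB]
    refine (enorm_integral_le_lintegral_enorm _).trans (lintegral_mono fun x ↦ ?_)
    rw [enorm_smul, ← ofReal_norm (iteratedFDeriv ℝ 0 v x), norm_iteratedFDeriv_zero, ofReal_norm]
    by_cases hx : x ∈ B
    · rw [indicator_of_mem hx, ← ofReal_norm (η x)]
      gcongr
      exact ENNReal.ofReal_le_ofReal (hC x)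
    · rw [image_eq_zero_of_notMem_tsupport fun h ↦ hx (hηB h)]
      simp
  | succ k ih =>
    have b := Module.finBasis ℝ E
    have hη1 : ContDiff ℝ 1 η := hη.of_le (mod_cast le_top)
    choose C hC using fun j ↦ ih (η := fun x ↦ fderiv ℝ η x (b j))
      ((hη.fderiv_right (m := ∞) (mod_cast le_top)).clm_apply contDiff_const)
      (hη_supp.fderiv_apply ℝ (b j)) ((tsupport_fderiv_apply_subset ℝ (b j)).trans hηB)
    obtain ⟨K, hK⟩ := exists_enorm_le_sum_enorm_apply (E [×k]→L[ℝ] F) b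
    refine ⟨K * ∑ j, C j, fun v hv ↦ ?_⟩
    set L := continuousMultilinearCurryLeftEquiv ℝ (fun _ : Fin (k + 1) ↦ E) F
    have hcurry : ∫ x, η x • fderiv ℝ (iteratedFDeriv ℝ k v) x ∂μ =
        L (∫ x, η x • iteratedFDeriv ℝ (k + 1) v x ∂μ) := by
      simp only [fderiv_iteratedFDeriv, Function.comp_apply, ← map_smul]
      exact ContinuousLinearEquiv.integral_comp_comm (𝕜 := ℝ) (μ := μ)
        (E := E [×(k + 1)]→L[ℝ] F) (F := E →L[ℝ] E [×k]→L[ℝ] F) L _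
    rw [← L.enorm_map, ← hcurry, ENNReal.coe_mul, ENNReal.ofNNReal_finsetSum, mul_assoc,
      Finset.sum_mul]
    refine (hK _).trans ?_
    gcongr with j
    rw [integral_smul_fderiv_apply_eq_neg hη1 hη_supp
      ((contDiff_infty_iteratedFDeriv hv k).of_le (mod_cast le_top)), enorm_neg]
    exact hC j v hv

theorem exists_contDiff_hasCompactSupport_integral_eq_one (μ : Measure E) [μ.IsAddHaarMeasure]
    (hB : IsOpen B) (hB_ne : B.Nonempty) :
    ∃ η : E → ℝ, ContDiff ℝ ∞ η ∧ HasCompactSupport η ∧ tsupport η ⊆ B ∧ ∫ x, η x ∂μ = 1 := by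
  obtain ⟨c, hc⟩ := hB_ne
  obtain ⟨r, hr, hrB⟩ := Metric.nhds_basis_closedBall.mem_iff.1 (hB.mem_nhds hc)
  let b : ContDiffBump c := ⟨r / 2, r, half_pos hr, half_lt_self hr⟩
  exact ⟨b.normed μ, b.contDiff_normed, b.hasCompactSupport_normed,
    b.tsupport_normed_eq.trans_subset hrB, b.integral_normed⟩

theorem exists_lintegral_enorm_le_eLpNorm {α : Type*} (F : Type*) [MeasurableSpace α]
    [NormedAddCommGroup F] (ν : Measure α) [IsFiniteMeasure ν] {p : ℝ≥0∞} (hp : 1 ≤ p) :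
    ∃ C : ℝ≥0, ∀ v : α → F, AEStronglyMeasurable v ν → ∫⁻ x, ‖v x‖ₑ ∂ν ≤ C * eLpNorm v p ν := by
  have hexp : 0 ≤ 1 - 1 / p.toReal := by
    rw [sub_nonneg, ← ENNReal.toReal_one, ← ENNReal.toReal_div]
    exact toReal_one_div_le_one hp
  lift ν univ ^ (1 - 1 / p.toReal) to ℝ≥0
    using ENNReal.rpow_ne_top_of_nonneg hexp (measure_ne_top ν univ) with C hC
  refine ⟨C, fun v hv ↦ ?_⟩
  rw [← eLpNorm_one_eq_lintegral_enorm, hC, mul_comm]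
  simpa using eLpNorm_le_eLpNorm_mul_rpow_measure_univ hp hv

theorem exists_eLpNorm_const_le {α : Type*} (F : Type*) [MeasurableSpace α] [NormedAddCommGroup F]
    (ν : Measure α) [IsFiniteMeasure ν] (p : ℝ≥0∞) :
    ∃ C : ℝ≥0, ∀ a : F, eLpNorm (fun _ ↦ a) p ν ≤ C * ‖a‖ₑ := by
  lift ν univ ^ p.toReal⁻¹ to ℝ≥0
    using ENNReal.rpow_ne_top_of_nonneg (by positivity) (measure_ne_top ν univ) with C hC
  refine ⟨C, fun a ↦ ?_⟩
  rw [hC, mul_comm]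
  exact eLpNorm_le_of_ae_enorm_bound (Eventually.of_forall fun _ ↦ le_rfl)

theorem exists_eLpNorm_le_enorm_integral_smul_add (F : Type*) [NormedAddCommGroup F]
    [NormedSpace ℝ F] [CompleteSpace F] (hc : Convex ℝ B) (hB : IsOpen B)
    (hB_bdd : Bornology.IsBounded B) (hη : Continuous η) (hη_supp : HasCompactSupport η)
    (hηB : Function.support η ⊆ B) (hη_one : ∫ x, η x ∂μ = 1) {Q : ℝ} (hQ : Q ∈ Icc (0 : ℝ) 1) :
    ∃ C : ℝ≥0, ∀ u : E → F, ContDiff ℝ 1 u →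
      eLpNorm u (lpExponent Q) (μ.restrict B) ≤
        C * (‖∫ y, η y • u y ∂μ‖ₑ + eLpNorm (fderiv ℝ u) (lpExponent Q) (μ.restrict B)) := by
  have : IsFiniteMeasure (μ.restrict B) := isFiniteMeasure_restrict.2 hB_bdd.measure_lt_top.ne
  obtain ⟨C₁, hpoincare⟩ := exists_eLpNorm_sub_integral_smul_le F hc hB hB_bdd hη hη_supp hηB
    hη_one hQ
  obtain ⟨C₂, hconst⟩ := exists_eLpNorm_const_le F (μ.restrict B) (lpExponent Q)
  refine ⟨C₂ + C₁, fun u hu ↦ ?_⟩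
  set a := ∫ y, η y • u y ∂μ
  calc eLpNorm u (lpExponent Q) (μ.restrict B)
      = eLpNorm ((fun _ ↦ a) + fun x ↦ u x - a) (lpExponent Q) (μ.restrict B) := by
        congr 1
        exact funext fun x ↦ (add_sub_cancel a (u x)).symm
    _ ≤ eLpNorm (fun _ : E ↦ a) (lpExponent Q) (μ.restrict B) +
          eLpNorm (fun x ↦ u x - a) (lpExponent Q) (μ.restrict B) :=
        eLpNorm_add_le aestronglyMeasurable_const
          (hu.continuous.sub continuous_const).aestronglyMeasurable (one_le_lpExponent hQ.2)
    _ ≤ C₂ * ‖a‖ₑ + C₁ * eLpNorm (fderiv ℝ u) (lpExponent Q) (μ.restrict B) :=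
        add_le_add (hconst a) (hpoincare u hu)
    _ ≤ _ := by
        rw [mul_add]
        gcongr <;> simp

theorem exists_eLpNorm_iteratedFDeriv_le_add_succ (F : Type*) [NormedAddCommGroup F]
    [NormedSpace ℝ F] [CompleteSpace F] (hc : Convex ℝ B) (hB : IsOpen B)
    (hB_bdd : Bornology.IsBounded B) (hB_ne : B.Nonempty) {P Q : ℝ} (hP : P ≤ 1)
    (hQ : Q ∈ Icc (0 : ℝ) 1) (k : ℕ) :
    ∃ C : ℝ≥0, ∀ g : E → F, ContDiff ℝ ∞ g →
      eLpNorm (iteratedFDeriv ℝ k g) (lpExponent Q) (μ.restrict B) ≤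
        C * (eLpNorm g (lpExponent P) (μ.restrict B) +
          eLpNorm (iteratedFDeriv ℝ (k + 1) g) (lpExponent Q) (μ.restrict B)) := by
  have : IsFiniteMeasure (μ.restrict B) := isFiniteMeasure_restrict.2 hB_bdd.measure_lt_top.ne
  obtain ⟨η, hη, hη_supp, hηB, hη_one⟩ :=
    exists_contDiff_hasCompactSupport_integral_eq_one μ hB hB_ne
  obtain ⟨C₁, hpoincare⟩ := exists_eLpNorm_le_enorm_integral_smul_add (E [×k]→L[ℝ] F) hc hB hB_bdd
    hη.continuous hη_supp ((subset_tsupport η).trans hηB) hη_one hQ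
  obtain ⟨C₂, havg⟩ := exists_enorm_integral_smul_iteratedFDeriv_le (μ := μ) F hB.measurableSet hη
    hη_supp hηB k
  obtain ⟨C₃, hL1⟩ := exists_lintegral_enorm_le_eLpNorm F (μ.restrict B) (one_le_lpExponent hP)
  refine ⟨C₁ * (C₂ * C₃ + 1), fun g hg ↦ ?_⟩
  have hmain := hpoincare (iteratedFDeriv ℝ k g)
    ((contDiff_infty_iteratedFDeriv hg k).of_le (mod_cast le_top))
  rw [eLpNorm_fderiv_iteratedFDeriv] at hmain
  have havg' := (havg g hg).trans
    (mul_le_mul_right (hL1 g hg.continuous.aestronglyMeasurable) _)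
  refine hmain.trans ?_
  push_cast
  rw [mul_assoc (C₁ : ℝ≥0∞)]
  gcongr
  refine (add_le_add_left havg' _).trans ?_
  rw [← mul_assoc, mul_add]
  gcongr
  · exact le_self_add
  · exact le_mul_of_one_le_left' le_add_self

theorem exists_eLpNorm_iteratedFDeriv_le_add (F : Type*) [NormedAddCommGroup F]
    [NormedSpace ℝ F] [CompleteSpace F] (hc : Convex ℝ B) (hB : IsOpen B)
    (hB_bdd : Bornology.IsBounded B) (hB_ne : B.Nonempty) {P Q : ℝ} (hP : P ≤ 1)
    (hQ : Q ∈ Icc (0 : ℝ) 1) {k m : ℕ} (hkm : k ≤ m) :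
    ∃ C : ℝ≥0, ∀ g : E → F, ContDiff ℝ ∞ g →
      eLpNorm (iteratedFDeriv ℝ k g) (lpExponent Q) (μ.restrict B) ≤
        C * (eLpNorm g (lpExponent P) (μ.restrict B) +
          eLpNorm (iteratedFDeriv ℝ m g) (lpExponent Q) (μ.restrict B)) := by
  induction m, hkm using Nat.le_induction with
  | base => exact ⟨1, fun g _ ↦ by simp⟩
  | succ m _ ih =>
    obtain ⟨C₁, h₁⟩ := ih
    obtain ⟨C₂, h₂⟩ := exists_eLpNorm_iteratedFDeriv_le_add_succ (μ := μ) F hc hB hB_bdd hB_ne hP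
      hQ m
    refine ⟨C₁ * (1 + C₂), fun g hg ↦ (h₁ g hg).trans ?_⟩
    push_cast
    rw [mul_assoc, add_mul, one_mul]
    gcongr
    · exact le_self_add
    · exact h₂ g hg

end IntermediateDerivatives

/-! ### The Gagliardo–Nirenberg inequality on balls -/

section Cutoff

variable {E : Type*} [NormedAddCommGroup E] [NormedSpace ℝ E] {χ : E → ℝ}

theorem exists_norm_iteratedFDeriv_smul_le (F : Type*) [NormedAddCommGroup F] [NormedSpace ℝ F]
    (hχ : ContDiff ℝ ∞ χ) (hχ_supp : HasCompactSupport χ) (m : ℕ) :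
    ∃ C : ℝ≥0, ∀ f : E → F, ContDiff ℝ ∞ f → ∀ x, ‖iteratedFDeriv ℝ m (fun y ↦ χ y • f y) x‖ ≤
      C * (tsupport χ).indicator
        (fun x ↦ ∑ k ∈ Finset.range (m + 1), ‖iteratedFDeriv ℝ k f x‖) x := by
  choose K hK using fun l ↦ (contDiff_infty_iteratedFDeriv hχ l).continuous
    |>.bounded_above_of_compact_support (hχ_supp.iteratedFDeriv l)
  have hK0 : ∀ l, 0 ≤ K l := fun l ↦ (norm_nonneg _).trans (hK l 0)
  refine ⟨(∑ l ∈ Finset.range (m + 1), m.choose l * K l).toNNReal, fun f hf x ↦ ?_⟩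
  rw [Real.coe_toNNReal _
    (Finset.sum_nonneg fun l _ ↦ mul_nonneg (Nat.cast_nonneg _) (hK0 l))]
  refine (norm_iteratedFDeriv_smul_le hχ hf x (n := m) (mod_cast le_top)).trans ?_
  by_cases hx : x ∈ tsupport χ
  · rw [indicator_of_mem hx, Finset.sum_mul]
    refine Finset.sum_le_sum fun l _ ↦ mul_le_mul (by gcongr; exact hK l x) ?_ (norm_nonneg _)
      (mul_nonneg (Nat.cast_nonneg _) (hK0 l))
    exact Finset.single_le_sum (f := fun k ↦ ‖iteratedFDeriv ℝ k f x‖)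
      (fun _ _ ↦ norm_nonneg _) (Finset.mem_range.2 (by omega))
  · rw [indicator_of_notMem hx, mul_zero]
    refine (Finset.sum_eq_zero fun l _ ↦ ?_).le
    have hzero : iteratedFDeriv ℝ l χ x = 0 :=
      image_eq_zero_of_notMem_tsupport fun h ↦ hx (tsupport_iteratedFDeriv_subset l h)
    rw [hzero, norm_zero, mul_zero, zero_mul]

theorem exists_eLpNorm_iteratedFDeriv_smul_le (F : Type*) [NormedAddCommGroup F]
    [NormedSpace ℝ F] [CompleteSpace F] [FiniteDimensional ℝ E] [MeasurableSpace E] [BorelSpace E]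
    (μ : Measure E) [μ.IsAddHaarMeasure] {B : Set E} (hc : Convex ℝ B) (hB : IsOpen B)
    (hB_bdd : Bornology.IsBounded B) (hB_ne : B.Nonempty) (hχ : ContDiff ℝ ∞ χ)
    (hχ_supp : HasCompactSupport χ) (hχB : tsupport χ ⊆ B) {P Q : ℝ} (hP : P ≤ 1)
    (hQ : Q ∈ Icc (0 : ℝ) 1) (m : ℕ) :
    ∃ C : ℝ≥0, ∀ f : E → F, ContDiff ℝ ∞ f →
      eLpNorm (iteratedFDeriv ℝ m fun x ↦ χ x • f x) (lpExponent Q) μ ≤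
        C * (eLpNorm f (lpExponent P) (μ.restrict B) +
          eLpNorm (iteratedFDeriv ℝ m f) (lpExponent Q) (μ.restrict B)) := by
  obtain ⟨K, hK⟩ := exists_norm_iteratedFDeriv_smul_le F hχ hχ_supp m
  choose! C hC using fun k (hk : k ≤ m) ↦ exists_eLpNorm_iteratedFDeriv_le_add (μ := μ) F hc hB
    hB_bdd hB_ne hP hQ hk
  refine ⟨K * ∑ k ∈ Finset.range (m + 1), C k, fun f hf ↦ ?_⟩
  set S : E → ℝ := ∑ k ∈ Finset.range (m + 1), fun x ↦ ‖iteratedFDeriv ℝ k f x‖ with hS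
  have hpt : ∀ x, ‖iteratedFDeriv ℝ m (fun y ↦ χ y • f y) x‖ ≤ K * ‖B.indicator S x‖ := fun x ↦ by
    refine (hK f hf x).trans ?_
    rw [norm_indicator_eq_indicator_norm, hS]
    gcongr
    refine (indicator_le_indicator_of_subset hχB (fun _ ↦ by positivity) x).trans
      (indicator_le_indicator ?_)
    simpa using le_abs_self _
  calc eLpNorm (iteratedFDeriv ℝ m fun x ↦ χ x • f x) (lpExponent Q) μ
      ≤ K * eLpNorm (B.indicator S) (lpExponent Q) μ := by
        rw [← smul_eq_mul, ← ENNReal.smul_def]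
        exact eLpNorm_le_nnreal_smul_eLpNorm_of_ae_le_mul (Eventually.of_forall hpt) _
    _ = K * eLpNorm S (lpExponent Q) (μ.restrict B) := by
        rw [eLpNorm_indicator_eq_eLpNorm_restrict hB.measurableSet]
    _ ≤ K * ∑ k ∈ Finset.range (m + 1),
          eLpNorm (fun x ↦ ‖iteratedFDeriv ℝ k f x‖) (lpExponent Q) (μ.restrict B) := by
        gcongr
        exact eLpNorm_sum_le (fun k _ ↦ (contDiff_infty_iteratedFDeriv hf
          k).continuous.norm.aestronglyMeasurable) (one_le_lpExponent hQ.2)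
    _ ≤ _ := by
        push_cast
        rw [mul_assoc, Finset.sum_mul]
        gcongr with k hk
        rw [eLpNorm_norm]
        exact hC k (Finset.mem_range_succ_iff.1 hk) f hf

end Cutoff

theorem eLpNorm_iteratedFDeriv_restrict_le_of_eqOn {E F : Type*} [NormedAddCommGroup E]
    [NormedSpace ℝ E] [MeasurableSpace E] [BorelSpace E] [NormedAddCommGroup F] [NormedSpace ℝ F]
    {μ : Measure E} {s : Set E} (hs : IsOpen s) {f g : E → F} (hfg : EqOn f g s) (k : ℕ)
    (p : ℝ≥0∞) :
    eLpNorm (iteratedFDeriv ℝ k f) p (μ.restrict s) ≤ eLpNorm (iteratedFDeriv ℝ k g) p μ := by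
  refine (eLpNorm_congr_ae ?_).trans_le (eLpNorm_mono_measure _ Measure.restrict_le_self)
  filter_upwards [ae_restrict_mem hs.measurableSet] with x hx
  have hfg' : f =ᶠ[𝓝 x] g := hfg.eventuallyEq_of_mem (hs.mem_nhds hx)
  exact (hfg'.iteratedFDeriv ℝ k).eq_of_nhds

theorem eLpNorm_smul_le_restrict {α F : Type*} [MeasurableSpace α] [NormedAddCommGroup F]
    [NormedSpace ℝ F] {μ : Measure α} {s : Set α} (hs : MeasurableSet s) {χ : α → ℝ}
    (hχ_one : ∀ x, ‖χ x‖ ≤ 1) (hχ_supp : Function.support χ ⊆ s) (f : α → F) (p : ℝ≥0∞) :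
    eLpNorm (fun x ↦ χ x • f x) p μ ≤ eLpNorm f p (μ.restrict s) := by
  rw [← eLpNorm_indicator_eq_eLpNorm_restrict hs]
  refine eLpNorm_mono fun x ↦ ?_
  by_cases hx : x ∈ s
  · rw [indicator_of_mem hx, norm_smul]
    exact mul_le_of_le_one_left (norm_nonneg _) (hχ_one x)
  · rw [Function.notMem_support.1 fun h ↦ hx (hχ_supp h), zero_smul, norm_zero]
    exact norm_nonneg _

theorem rpow_mul_add_rpow_le (X Y c : ℝ≥0∞) {θ : ℝ} (hθ0 : 0 ≤ θ) (hθ1 : θ ≤ 1) :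
    X ^ (1 - θ) * (c * (X + Y)) ^ θ ≤ c ^ θ * (X ^ (1 - θ) * Y ^ θ + X) := by
  calc X ^ (1 - θ) * (c * (X + Y)) ^ θ ≤ X ^ (1 - θ) * (c ^ θ * (X ^ θ + Y ^ θ)) := by
        rw [ENNReal.mul_rpow_of_nonneg _ _ hθ0]
        gcongr
        exact ENNReal.rpow_add_le_add_rpow _ _ hθ0 hθ1
    _ = c ^ θ * (X ^ (1 - θ) * Y ^ θ + X ^ (1 - θ) * X ^ θ) := by ring
    _ = _ := by
        rw [← ENNReal.rpow_add_of_nonneg _ _ (sub_nonneg.2 hθ1) hθ0, sub_add_cancel,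
          ENNReal.rpow_one]

theorem exists_eLpNorm_iteratedFDeriv_unitBall_le {d i m : ℕ} {P Q R θ : ℝ}
    (h : IsAdmissible d i m P Q R θ) (F : Type*) [NormedAddCommGroup F] [NormedSpace ℝ F]
    [FiniteDimensional ℝ F] :
    ∃ C : ℝ≥0, ∀ f : 𝔼 d → F, ContDiff ℝ ∞ f →
      eLpNorm (iteratedFDeriv ℝ i f) (lpExponent R) (volume.restrict (Metric.ball 0 1)) ≤
        C * (eLpNorm f (lpExponent P) (volume.restrict (Metric.ball 0 2)) ^ (1 - θ) *
          eLpNorm (iteratedFDeriv ℝ m f) (lpExponent Q) (volume.restrict (Metric.ball 0 2)) ^ θ +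
          eLpNorm f (lpExponent P) (volume.restrict (Metric.ball 0 2))) := by
  have hθ := h.theta_pos.le
  have hθ' : 0 ≤ 1 - θ := sub_nonneg.2 h.theta_lt_one.le
  have : CompleteSpace F := FiniteDimensional.complete ℝ F
  let χ : ContDiffBump (0 : 𝔼 d) := ⟨1, 3 / 2, one_pos, by norm_num⟩
  have hχB : tsupport χ ⊆ Metric.ball 0 2 := by
    rw [χ.tsupport_eq]
    exact Metric.closedBall_subset_ball (by norm_num [χ])
  obtain ⟨C₁, hglobal⟩ := exists_eLpNorm_iteratedFDeriv_le_of_hasCompactSupport h F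
  obtain ⟨C₂, hcut⟩ := exists_eLpNorm_iteratedFDeriv_smul_le F volume (convex_ball (0 : 𝔼 d) 2)
    Metric.isOpen_ball Metric.isBounded_ball (Metric.nonempty_ball.2 two_pos) χ.contDiff
    χ.hasCompactSupport hχB h.mem_P.2 h.mem_Q m
  refine ⟨C₁ * C₂ ^ θ, fun f hf ↦ ?_⟩
  have hleft := eLpNorm_iteratedFDeriv_restrict_le_of_eqOn (μ := volume) Metric.isOpen_ball
    (f := f) (g := fun x ↦ χ x • f x) (s := Metric.ball 0 1)
    (fun x hx ↦ by
      simp only [χ.one_of_mem_closedBall (Metric.ball_subset_closedBall hx), one_smul])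
    i (lpExponent R)
  have hright := eLpNorm_smul_le_restrict (μ := volume) measurableSet_ball
    (fun x ↦ (Real.norm_of_nonneg χ.nonneg).trans_le χ.le_one)
    ((subset_tsupport _).trans hχB) f (lpExponent P)
  have hglobal' := hglobal _ (χ.contDiff.smul hf) χ.hasCompactSupport.smul_right
  rw [ENNReal.coe_mul, ENNReal.coe_rpow_of_nonneg _ hθ, mul_assoc]
  exact hleft.trans (hglobal'.trans (mul_le_mul_right ((mul_le_mul'
    (ENNReal.rpow_le_rpow hright hθ') (ENNReal.rpow_le_rpow (hcut f hf) hθ)).trans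
    (rpow_mul_add_rpow_le _ _ _ hθ h.theta_lt_one.le)) _))

section Scaling

variable {E F : Type*} [NormedAddCommGroup E] [NormedSpace ℝ E] [FiniteDimensional ℝ E]
  [MeasurableSpace E] [BorelSpace E] [NormedAddCommGroup F] [NormedSpace ℝ F]
  (μ : Measure E) [μ.IsAddHaarMeasure] {ρ R : ℝ}

theorem eLpNorm_comp_smul_add_ball {F : Type*} [NormedAddCommGroup F] (u : E → F) (c : E)
    (hρ : 0 < ρ) (s : ℝ) (hR : 0 ≤ R) :
    eLpNorm (fun x ↦ u (ρ • x + c)) (lpExponent R) (μ.restrict (Metric.ball 0 s)) =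
      ENNReal.ofReal (ρ ^ (-(Module.finrank ℝ E * R))) *
        eLpNorm u (lpExponent R) (μ.restrict (Metric.ball c (s * ρ))) := by
  let e : E ≃ᵐ E :=
    ((Homeomorph.smulOfNeZero ρ hρ.ne').trans (Homeomorph.addRight c)).toMeasurableEquiv
  have he : ⇑e = fun x ↦ ρ • x + c := rfl
  have hpre : e ⁻¹' Metric.ball c (s * ρ) = Metric.ball 0 s := by
    ext x
    rw [mem_preimage, he, Metric.mem_ball, dist_add_self_left, norm_smul,
      Real.norm_of_nonneg hρ.le, mul_comm s ρ, mul_lt_mul_iff_right₀ hρ, mem_ball_zero_iff]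
  have hmap : (μ.restrict (Metric.ball 0 s)).map e =
      ENNReal.ofReal (ρ ^ Module.finrank ℝ E)⁻¹ • μ.restrict (Metric.ball c (s * ρ)) := by
    rw [← hpre, ← e.restrict_map, he, map_smul_add_addHaar μ hρ.ne', Measure.restrict_smul,
      abs_of_nonneg (by positivity)]
  have hR' : (1 / lpExponent R).toReal = R := by simp [lpExponent, hR]
  change eLpNorm (u ∘ e) _ _ = _
  rw [← e.measurableEmbedding.eLpNorm_map_measure, hmap,
    eLpNorm_smul_measure_of_ne_zero (ENNReal.ofReal_pos.2 (by positivity)).ne', smul_eq_mul, hR',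
    ENNReal.ofReal_rpow_of_nonneg (by positivity) hR, Real.rpow_neg hρ.le, Real.rpow_mul hρ.le,
    Real.rpow_natCast, Real.inv_rpow (by positivity)]

theorem eLpNorm_iteratedFDeriv_comp_smul_add_ball {f : E → F} {k : ℕ} (hf : ContDiff ℝ k f) (c : E)
    (hρ : 0 < ρ) (s : ℝ) (hR : 0 ≤ R) :
    eLpNorm (iteratedFDeriv ℝ k fun x ↦ f (ρ • x + c)) (lpExponent R)
        (μ.restrict (Metric.ball 0 s)) =
      ENNReal.ofReal (ρ ^ (k - Module.finrank ℝ E * R)) *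
        eLpNorm (iteratedFDeriv ℝ k f) (lpExponent R) (μ.restrict (Metric.ball c (s * ρ))) := by
  rw [iteratedFDeriv_comp_const_smul (f := fun z ↦ f (z + c)) ρ
    (hf.comp (by fun_prop : ContDiff ℝ k fun z : E ↦ z + c))]
  simp only [iteratedFDeriv_comp_add_right]
  refine (eLpNorm_const_smul (ρ ^ k) (fun x ↦ iteratedFDeriv ℝ k f (ρ • x + c)) _ _).trans ?_
  rw [eLpNorm_comp_smul_add_ball μ _ c hρ s hR, ← mul_assoc, Real.enorm_of_nonneg (by positivity),
    ← ENNReal.ofReal_mul (by positivity), ← Real.rpow_natCast, ← Real.rpow_add hρ, sub_eq_add_neg]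

end Scaling

theorem le_of_rescaled_interpolation_le {d i m : ℕ} {P Q R θ ρ : ℝ}
    (h : IsAdmissible d i m P Q R θ) (hρ : 0 < ρ) {C X Y Z : ℝ≥0∞}
    (hZ : ENNReal.ofReal (ρ ^ (i - d * R)) * Z ≤
      C * ((ENNReal.ofReal (ρ ^ (-(d * P))) * X) ^ (1 - θ) *
        (ENNReal.ofReal (ρ ^ (m - d * Q)) * Y) ^ θ + ENNReal.ofReal (ρ ^ (-(d * P))) * X)) :
    Z ≤ C * (X ^ (1 - θ) * Y ^ θ + ENNReal.ofReal (ρ ^ (d * θ * (Q - P) - m * θ)) * X) := by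
  have hθ := h.theta_pos.le
  have hθ' : 0 ≤ 1 - θ := sub_nonneg.2 h.theta_lt_one.le
  set r : ℝ → ℝ≥0∞ := fun a ↦ ENNReal.ofReal (ρ ^ a) with hr
  have hr_add : ∀ a b, r a * r b = r (a + b) := fun a b ↦ by
    simp only [hr]
    rw [← ENNReal.ofReal_mul (by positivity), Real.rpow_add hρ]
  have hr_rpow : ∀ a t, 0 ≤ t → r a ^ t = r (a * t) := fun a t ht ↦ by
    simp only [hr]
    rw [ENNReal.ofReal_rpow_of_nonneg (by positivity) ht, Real.rpow_mul hρ.le]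
  have hr_zero : r 0 = 1 := by simp [hr]
  have hd : (d : ℝ) ≠ 0 := Nat.cast_ne_zero.2 h.dim_pos.ne'
  have hdR : d * R = i + θ * (d * Q - m) + (1 - θ) * (d * P) := by
    rw [h.scaling]
    field_simp
  calc Z = r (d * R - i) * (r (i - d * R) * Z) := by
        rw [← mul_assoc, hr_add, sub_add_sub_cancel', sub_self, hr_zero, one_mul]
    _ ≤ r (d * R - i) * (C * ((r (-(d * P)) * X) ^ (1 - θ) * (r (m - d * Q) * Y) ^ θ +
          r (-(d * P)) * X)) := by gcongr
    _ = C * ((r (d * R - i) * (r (-(d * P) * (1 - θ)) * r ((m - d * Q) * θ))) *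
          (X ^ (1 - θ) * Y ^ θ) + r (d * R - i) * r (-(d * P)) * X) := by
        rw [ENNReal.mul_rpow_of_nonneg _ _ hθ', ENNReal.mul_rpow_of_nonneg _ _ hθ,
          hr_rpow _ _ hθ', hr_rpow _ _ hθ]
        ring
    _ = C * (X ^ (1 - θ) * Y ^ θ + r (d * θ * (Q - P) - m * θ) * X) := by
        rw [hr_add, hr_add, hr_add, hdR]
        ring_nf
        rw [hr_zero]
        ring

theorem exists_eLpNorm_iteratedFDeriv_ball_le {d i m : ℕ} {P Q R θ : ℝ}
    (h : IsAdmissible d i m P Q R θ) (F : Type*) [NormedAddCommGroup F] [NormedSpace ℝ F]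
    [FiniteDimensional ℝ F] :
    ∃ C : ℝ≥0, ∀ f : 𝔼 d → F, ContDiff ℝ ∞ f → ∀ (c : 𝔼 d) (ρ : ℝ), 0 < ρ →
      eLpNorm (iteratedFDeriv ℝ i f) (lpExponent R) (volume.restrict (Metric.ball c ρ)) ≤
        C * (eLpNorm f (lpExponent P) (volume.restrict (Metric.ball c (2 * ρ))) ^ (1 - θ) *
          eLpNorm (iteratedFDeriv ℝ m f) (lpExponent Q)
            (volume.restrict (Metric.ball c (2 * ρ))) ^ θ +
          ENNReal.ofReal (ρ ^ (d * θ * (Q - P) - m * θ)) *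
            eLpNorm f (lpExponent P) (volume.restrict (Metric.ball c (2 * ρ)))) := by
  obtain ⟨C, hC⟩ := exists_eLpNorm_iteratedFDeriv_unitBall_le h F
  refine ⟨C, fun f hf c ρ hρ ↦ ?_⟩
  have hunit := hC (fun x ↦ f (ρ • x + c))
    (hf.comp (by fun_prop : ContDiff ℝ ∞ fun z : 𝔼 d ↦ ρ • z + c))
  rw [eLpNorm_iteratedFDeriv_comp_smul_add_ball volume (hf.of_le (mod_cast le_top)) c hρ 1
      h.pos_R.le,
    eLpNorm_iteratedFDeriv_comp_smul_add_ball volume (hf.of_le (mod_cast le_top)) c hρ 2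
      h.mem_Q.1,
    eLpNorm_comp_smul_add_ball volume f c hρ 2 h.mem_P.1, one_mul, finrank_euclideanSpace_fin]
    at hunit
  exact le_of_rescaled_interpolation_le h hρ hunit

/-! ### Dyadic weights -/

/-- The `n`-th dyadic shell: the closed unit ball for `n = 0`, and the closed annulus
`2 ^ (n - 1) ≤ ‖x‖ ≤ 2 ^ n` for `n ≥ 1`, so that the annulus `I_j` has index `j + 1`. -/
def dyadicShell (E : Type*) [NormedAddCommGroup E] : ℕ → Set E
  | 0 => {x | ‖x‖ ≤ 1}
  | n + 1 => {x | 2 ^ n ≤ ‖x‖ ∧ ‖x‖ ≤ 2 ^ (n + 1)}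

/-- The union of the `k`-th dyadic shell and its neighbours, on which a dyadic weight is still
comparable to a constant. -/
def enlargedDyadicShell (E : Type*) [NormedAddCommGroup E] (k : ℕ) : Set E :=
  {x | ∃ n, n ≤ k + 1 ∧ k ≤ n + 1 ∧ x ∈ dyadicShell E n}

/-- The weight `w` is comparable, up to the factor `C`, to the constant `a n` on the `n`-th dyadic
shell. The normalization `a 0 = 1` makes bounds in terms of `C` alone possible. -/
structure IsDyadicWeight {E : Type*} [NormedAddCommGroup E] (C : ℝ) (w : E → ℝ) (a : ℕ → ℝ) :
    Prop where
  value_zero : a 0 = 1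
  mem_Icc : ∀ n, ∀ x ∈ dyadicShell E n, w x ∈ Icc (a n / C) (C * a n)

section Shells

variable {E : Type*} [NormedAddCommGroup E]

theorem exists_mem_dyadicShell_inter (E : Type*) [NormedAddCommGroup E] [NormedSpace ℝ E]
    [Nontrivial E] (n : ℕ) :
    ∃ x : E, ‖x‖ = 2 ^ n ∧ x ∈ dyadicShell E n ∧ x ∈ dyadicShell E (n + 1) := by
  obtain ⟨x, hx⟩ := exists_norm_eq E (c := 2 ^ n) (by positivity)
  refine ⟨x, hx, ?_, hx.ge, hx.trans_le (pow_le_pow_right₀ one_le_two n.le_succ)⟩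
  cases n with
  | zero => simpa [dyadicShell] using hx.le
  | succ n => exact ⟨(pow_le_pow_right₀ one_le_two n.le_succ).trans_eq hx.symm, hx.le⟩

theorem ball_zero_two_subset_enlargedDyadicShell :
    Metric.ball (0 : E) 2 ⊆ enlargedDyadicShell E 0 := fun x hx ↦ by
  rw [mem_ball_zero_iff] at hx
  rcases le_total ‖x‖ 1 with hx1 | hx1
  · exact ⟨0, by simp, by simp, hx1⟩
  · exact ⟨1, by simp, by simp, by simpa [dyadicShell] using ⟨hx1, hx.le⟩⟩

theorem exists_mem_dyadicShell_succ {x : E} (hx : 1 ≤ ‖x‖) : ∃ j, x ∈ dyadicShell E (j + 1) := by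
  obtain ⟨j, hj1, hj2⟩ := exists_nat_pow_near hx one_lt_two
  exact ⟨j, hj1, hj2.le⟩

theorem mem_enlargedDyadicShell_succ {x : E} {j : ℕ} (hx1 : 2 ^ j * (3 / 4) ≤ ‖x‖)
    (hx2 : ‖x‖ ≤ 2 ^ j * (9 / 4)) : x ∈ enlargedDyadicShell E (j + 1) := by
  have hj : (0 : ℝ) < 2 ^ j := by positivity
  rcases le_total ‖x‖ (2 ^ j) with hle | hle
  · refine ⟨j, by omega, by omega, ?_⟩
    cases j with
    | zero => simpa [dyadicShell] using hle
    | succ j =>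
      rw [pow_succ] at hx1
      exact ⟨by linarith [pow_pos (two_pos : (0 : ℝ) < 2) j], hle⟩
  rcases le_total ‖x‖ (2 ^ (j + 1)) with hle2 | hle2
  · exact ⟨j + 1, by omega, by omega, hle, hle2⟩
  · refine ⟨j + 2, by omega, by omega, hle2, ?_⟩
    rw [pow_succ, pow_succ]
    linarith

end Shells

namespace IsDyadicWeight

variable {E : Type*} [NormedAddCommGroup E] {C : ℝ} {w : E → ℝ} {a : ℕ → ℝ}

section Nontrivial

variable [NormedSpace ℝ E] [Nontrivial E]

theorem le_sq_mul_succ (h : IsDyadicWeight C w a) (hC : 0 < C) (n : ℕ) :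
    a n ≤ C ^ 2 * a (n + 1) := by
  obtain ⟨x, -, hx, hx'⟩ := exists_mem_dyadicShell_inter E n
  have hcomp := (h.mem_Icc n x hx).1.trans (h.mem_Icc _ x hx').2
  rw [div_le_iff₀ hC] at hcomp
  linarith

theorem succ_le_sq_mul (h : IsDyadicWeight C w a) (hC : 0 < C) (n : ℕ) :
    a (n + 1) ≤ C ^ 2 * a n := by
  obtain ⟨x, -, hx, hx'⟩ := exists_mem_dyadicShell_inter E n
  have hcomp := (h.mem_Icc _ x hx').1.trans (h.mem_Icc n x hx).2
  rw [div_le_iff₀ hC] at hcomp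
  linarith

theorem value_pos (h : IsDyadicWeight C w a) (hC : 0 < C) (n : ℕ) : 0 < a n := by
  induction n with
  | zero => exact h.value_zero ▸ one_pos
  | succ n ih =>
    exact (pos_iff_pos_of_mul_pos (ih.trans_le (h.le_sq_mul_succ hC n))).1 (by positivity)

theorem mem_Icc_of_mem_enlargedDyadicShell (h : IsDyadicWeight C w a) (hC : 1 ≤ C) {k : ℕ} {x : E}
    (hx : x ∈ enlargedDyadicShell E k) : w x ∈ Icc (a k / C ^ 3) (C ^ 3 * a k) := by
  obtain ⟨n, hnk, hkn, hxn⟩ := hx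
  have hC0 : 0 < C := one_pos.trans_le hC
  have hcomp : a n ≤ C ^ 2 * a k ∧ a k ≤ C ^ 2 * a n := by
    obtain rfl | rfl | rfl : n = k + 1 ∨ k = n + 1 ∨ n = k := by omega
    · exact ⟨h.succ_le_sq_mul hC0 k, h.le_sq_mul_succ hC0 k⟩
    · exact ⟨h.le_sq_mul_succ hC0 n, h.succ_le_sq_mul hC0 n⟩
    · exact (and_self_iff).2 (le_mul_of_one_le_left (h.value_pos hC0 n).le (one_le_pow₀ hC))
  have hw := h.mem_Icc n x hxn
  constructor
  · refine le_trans ?_ hw.1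
    rw [div_le_div_iff₀ (by positivity) hC0, pow_succ, ← mul_assoc]
    exact mul_le_mul_of_nonneg_right (hcomp.2.trans_eq (mul_comm _ _)) hC0.le
  · refine hw.2.trans ?_
    rw [pow_succ', mul_assoc]
    exact mul_le_mul_of_nonneg_left hcomp.1 hC0.le

end Nontrivial

theorem pos [NormedSpace ℝ E] [Nontrivial E] (h : IsDyadicWeight C w a) (hC : 0 < C) (x : E) :
    0 < w x := by
  obtain ⟨n, hn⟩ : ∃ n, x ∈ dyadicShell E n := by
    rcases le_total ‖x‖ 1 with hx | hx
    · exact ⟨0, hx⟩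
    · exact (exists_mem_dyadicShell_succ hx).imp' _ fun _ ↦ id
  exact (div_pos (h.value_pos hC n) hC).trans_le (h.mem_Icc n x hn).1

theorem pow [NormedSpace ℝ E] [Nontrivial E] (h : IsDyadicWeight C w a) (hC : 0 < C) (m : ℕ) :
    IsDyadicWeight (C ^ m) (fun x ↦ w x ^ m) (fun n ↦ a n ^ m) where
  value_zero := by rw [h.value_zero, one_pow]
  mem_Icc n x hx := by
    have ha := h.value_pos hC n
    rw [← div_pow, ← mul_pow]
    exact ⟨pow_le_pow_left₀ (by positivity) (h.mem_Icc n x hx).1 m,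
      pow_le_pow_left₀ (h.pos hC x).le (h.mem_Icc n x hx).2 m⟩

end IsDyadicWeight

theorem rpow_le_two_rpow_abs_mul_rpow {N J : ℝ} (hN : 0 < N) (hNJ : N ≤ J) (hJN : J ≤ 2 * N)
    (γ : ℝ) : J ^ γ ≤ 2 ^ |γ| * N ^ γ := by
  have hJ : J = J / N * N := (div_mul_cancel₀ J hN.ne').symm
  have hratio1 : 1 ≤ J / N := (one_le_div hN).2 hNJ
  have hratio2 : J / N ≤ 2 := (div_le_iff₀ hN).2 hJN
  rw [hJ, Real.mul_rpow (by positivity) hN.le]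
  gcongr
  calc (J / N) ^ γ ≤ (J / N) ^ |γ| := Real.rpow_le_rpow_of_exponent_le hratio1 (le_abs_self _)
    _ ≤ 2 ^ |γ| := by gcongr

theorem exists_rpow_mul_div_rpow_le {E : Type*} [NormedAddCommGroup E] [NormedSpace ℝ E]
    [Nontrivial E] {C : ℝ} (hC : 0 < C) (γ ε : ℝ) {θ : ℝ} (hθ : 0 ≤ θ) :
    ∃ L : ℝ≥0, ∀ (φ ψ : E → ℝ) (a b : ℕ → ℝ), IsDyadicWeight C φ a → IsDyadicWeight C ψ b →
      (∀ x, (φ x / ψ x) ^ θ ≤ C * √(1 + ‖x‖ ^ 2) ^ (γ - ε)) → ∀ j : ℕ,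
        (2 ^ j * (1 / 8)) ^ (-γ) * (a (j + 1) / b (j + 1)) ^ θ ≤ L * ((2 : ℝ) ^ j) ^ (-ε) := by
  refine ⟨((1 / 8) ^ (-γ) * ((C ^ 2) ^ θ * (C * 2 ^ |γ - ε|))).toNNReal,
    fun φ ψ a b hφ hψ hdecay j ↦ ?_⟩
  rw [Real.coe_toNNReal _ (by positivity)]
  set N : ℝ := 2 ^ j
  have hN : 0 < N := by positivity
  have hN1 : 1 ≤ N := one_le_pow₀ one_le_two
  obtain ⟨x, hxN, -, hx⟩ := exists_mem_dyadicShell_inter E j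
  have ha := hφ.value_pos hC (j + 1)
  have hb := hψ.value_pos hC (j + 1)
  have hφx := hφ.pos hC x
  have hψx := hψ.pos hC x
  have hratio : a (j + 1) / b (j + 1) ≤ C ^ 2 * (φ x / ψ x) := by
    have hφ1 := (div_le_iff₀ hC).1 (hφ.mem_Icc _ x hx).1
    rw [← mul_div_assoc, div_le_div_iff₀ hb hψx]
    calc a (j + 1) * ψ x ≤ (φ x * C) * (C * b (j + 1)) := by
          gcongr
          exact (hψ.mem_Icc _ x hx).2
      _ = C ^ 2 * φ x * b (j + 1) := by ring
  have hbracket : √(1 + ‖x‖ ^ 2) ^ (γ - ε) ≤ 2 ^ |γ - ε| * N ^ (γ - ε) := by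
    refine rpow_le_two_rpow_abs_mul_rpow hN ?_ ?_ _ <;> rw [hxN]
    · exact Real.le_sqrt_of_sq_le (by linarith)
    · rw [Real.sqrt_le_left (by positivity)]
      nlinarith
  calc (N * (1 / 8)) ^ (-γ) * (a (j + 1) / b (j + 1)) ^ θ
      ≤ (N * (1 / 8)) ^ (-γ) * (C ^ 2 * (φ x / ψ x)) ^ θ := by gcongr
    _ = (N * (1 / 8)) ^ (-γ) * ((C ^ 2) ^ θ * (φ x / ψ x) ^ θ) := by
        rw [Real.mul_rpow (x := C ^ 2) (y := φ x / ψ x) (by positivity) (by positivity)]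
    _ ≤ (N * (1 / 8)) ^ (-γ) * ((C ^ 2) ^ θ * (C * (2 ^ |γ - ε| * N ^ (γ - ε)))) := by
        gcongr
        exact (hdecay x).trans (by gcongr)
    _ = (1 / 8) ^ (-γ) * ((C ^ 2) ^ θ * (C * 2 ^ |γ - ε|)) * (N ^ (-γ) * N ^ (γ - ε)) := by
        rw [Real.mul_rpow hN.le (by norm_num)]
        ring
    _ = _ := by
        rw [← Real.rpow_add hN]
        ring_nf

theorem eLpNorm_mul_norm_restrict_le {α H : Type*} [MeasurableSpace α] {μ : Measure α}
    [NormedAddCommGroup H] {U : Set α} (hU : MeasurableSet U) {w : α → ℝ} {W : ℝ}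
    (hw : ∀ x ∈ U, |w x| ≤ W) (h : α → H) (r : ℝ≥0∞) :
    eLpNorm (fun x ↦ w x * ‖h x‖) r (μ.restrict U) ≤
      ENNReal.ofReal W * eLpNorm h r (μ.restrict U) := by
  refine eLpNorm_le_mul_eLpNorm_of_ae_le_mul ?_ _
  filter_upwards [ae_restrict_mem hU] with x hx
  rw [norm_mul, norm_norm, Real.norm_eq_abs]
  exact mul_le_mul_of_nonneg_right (hw x hx) (norm_nonneg _)

theorem eLpNorm_restrict_le_mul_eLpNorm_smul {α F : Type*} [MeasurableSpace α] {μ : Measure α}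
    [NormedAddCommGroup F] [NormedSpace ℝ F] {V : Set α} (hV : MeasurableSet V) {w : α → ℝ} {c : ℝ}
    (hc : 0 < c) (hw : ∀ x ∈ V, c ≤ w x) (f : α → F) (p : ℝ≥0∞) :
    eLpNorm f p (μ.restrict V) ≤
      ENNReal.ofReal c⁻¹ * eLpNorm (fun x ↦ w x • f x) p (μ.restrict V) := by
  refine eLpNorm_le_mul_eLpNorm_of_ae_le_mul ?_ _
  filter_upwards [ae_restrict_mem hV] with x hx
  rw [norm_smul, inv_mul_eq_div, le_div_iff₀' hc]
  exact mul_le_mul_of_nonneg_right ((hw x hx).trans (le_abs_self _)) (norm_nonneg _)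

theorem mul_rpow_one_sub_mul_mul_rpow {a b K : ℝ} (ha : 0 < a) (hb : 0 < b) (hK : 0 < K) (θ : ℝ) :
    (K * b) ^ (1 - θ) * (K * a) ^ θ = K * (b * (a / b) ^ θ) := by
  rw [Real.rpow_sub (by positivity), Real.rpow_one, Real.mul_rpow hK.le hb.le,
    Real.mul_rpow hK.le ha.le, Real.div_rpow ha.le hb.le]
  field_simp

theorem ofReal_mul_interpolation_le {θ : ℝ} (hθ0 : 0 ≤ θ) (hθ1 : θ ≤ 1) {W A B M s t : ℝ}
    (hW : 0 ≤ W) (hA : 0 < A) (hB : 0 < B) (hM : 0 ≤ M) (hs : 0 ≤ s)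
    (hmain : W * (A ^ (1 - θ) * B ^ θ) ≤ M) (hlow : W * (s * A) ≤ M * t) {X X' Y Y' : ℝ≥0∞}
    (hX : X' ≤ ENNReal.ofReal A * X) (hY : Y' ≤ ENNReal.ofReal B * Y) :
    ENNReal.ofReal W * (X' ^ (1 - θ) * Y' ^ θ + ENNReal.ofReal s * X') ≤
      ENNReal.ofReal M * (X ^ (1 - θ) * Y ^ θ + ENNReal.ofReal t * X) := by
  have hθ' : 0 ≤ 1 - θ := sub_nonneg.2 hθ1
  calc ENNReal.ofReal W * (X' ^ (1 - θ) * Y' ^ θ + ENNReal.ofReal s * X')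
      ≤ ENNReal.ofReal W * ((ENNReal.ofReal A * X) ^ (1 - θ) * (ENNReal.ofReal B * Y) ^ θ +
          ENNReal.ofReal s * (ENNReal.ofReal A * X)) := by gcongr
    _ = ENNReal.ofReal (W * (A ^ (1 - θ) * B ^ θ)) * (X ^ (1 - θ) * Y ^ θ) +
          ENNReal.ofReal (W * (s * A)) * X := by
        rw [ENNReal.mul_rpow_of_nonneg _ _ hθ', ENNReal.mul_rpow_of_nonneg _ _ hθ0,
          ENNReal.ofReal_rpow_of_pos hA, ENNReal.ofReal_rpow_of_pos hB, ENNReal.ofReal_mul hW,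
          ENNReal.ofReal_mul hW, ENNReal.ofReal_mul (p := A ^ (1 - θ)) (by positivity),
          ENNReal.ofReal_mul hs]
        ring
    _ ≤ ENNReal.ofReal M * (X ^ (1 - θ) * Y ^ θ) + ENNReal.ofReal (M * t) * X := by gcongr
    _ = _ := by
        rw [ENNReal.ofReal_mul hM]
        ring

theorem eLpNorm_rpow_mul_rpow_mul_norm_le {α F G H : Type*} [MeasurableSpace α] {μ : Measure α}
    [NormedAddCommGroup F] [NormedSpace ℝ F] [NormedAddCommGroup G] [NormedAddCommGroup H]
    {U V : Set α} (hU : MeasurableSet U) (hV : MeasurableSet V) (hUV : U ⊆ V) {φ ψ : α → ℝ}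
    {a b K θ : ℝ} (ha : 0 < a) (hb : 0 < b) (hK : 0 < K) (hθ0 : 0 ≤ θ) (hθ1 : θ ≤ 1)
    (hφ : ∀ x ∈ V, φ x ∈ Icc (a / K) (K * a)) (hψ : ∀ x ∈ V, ψ x ∈ Icc (b / K) (K * b))
    {s t : ℝ} (hs : 0 ≤ s) (hst : s * (a / b) ^ θ ≤ t) {f : α → F} {g : α → G} {h : α → H}
    {p q r C : ℝ≥0∞}
    (hloc : eLpNorm h r (μ.restrict U) ≤ C * (eLpNorm f p (μ.restrict V) ^ (1 - θ) *
      eLpNorm g q (μ.restrict V) ^ θ + ENNReal.ofReal s * eLpNorm f p (μ.restrict V))) :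
    eLpNorm (fun x ↦ ψ x ^ (1 - θ) * φ x ^ θ * ‖h x‖) r (μ.restrict U) ≤
      C * ENNReal.ofReal (K ^ 2) * (eLpNorm (fun x ↦ ψ x • f x) p (μ.restrict V) ^ (1 - θ) *
        eLpNorm (fun x ↦ φ x * ‖g x‖) q (μ.restrict V) ^ θ +
        ENNReal.ofReal t * eLpNorm (fun x ↦ ψ x • f x) p (μ.restrict V)) := by
  have hα := fun x hx ↦ (div_pos ha hK).trans_le (hφ x hx).1
  have hβ := fun x hx ↦ (div_pos hb hK).trans_le (hψ x hx).1
  set X := eLpNorm (fun x ↦ ψ x • f x) p (μ.restrict V)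
  set Y := eLpNorm (fun x ↦ φ x * ‖g x‖) q (μ.restrict V)
  have hf : eLpNorm f p (μ.restrict V) ≤ ENNReal.ofReal (b / K)⁻¹ * X :=
    eLpNorm_restrict_le_mul_eLpNorm_smul hV (by positivity) (fun x hx ↦ (hψ x hx).1) f p
  have hg : eLpNorm g q (μ.restrict V) ≤ ENNReal.ofReal (a / K)⁻¹ * Y := by
    rw [← eLpNorm_norm]
    exact eLpNorm_restrict_le_mul_eLpNorm_smul hV (by positivity) (fun x hx ↦ (hφ x hx).1) _ q
  set W := (K * b) ^ (1 - θ) * (K * a) ^ θ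
  have hh : eLpNorm (fun x ↦ ψ x ^ (1 - θ) * φ x ^ θ * ‖h x‖) r (μ.restrict U) ≤
      ENNReal.ofReal W * eLpNorm h r (μ.restrict U) := by
    refine eLpNorm_mul_norm_restrict_le hU (fun x hx ↦ ?_) h r
    have hφ0 := hα x (hUV hx)
    have hψ0 := hβ x (hUV hx)
    rw [abs_of_pos (by positivity)]
    exact mul_le_mul (Real.rpow_le_rpow hψ0.le (hψ x (hUV hx)).2 (sub_nonneg.2 hθ1))
      (Real.rpow_le_rpow hφ0.le (hφ x (hUV hx)).2 hθ0) (by positivity) (by positivity)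
  have hW : W = K * (b * (a / b) ^ θ) := mul_rpow_one_sub_mul_mul_rpow ha hb hK θ
  have hmain : W * ((b / K)⁻¹ ^ (1 - θ) * (a / K)⁻¹ ^ θ) = K ^ 2 := by
    simp only [inv_div, div_eq_mul_inv K]
    rw [hW, mul_rpow_one_sub_mul_mul_rpow (by positivity) (by positivity) hK, inv_div_inv,
      ← inv_div a b, Real.inv_rpow (by positivity)]
    field_simp
  have hlow : W * (s * (b / K)⁻¹) ≤ K ^ 2 * t := by
    calc W * (s * (b / K)⁻¹) = K ^ 2 * (s * (a / b) ^ θ) := by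
          rw [hW]
          field_simp
      _ ≤ K ^ 2 * t := by gcongr
  refine (hh.trans (mul_le_mul_right hloc _)).trans ?_
  rw [mul_left_comm, mul_assoc]
  exact mul_le_mul_right (ofReal_mul_interpolation_le hθ0 hθ1 (by positivity) (by positivity)
    (by positivity) (by positivity) hs hmain.le hlow hf hg) _

section DyadicBalls

variable {E : Type*} [NormedAddCommGroup E] [NormedSpace ℝ E]

theorem exists_finset_forall_mem_ball_two_pow_smul (E : Type*) [NormedAddCommGroup E]
    [NormedSpace ℝ E] [ProperSpace E] {δ : ℝ} (hδ : 0 < δ) :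
    ∃ t : Finset E, (∀ c ∈ t, 1 ≤ ‖c‖ ∧ ‖c‖ ≤ 2) ∧ ∀ x, x ∈ Metric.ball 0 1 ∨
      ∃ c ∈ t, ∃ j : ℕ, x ∈ Metric.ball ((2 : ℝ) ^ j • c) (2 ^ j * δ) := by
  have hcompact : IsCompact {x : E | 1 ≤ ‖x‖ ∧ ‖x‖ ≤ 2} :=
    (isCompact_closedBall (0 : E) 2).of_isClosed_subset
      ((isClosed_le continuous_const continuous_norm).inter
        (isClosed_le continuous_norm continuous_const)) fun x hx ↦ by simpa using hx.2
  obtain ⟨t, ht, hcover⟩ := hcompact.elim_nhds_subcover (fun x ↦ Metric.ball x δ)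
    fun x _ ↦ Metric.ball_mem_nhds x hδ
  refine ⟨t, ht, fun x ↦ (lt_or_ge ‖x‖ 1).imp mem_ball_zero_iff.2 fun hx ↦ ?_⟩
  obtain ⟨j, hxj⟩ := exists_mem_dyadicShell_succ hx
  have hj : (0 : ℝ) < 2 ^ j := by positivity
  have hmem : ((2 : ℝ) ^ j)⁻¹ • x ∈ {x : E | 1 ≤ ‖x‖ ∧ ‖x‖ ≤ 2} := by
    rw [mem_ofPred_eq, norm_smul, norm_inv, Real.norm_of_nonneg hj.le, inv_mul_eq_div,
      le_div_iff₀ hj, div_le_iff₀ hj, one_mul, ← pow_succ']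
    exact hxj
  obtain ⟨c, hct, hxc⟩ := mem_iUnion₂.1 (hcover hmem)
  refine ⟨c, hct, j, ?_⟩
  rw [Metric.mem_ball] at hxc ⊢
  rw [← smul_inv_smul₀ hj.ne' x, dist_smul₀, Real.norm_of_nonneg hj.le]
  exact mul_lt_mul_of_pos_left hxc hj

theorem norm_mem_Ioo_of_mem_ball_two_pow_smul {c x : E} {j : ℕ} {δ : ℝ}
    (hx : x ∈ Metric.ball ((2 : ℝ) ^ j • c) (2 ^ j * δ)) :
    ‖x‖ ∈ Ioo (2 ^ j * (‖c‖ - δ)) (2 ^ j * (‖c‖ + δ)) := by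
  have hnorm : ‖(2 : ℝ) ^ j • c‖ = 2 ^ j * ‖c‖ := by
    rw [norm_smul, Real.norm_of_nonneg (by positivity)]
  rw [mem_ball_iff_norm] at hx
  have hdist := (abs_norm_sub_norm_le x ((2 : ℝ) ^ j • c)).trans_lt hx
  rw [hnorm, abs_lt] at hdist
  constructor <;> linarith [hdist.1, hdist.2]

theorem pairwise_disjoint_ball_two_pow_smul {c : E} {δ : ℝ} (hδ : 3 * δ ≤ ‖c‖) :
    Pairwise (Function.onFun Disjoint fun j : ℕ ↦ Metric.ball ((2 : ℝ) ^ j • c) (2 ^ j * δ)) := by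
  refine (pairwise_disjoint_on _).2 fun j l hjl ↦ disjoint_left.2 fun x hxj hxl ↦ ?_
  have hupper := (norm_mem_Ioo_of_mem_ball_two_pow_smul hxj).2
  have hlower := (norm_mem_Ioo_of_mem_ball_two_pow_smul hxl).1
  have hpow : (2 : ℝ) ^ j * 2 ≤ 2 ^ l := by
    rw [← pow_succ]
    exact pow_le_pow_right₀ one_le_two hjl
  have hj : (0 : ℝ) < 2 ^ j := by positivity
  have hscale := mul_le_mul_of_nonneg_right hpow (by linarith [norm_nonneg c] : 0 ≤ ‖c‖ - δ)
  have hlt := lt_of_mul_lt_mul_left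
    (by linarith : 2 ^ j * (2 * (‖c‖ - δ)) < 2 ^ j * (‖c‖ + δ)) hj.le
  linarith

end DyadicBalls

/-! ### Summation over dyadic cells -/

theorem tsum_rpow_mul_rpow_le {ι : Type*} (x y : ι → ℝ≥0∞) {A B : ℝ} (hA : 0 ≤ A)
    (hB : 0 ≤ B) (hAB : 1 ≤ A + B) :
    ∑' j, x j ^ A * y j ^ B ≤ (∑' j, x j) ^ A * (∑' j, y j) ^ B := by
  have hs : 0 < A + B := one_pos.trans_le hAB
  have ha : A / (A + B) ≤ A := div_le_self hA hAB
  have hb : B / (A + B) ≤ B := div_le_self hB hAB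
  let _ : MeasurableSpace ι := ⊤
  have : DiscreteMeasurableSpace ι := ⟨fun _ ↦ trivial⟩
  have hholder := ENNReal.lintegral_mul_norm_pow_le (μ := Measure.count) (f := x) (g := y)
    Measurable.of_discrete.aemeasurable Measurable.of_discrete.aemeasurable
    (p := A / (A + B)) (q := B / (A + B)) (by positivity) (by positivity)
    (by rw [← add_div, div_self hs.ne'])
  simp only [lintegral_count] at hholder
  have hsplit {e e' : ℝ} (he : 0 ≤ e) (hee' : e ≤ e') (u : ℝ≥0∞) :
      u ^ e' = u ^ e * u ^ (e' - e) := by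
    rw [← ENNReal.rpow_add_of_nonneg _ _ he (sub_nonneg.2 hee'), add_sub_cancel]
  set a := A / (A + B)
  set b := B / (A + B)
  have ha0 : 0 ≤ a := by positivity
  have hb0 : 0 ≤ b := by positivity
  calc ∑' j, x j ^ A * y j ^ B
      ≤ ∑' j, (x j ^ a * y j ^ b) * ((∑' j, x j) ^ (A - a) * (∑' j, y j) ^ (B - b)) := by
        refine ENNReal.tsum_le_tsum fun j ↦ ?_
        rw [hsplit ha0 ha, hsplit hb0 hb, mul_mul_mul_comm]
        gcongr
        exacts [ENNReal.le_tsum j, ENNReal.le_tsum j]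
    _ ≤ ((∑' j, x j) ^ a * (∑' j, y j) ^ b) *
          ((∑' j, x j) ^ (A - a) * (∑' j, y j) ^ (B - b)) := by
        rw [ENNReal.tsum_mul_right]
        gcongr
    _ = _ := by rw [mul_mul_mul_comm, ← hsplit ha0 ha, ← hsplit hb0 hb]

theorem exists_eLpNorm_restrict_le_mul_rpow {α F ι : Type*} [MeasurableSpace α]
    [NormedAddCommGroup F] [Countable ι] {μ : Measure α} {V : ι → Set α}
    (hV : ∀ j, MeasurableSet (V j)) (hdisj : Pairwise (Function.onFun Disjoint V)) (f : α → F)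
    {P : ℝ} (hP : 0 ≤ P) :
    ∃ (Λ : ℝ≥0∞) (x : ι → ℝ≥0∞), (∀ j, eLpNorm f (lpExponent P) (μ.restrict (V j)) ≤ Λ * x j ^ P) ∧
      Λ * (∑' j, x j) ^ P ≤ eLpNorm f (lpExponent P) μ := by
  -- For `P = 0` the supremum bound is carried by `Λ`, and `0 ^ 0 = 1` makes `x = 0` admissible.
  rcases hP.eq_or_lt with rfl | hP
  · refine ⟨eLpNorm f (lpExponent 0) μ, fun _ ↦ 0, fun j ↦ ?_, by simp⟩
    simpa using eLpNorm_mono_measure f Measure.restrict_le_self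
  · refine ⟨1, fun j ↦ ∫⁻ x in V j, ‖f x‖ₑ ^ (1 / P) ∂μ, fun j ↦ ?_, ?_⟩
    · rw [eLpNorm_lpExponent_eq_lintegral f hP, one_mul]
    · rw [eLpNorm_lpExponent_eq_lintegral f hP, one_mul, ← lintegral_iUnion hV hdisj]
      exact ENNReal.rpow_le_rpow (setLIntegral_le_lintegral _ _) hP.le

theorem tsum_eLpNorm_restrict_rpow_mul_rpow_le {α F G ι : Type*} [MeasurableSpace α]
    [NormedAddCommGroup F] [NormedAddCommGroup G] [Countable ι] {μ : Measure α} {V : ι → Set α}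
    (hV : ∀ j, MeasurableSet (V j)) (hdisj : Pairwise (Function.onFun Disjoint V)) (f : α → F)
    (g : α → G) {P Q r θ : ℝ} (hP : 0 ≤ P) (hQ : 0 ≤ Q) (hr : 0 ≤ r) (hθ0 : 0 ≤ θ) (hθ1 : θ ≤ 1)
    (hsum : 1 ≤ ((1 - θ) * P + θ * Q) * r) :
    ∑' j, (eLpNorm f (lpExponent P) (μ.restrict (V j)) ^ (1 - θ) *
        eLpNorm g (lpExponent Q) (μ.restrict (V j)) ^ θ) ^ r ≤
      (eLpNorm f (lpExponent P) μ ^ (1 - θ) * eLpNorm g (lpExponent Q) μ ^ θ) ^ r := by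
  have hθ' : 0 ≤ 1 - θ := sub_nonneg.2 hθ1
  obtain ⟨Λ, x, hx, hΛ⟩ := exists_eLpNorm_restrict_le_mul_rpow (μ := μ) hV hdisj f hP
  obtain ⟨Γ, y, hy, hΓ⟩ := exists_eLpNorm_restrict_le_mul_rpow (μ := μ) hV hdisj g hQ
  have hfactor (a b : ℝ≥0∞) : ((Λ * a ^ P) ^ (1 - θ) * (Γ * b ^ Q) ^ θ) ^ r =
      (Λ ^ (1 - θ) * Γ ^ θ) ^ r * (a ^ (P * (1 - θ) * r) * b ^ (Q * θ * r)) := by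
    simp only [ENNReal.mul_rpow_of_nonneg _ _ hθ', ENNReal.mul_rpow_of_nonneg _ _ hθ0,
      ENNReal.mul_rpow_of_nonneg _ _ hr, ENNReal.rpow_mul]
    ring
  calc _ ≤ ∑' j, ((Λ * x j ^ P) ^ (1 - θ) * (Γ * y j ^ Q) ^ θ) ^ r := by
        gcongr with j
        exacts [hx j, hy j]
    _ = (Λ ^ (1 - θ) * Γ ^ θ) ^ r * ∑' j, x j ^ (P * (1 - θ) * r) * y j ^ (Q * θ * r) := by
        simp only [hfactor, ENNReal.tsum_mul_left]
    _ ≤ (Λ ^ (1 - θ) * Γ ^ θ) ^ r * ((∑' j, x j) ^ (P * (1 - θ) * r) *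
          (∑' j, y j) ^ (Q * θ * r)) := by
        gcongr
        exact tsum_rpow_mul_rpow_le x y (by positivity) (by positivity) (by linarith)
    _ = ((Λ * (∑' j, x j) ^ P) ^ (1 - θ) * (Γ * (∑' j, y j) ^ Q) ^ θ) ^ r := (hfactor _ _).symm
    _ ≤ _ := by gcongr

theorem lintegral_le_add_sum_tsum {α ι κ : Type*} [MeasurableSpace α] [Countable κ] (μ : Measure α)
    (f : α → ℝ≥0∞) {B : Set α} {t : Finset ι} {U : ι → κ → Set α}
    (hcover : ∀ x, x ∈ B ∨ ∃ c ∈ t, ∃ j, x ∈ U c j) :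
    ∫⁻ x, f x ∂μ ≤ ∫⁻ x in B, f x ∂μ + ∑ c ∈ t, ∑' j, ∫⁻ x in U c j, f x ∂μ := by
  have huniv : univ ⊆ B ∪ ⋃ c : t, ⋃ j, U c j := fun x _ ↦ by
    simpa using hcover x
  calc ∫⁻ x, f x ∂μ ≤ ∫⁻ x in B ∪ ⋃ c : t, ⋃ j, U c j, f x ∂μ := by
        rw [← setLIntegral_univ]
        exact lintegral_mono_set huniv
    _ ≤ ∫⁻ x in B, f x ∂μ + ∑' c : t, ∑' j, ∫⁻ x in U c j, f x ∂μ := by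
        refine (lintegral_union_le _ _ _).trans ?_
        gcongr
        exact (lintegral_iUnion_le _ _).trans
          (ENNReal.tsum_le_tsum fun c ↦ lintegral_iUnion_le _ _)
    _ = _ := by
        rw [tsum_fintype, Finset.sum_coe_sort t fun c ↦ ∑' j, ∫⁻ x in U c j, f x ∂μ]

theorem tsum_ofReal_two_pow_rpow_neg_ne_top {ε : ℝ} (hε : 0 < ε) :
    ∑' j : ℕ, ENNReal.ofReal (((2 : ℝ) ^ j) ^ (-ε)) ≠ ⊤ := by
  have hgeom (j : ℕ) : ENNReal.ofReal (((2 : ℝ) ^ j) ^ (-ε)) = ENNReal.ofReal (2 ^ (-ε)) ^ j := by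
    rw [← ENNReal.ofReal_pow (by positivity), ← Real.rpow_natCast_mul two_pos.le, mul_comm,
      Real.rpow_mul_natCast two_pos.le]
  have hlt : ENNReal.ofReal (2 ^ (-ε)) < 1 :=
    ENNReal.ofReal_lt_one.2 (Real.rpow_lt_one_of_one_lt_of_neg one_lt_two (neg_neg_of_pos hε))
  simp only [hgeom, ENNReal.tsum_geometric, ne_eq, ENNReal.inv_eq_top]
  exact (tsub_pos_of_lt hlt).ne'

section Cells

variable {α F G H : Type*} [MeasurableSpace α] [NormedAddCommGroup F] [NormedAddCommGroup G]
  [NormedAddCommGroup H] {μ : Measure α} {f : α → F} {g : α → G} {w : α → H} {P Q R θ : ℝ}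
  {κ : Type*} [Countable κ] {M : ℝ≥0∞} {σ : κ → ℝ≥0∞}

theorem eLpNorm_lpExponent_rpow (w : α → H) (μ : Measure α) (hR : 0 < R) :
    eLpNorm w (lpExponent R) μ ^ (1 / R) = ∫⁻ x, ‖w x‖ₑ ^ (1 / R) ∂μ := by
  rw [eLpNorm_lpExponent_eq_lintegral w hR, ← ENNReal.rpow_mul, mul_one_div_cancel hR.ne',
    ENNReal.rpow_one]

theorem tsum_lintegral_le_of_eLpNorm_restrict_le {U V : κ → Set α}
    (hV : ∀ j, MeasurableSet (V j)) (hdisj : Pairwise (Function.onFun Disjoint V))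
    (hP : 0 ≤ P) (hQ : 0 ≤ Q) (hR0 : 0 < R) (hR1 : R ≤ 1) (hθ0 : 0 ≤ θ) (hθ1 : θ ≤ 1)
    (hR : R ≤ (1 - θ) * P + θ * Q)
    (hcell : ∀ j, eLpNorm w (lpExponent R) (μ.restrict (U j)) ≤
      M * (eLpNorm f (lpExponent P) (μ.restrict (V j)) ^ (1 - θ) *
        eLpNorm g (lpExponent Q) (μ.restrict (V j)) ^ θ + σ j * eLpNorm f (lpExponent P) μ)) :
    ∑' j, ∫⁻ x in U j, ‖w x‖ₑ ^ (1 / R) ∂μ ≤ 2 ^ (1 / R - 1) * (1 + (∑' j, σ j) ^ (1 / R)) *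
      (M * (eLpNorm f (lpExponent P) μ ^ (1 - θ) * eLpNorm g (lpExponent Q) μ ^ θ +
        eLpNorm f (lpExponent P) μ)) ^ (1 / R) := by
  set r := 1 / R
  have hr0 : 0 ≤ r := by positivity
  have hr1 : 1 ≤ r := (one_le_div hR0).2 hR1
  have hsum : 1 ≤ ((1 - θ) * P + θ * Q) * r := by rwa [mul_one_div, one_le_div hR0]
  set X := eLpNorm f (lpExponent P) μ
  set Y := eLpNorm g (lpExponent Q) μ
  set Z : κ → ℝ≥0∞ := fun j ↦ eLpNorm f (lpExponent P) (μ.restrict (V j)) ^ (1 - θ) *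
    eLpNorm g (lpExponent Q) (μ.restrict (V j)) ^ θ
  have hZ : ∑' j, Z j ^ r ≤ (X ^ (1 - θ) * Y ^ θ) ^ r :=
    tsum_eLpNorm_restrict_rpow_mul_rpow_le hV hdisj f g hP hQ hr0 hθ0 hθ1 hsum
  have hσ : ∑' j, σ j ^ r ≤ (∑' j, σ j) ^ r := by
    simpa using tsum_rpow_mul_rpow_le σ σ hr0 le_rfl (by simpa using hr1)
  calc ∑' j, ∫⁻ x in U j, ‖w x‖ₑ ^ r ∂μ
      ≤ ∑' j, M ^ r * (2 ^ (r - 1) * (Z j ^ r + σ j ^ r * X ^ r)) := by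
        refine ENNReal.tsum_le_tsum fun j ↦ ?_
        rw [← eLpNorm_lpExponent_rpow w _ hR0, ← ENNReal.mul_rpow_of_nonneg _ X hr0]
        refine (ENNReal.rpow_le_rpow (hcell j) hr0).trans ?_
        rw [ENNReal.mul_rpow_of_nonneg _ _ hr0]
        gcongr
        exact ENNReal.rpow_add_le_mul_rpow_add_rpow _ _ hr1
    _ = M ^ r * (2 ^ (r - 1) * (∑' j, Z j ^ r + (∑' j, σ j ^ r) * X ^ r)) := by
        rw [ENNReal.tsum_mul_left, ENNReal.tsum_mul_left, ENNReal.tsum_add, ENNReal.tsum_mul_right]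
    _ ≤ M ^ r * (2 ^ (r - 1) * ((X ^ (1 - θ) * Y ^ θ + X) ^ r +
          (∑' j, σ j) ^ r * (X ^ (1 - θ) * Y ^ θ + X) ^ r)) := by
        gcongr
        · exact hZ.trans (ENNReal.rpow_le_rpow le_self_add hr0)
        · exact le_add_self
    _ = _ := by
        rw [ENNReal.mul_rpow_of_nonneg _ _ hr0]
        ring

theorem eLpNorm_le_of_cover {ι : Type*} {B : Set α} {t : Finset ι} {U V : ι → κ → Set α}
    (hcover : ∀ x, x ∈ B ∨ ∃ c ∈ t, ∃ j, x ∈ U c j) (hV : ∀ c j, MeasurableSet (V c j))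
    (hdisj : ∀ c ∈ t, Pairwise (Function.onFun Disjoint (V c)))
    (hP : 0 ≤ P) (hQ : 0 ≤ Q) (hR0 : 0 < R) (hR1 : R ≤ 1) (hθ0 : 0 ≤ θ) (hθ1 : θ ≤ 1)
    (hR : R ≤ (1 - θ) * P + θ * Q)
    (hB : eLpNorm w (lpExponent R) (μ.restrict B) ≤ M * (eLpNorm f (lpExponent P) μ ^ (1 - θ) *
      eLpNorm g (lpExponent Q) μ ^ θ + eLpNorm f (lpExponent P) μ))
    (hcell : ∀ c ∈ t, ∀ j, eLpNorm w (lpExponent R) (μ.restrict (U c j)) ≤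
      M * (eLpNorm f (lpExponent P) (μ.restrict (V c j)) ^ (1 - θ) *
        eLpNorm g (lpExponent Q) (μ.restrict (V c j)) ^ θ + σ j * eLpNorm f (lpExponent P) μ)) :
    eLpNorm w (lpExponent R) μ ≤
      (1 + t.card * (2 ^ (1 / R - 1) * (1 + (∑' j, σ j) ^ (1 / R)))) ^ R *
        (M * (eLpNorm f (lpExponent P) μ ^ (1 - θ) * eLpNorm g (lpExponent Q) μ ^ θ +
          eLpNorm f (lpExponent P) μ)) := by
  set T := M * (eLpNorm f (lpExponent P) μ ^ (1 - θ) * eLpNorm g (lpExponent Q) μ ^ θ +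
    eLpNorm f (lpExponent P) μ)
  set A : ℝ≥0∞ := 2 ^ (1 / R - 1) * (1 + (∑' j, σ j) ^ (1 / R))
  have hB' : ∫⁻ x in B, ‖w x‖ₑ ^ (1 / R) ∂μ ≤ T ^ (1 / R) := by
    rw [← eLpNorm_lpExponent_rpow w _ hR0]
    exact ENNReal.rpow_le_rpow hB (by positivity)
  have hcells : ∀ c ∈ t, ∑' j, ∫⁻ x in U c j, ‖w x‖ₑ ^ (1 / R) ∂μ ≤ A * T ^ (1 / R) := fun c hc ↦
    tsum_lintegral_le_of_eLpNorm_restrict_le (hV c) (hdisj c hc) hP hQ hR0 hR1 hθ0 hθ1 hR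
      (hcell c hc)
  rw [eLpNorm_lpExponent_eq_lintegral w hR0]
  calc (∫⁻ x, ‖w x‖ₑ ^ (1 / R) ∂μ) ^ R ≤ (T ^ (1 / R) + ∑ _ ∈ t, A * T ^ (1 / R)) ^ R := by
        refine ENNReal.rpow_le_rpow ?_ hR0.le
        exact (lintegral_le_add_sum_tsum μ _ hcover).trans
          (add_le_add hB' (Finset.sum_le_sum hcells))
    _ = ((1 + t.card * A) * T ^ (1 / R)) ^ R := by
        rw [Finset.sum_const, nsmul_eq_mul]
        ring_nf
    _ = (1 + t.card * A) ^ R * T := by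
        rw [ENNReal.mul_rpow_of_nonneg _ _ hR0.le, ← ENNReal.rpow_mul, one_div_mul_cancel hR0.ne',
          ENNReal.rpow_one]

end Cells

section WeightedCells

variable {E F G H : Type*} [NormedAddCommGroup E] [NormedSpace ℝ E] [Nontrivial E]
  [MeasurableSpace E] [OpensMeasurableSpace E] [NormedAddCommGroup F] [NormedSpace ℝ F]
  [NormedAddCommGroup G] [NormedAddCommGroup H] {μ : Measure E} {f : E → F} {g : E → G} {u : E → H}
  {φ ψ : E → ℝ} {a b : ℕ → ℝ} {C θ : ℝ} {p q r C₀ : ℝ≥0∞}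

theorem eLpNorm_weighted_ball_zero_one_le (hC : 1 ≤ C) (hθ0 : 0 ≤ θ) (hθ1 : θ ≤ 1)
    (hφ : IsDyadicWeight C φ a) (hψ : IsDyadicWeight C ψ b)
    (hloc : eLpNorm u r (μ.restrict (Metric.ball 0 1)) ≤ C₀ *
      (eLpNorm f p (μ.restrict (Metric.ball 0 2)) ^ (1 - θ) *
        eLpNorm g q (μ.restrict (Metric.ball 0 2)) ^ θ +
        eLpNorm f p (μ.restrict (Metric.ball 0 2)))) :
    eLpNorm (fun x ↦ ψ x ^ (1 - θ) * φ x ^ θ * ‖u x‖) r (μ.restrict (Metric.ball 0 1)) ≤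
      C₀ * ENNReal.ofReal ((C ^ 3) ^ 2) * (eLpNorm (fun x ↦ ψ x • f x) p μ ^ (1 - θ) *
        eLpNorm (fun x ↦ φ x * ‖g x‖) q μ ^ θ + eLpNorm (fun x ↦ ψ x • f x) p μ) := by
  have hsubset := ball_zero_two_subset_enlargedDyadicShell (E := E)
  have hcell := eLpNorm_rpow_mul_rpow_mul_norm_le (s := 1) (t := 1) measurableSet_ball
    measurableSet_ball (Metric.ball_subset_ball one_le_two) one_pos one_pos
    (by positivity : 0 < C ^ 3) hθ0 hθ1
    (fun x hx ↦ hφ.value_zero ▸ hφ.mem_Icc_of_mem_enlargedDyadicShell hC (hsubset hx))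
    (fun x hx ↦ hψ.value_zero ▸ hψ.mem_Icc_of_mem_enlargedDyadicShell hC (hsubset hx))
    zero_le_one (by simp) (by simpa using hloc)
  rw [ENNReal.ofReal_one, one_mul] at hcell
  refine hcell.trans ?_
  gcongr
  exacts [Measure.restrict_le_self, Measure.restrict_le_self, Measure.restrict_le_self]

theorem eLpNorm_weighted_annular_ball_le (hC : 1 ≤ C) (hθ0 : 0 ≤ θ) (hθ1 : θ ≤ 1)
    (hφ : IsDyadicWeight C φ a) (hψ : IsDyadicWeight C ψ b) {c : E} (hc1 : 1 ≤ ‖c‖)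
    (hc2 : ‖c‖ ≤ 2) {j : ℕ} {s t : ℝ} (hs : 0 ≤ s) (hst : s * (a (j + 1) / b (j + 1)) ^ θ ≤ t)
    (hloc : eLpNorm u r (μ.restrict (Metric.ball ((2 : ℝ) ^ j • c) (2 ^ j * (1 / 8)))) ≤ C₀ *
      (eLpNorm f p (μ.restrict (Metric.ball ((2 : ℝ) ^ j • c) (2 ^ j * (1 / 4)))) ^ (1 - θ) *
        eLpNorm g q (μ.restrict (Metric.ball ((2 : ℝ) ^ j • c) (2 ^ j * (1 / 4)))) ^ θ +
        ENNReal.ofReal s *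
          eLpNorm f p (μ.restrict (Metric.ball ((2 : ℝ) ^ j • c) (2 ^ j * (1 / 4)))))) :
    eLpNorm (fun x ↦ ψ x ^ (1 - θ) * φ x ^ θ * ‖u x‖) r
        (μ.restrict (Metric.ball ((2 : ℝ) ^ j • c) (2 ^ j * (1 / 8)))) ≤
      C₀ * ENNReal.ofReal ((C ^ 3) ^ 2) * (eLpNorm (fun x ↦ ψ x • f x) p
          (μ.restrict (Metric.ball ((2 : ℝ) ^ j • c) (2 ^ j * (1 / 4)))) ^ (1 - θ) *
        eLpNorm (fun x ↦ φ x * ‖g x‖) q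
          (μ.restrict (Metric.ball ((2 : ℝ) ^ j • c) (2 ^ j * (1 / 4)))) ^ θ +
        ENNReal.ofReal t * eLpNorm (fun x ↦ ψ x • f x) p μ) := by
  have hC0 : 0 < C := one_pos.trans_le hC
  have hsubset : Metric.ball ((2 : ℝ) ^ j • c) (2 ^ j * (1 / 4)) ⊆ enlargedDyadicShell E (j + 1) :=
    fun x hx ↦ by
      have hnorm := norm_mem_Ioo_of_mem_ball_two_pow_smul hx
      refine mem_enlargedDyadicShell_succ (le_trans ?_ hnorm.1.le) (hnorm.2.le.trans ?_)
      · gcongr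
        linarith
      · gcongr
        linarith
  refine (eLpNorm_rpow_mul_rpow_mul_norm_le measurableSet_ball measurableSet_ball
    (Metric.ball_subset_ball (by gcongr; norm_num)) (hφ.value_pos hC0 _) (hψ.value_pos hC0 _)
    (by positivity) hθ0 hθ1
    (fun x hx ↦ hφ.mem_Icc_of_mem_enlargedDyadicShell hC (hsubset hx))
    (fun x hx ↦ hψ.mem_Icc_of_mem_enlargedDyadicShell hC (hsubset hx)) hs hst hloc).trans ?_
  gcongr
  exact Measure.restrict_le_self

end WeightedCells

theorem exists_eLpNorm_weighted_le {d i m : ℕ} {P Q R θ : ℝ} (h : IsAdmissible d i m P Q R θ)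
    (F : Type*) [NormedAddCommGroup F] [NormedSpace ℝ F] [FiniteDimensional ℝ F] {C ε : ℝ}
    (hC : 1 ≤ C) (hε : 0 < ε) :
    ∃ D : ℝ≥0, ∀ (f : 𝔼 d → F) (φ ψ : 𝔼 d → ℝ) (a b : ℕ → ℝ), ContDiff ℝ ∞ f →
      IsDyadicWeight C φ a → IsDyadicWeight C ψ b →
      (∀ x, (φ x / ψ x) ^ θ ≤ C * √(1 + ‖x‖ ^ 2) ^ (m * θ - d * θ * (Q - P) - ε)) →
      eLpNorm (fun x ↦ ψ x ^ (1 - θ) * φ x ^ θ * ‖iteratedFDeriv ℝ i f x‖) (lpExponent R) volume ≤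
        D * (eLpNorm (fun x ↦ ψ x • f x) (lpExponent P) volume ^ (1 - θ) *
          eLpNorm (fun x ↦ φ x * ‖iteratedFDeriv ℝ m f x‖) (lpExponent Q) volume ^ θ +
          eLpNorm (fun x ↦ ψ x • f x) (lpExponent P) volume) := by
  have hC0 : 0 < C := one_pos.trans_le hC
  have : Nonempty (Fin d) := ⟨⟨0, h.dim_pos⟩⟩
  obtain ⟨C₀, hloc⟩ := exists_eLpNorm_iteratedFDeriv_ball_le h F
  obtain ⟨L, hL⟩ := exists_rpow_mul_div_rpow_le (E := 𝔼 d) hC0 (m * θ - d * θ * (Q - P)) ε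
    h.theta_pos.le
  obtain ⟨t, ht, hcover⟩ := exists_finset_forall_mem_ball_two_pow_smul (𝔼 d) (δ := 1 / 8)
    (by norm_num)
  set σ : ℕ → ℝ≥0∞ := fun j ↦ ENNReal.ofReal (L * ((2 : ℝ) ^ j) ^ (-ε))
  have hσ : ∑' j, σ j ≠ ⊤ := by
    simp only [σ, ENNReal.ofReal_mul L.coe_nonneg, ENNReal.tsum_mul_left]
    exact ENNReal.mul_ne_top ENNReal.ofReal_ne_top (tsum_ofReal_two_pow_rpow_neg_ne_top hε)
  have hR1 : R ≤ 1 := h.le_mix.trans h.mix_le_one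
  set A : ℝ≥0∞ := (1 + t.card * (2 ^ (1 / R - 1) * (1 + (∑' j, σ j) ^ (1 / R)))) ^ R
  have hA : A ≠ ⊤ := by
    have hexp : 0 ≤ 1 / R - 1 := sub_nonneg.2 ((one_le_div h.pos_R).2 hR1)
    have hR0 := h.pos_R.le
    finiteness
  set M : ℝ≥0∞ := C₀ * ENNReal.ofReal ((C ^ 3) ^ 2)
  refine ⟨(A * M).toNNReal, fun f φ ψ a b hf hφ hψ hdecay ↦ ?_⟩
  rw [ENNReal.coe_toNNReal (by finiteness), mul_assoc]
  refine eLpNorm_le_of_cover (σ := σ) (B := Metric.ball 0 1) (t := t)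
    (U := fun c j ↦ Metric.ball ((2 : ℝ) ^ j • c) (2 ^ j * (1 / 8)))
    (V := fun c j ↦ Metric.ball ((2 : ℝ) ^ j • c) (2 ^ j * (1 / 4)))
    hcover (fun _ _ ↦ measurableSet_ball)
    (fun c hc ↦ pairwise_disjoint_ball_two_pow_smul (by linarith [(ht c hc).1]))
    h.mem_P.1 h.mem_Q.1 h.pos_R hR1 h.theta_pos.le h.theta_lt_one.le h.le_mix ?_ fun c hc j ↦ ?_
  · refine eLpNorm_weighted_ball_zero_one_le (u := iteratedFDeriv ℝ i f) hC h.theta_pos.le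
      h.theta_lt_one.le hφ hψ ?_
    simpa using hloc f hf 0 1 one_pos
  · refine eLpNorm_weighted_annular_ball_le (u := iteratedFDeriv ℝ i f) hC h.theta_pos.le
      h.theta_lt_one.le hφ hψ (ht c hc).1 (ht c hc).2 (by positivity) (hL φ ψ a b hφ hψ hdecay j) ?_
    have hball := hloc f hf ((2 : ℝ) ^ j • c) (2 ^ j * (1 / 8)) (by positivity)
    rwa [show 2 * (2 ^ j * (1 / 8)) = (2 ^ j * (1 / 4) : ℝ) by ring,
      show d * θ * (Q - P) - m * θ = -(m * θ - d * θ * (Q - P)) by ring] at hball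

theorem div_pow_rpow_le {u v J C θ κ ε : ℝ} (hu : 0 < u) (hv : 0 < v) (hJ : 0 < J) (m : ℕ)
    (h : (u / (J * v)) ^ (m * θ) * J ^ κ ≤ C * J ^ (-ε)) :
    (u ^ m / v ^ m) ^ θ ≤ C * J ^ (m * θ - κ - ε) :=
  calc (u ^ m / v ^ m) ^ θ = (J * (u / (J * v))) ^ (m * θ) := by
        rw [← mul_div_assoc, mul_div_mul_left u v hJ.ne', ← div_pow,
          Real.rpow_natCast_mul (by positivity)]
    _ = (u / (J * v)) ^ (m * θ) * J ^ κ * J ^ (m * θ - κ) := by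
        rw [Real.mul_rpow hJ.le (by positivity), mul_assoc, ← Real.rpow_add hJ, add_sub_cancel,
          mul_comm]
    _ ≤ C * J ^ (-ε) * J ^ (m * θ - κ) := by gcongr
    _ = C * J ^ (m * θ - κ - ε) := by
        rw [mul_assoc, ← Real.rpow_add hJ, neg_add_eq_sub]

theorem isAdmissible_of_exponents {d i m : ℕ} (hd : 1 ≤ d) (hi : 1 ≤ i) (him : i ≤ m) {p q : ℝ≥0∞}
    (hp : 1 ≤ p) (hq : 1 ≤ q) {rb θ : ℝ} (hrb : 1 ≤ rb) (hθl : (i : ℝ) / m ≤ θ) (hθu : θ < 1)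
    (hrel : 1 / rb = i / d + θ * ((1 / q).toReal - m / d) + (1 - θ) * (1 / p).toReal) :
    IsAdmissible d i m (1 / p).toReal (1 / q).toReal (1 / rb) θ where
  dim_pos := hd
  order_pos := hi
  top_order_pos := hi.trans him
  mem_P := ⟨ENNReal.toReal_nonneg, toReal_one_div_le_one hp⟩
  mem_Q := ⟨ENNReal.toReal_nonneg, toReal_one_div_le_one hq⟩
  pos_R := by positivity
  div_le_theta := hθl
  theta_lt_one := hθu
  scaling := hrel

theorem stmt5_general (d i m : ℕ) (hd : 1 ≤ d) (hi : 1 ≤ i) (him : i ≤ m) (p q : ℝ≥0∞)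
    (hp : 1 ≤ p) (hq : 1 ≤ q) (rb θ C ε : ℝ) (hrb : 1 ≤ rb) (hθl : (i : ℝ) / m ≤ θ) (hθu : θ < 1)
    (hC : 1 ≤ C) (hε : 0 < ε)
    (hrel : 1 / rb = i / d + θ * ((1 / q).toReal - m / d) + (1 - θ) * (1 / p).toReal)
    (F : Type*) [NormedAddCommGroup F] [NormedSpace ℝ F] [FiniteDimensional ℝ F] :
    ∃ C' : ℝ, 0 < C' ∧ ∀ (f : 𝔼 d → F) (φ ψ : 𝔼 d → ℝ) (a b : ℕ → ℝ), ContDiff ℝ ∞ f →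
      IsDyadicWeight C φ a → IsDyadicWeight C ψ b →
      (∀ x, (φ x / (√(1 + ‖x‖ ^ 2) * ψ x)) ^ (m * θ) *
        √(1 + ‖x‖ ^ 2) ^ (d * θ * ((1 / q).toReal - (1 / p).toReal)) ≤
          C * √(1 + ‖x‖ ^ 2) ^ (-ε)) →
      eLpNorm (fun x ↦ ψ x ^ (m * (1 - θ)) * φ x ^ (m * θ) * ‖iteratedFDeriv ℝ i f x‖)
          (ENNReal.ofReal rb) volume ≤
        ENNReal.ofReal C' * (eLpNorm (fun x ↦ ψ x ^ m • f x) p volume ^ (1 - θ) *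
          eLpNorm (fun x ↦ φ x ^ m * ‖iteratedFDeriv ℝ m f x‖) q volume ^ θ +
          eLpNorm (fun x ↦ ψ x ^ m • f x) p volume) := by
  have h := isAdmissible_of_exponents hd hi him hp hq hrb hθl hθu hrel
  have hC0 : 0 < C := one_pos.trans_le hC
  have : Nonempty (Fin d) := ⟨⟨0, h.dim_pos⟩⟩
  obtain ⟨D, hD⟩ := exists_eLpNorm_weighted_le h F (one_le_pow₀ hC : 1 ≤ C ^ m) hε
  refine ⟨D + 1, by positivity, fun f φ ψ a b hf hφ hψ hdecay ↦ ?_⟩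
  have hφψ : ∀ x, (φ x ^ m / ψ x ^ m) ^ θ ≤ C ^ m * √(1 + ‖x‖ ^ 2) ^
      (m * θ - d * θ * ((1 / q).toReal - (1 / p).toReal) - ε) := fun x ↦ by
    have hCm : C ≤ C ^ m := le_self_pow₀ hC h.top_order_pos.ne'
    exact (div_pow_rpow_le (hφ.pos hC0 x) (hψ.pos hC0 x) (by positivity) m (hdecay x)).trans
      (by gcongr)
  have hmain := hD f _ _ _ _ hf (hφ.pow hC0 m) (hψ.pow hC0 m) hφψ
  rw [lpExponent_toReal_one_div (one_pos.trans_le hp).ne',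
    lpExponent_toReal_one_div (one_pos.trans_le hq).ne', one_div,
    lpExponent_eq_ofReal_inv (by positivity), inv_inv] at hmain
  simp only [Real.rpow_natCast_mul (hφ.pos hC0 _).le, Real.rpow_natCast_mul (hψ.pos hC0 _).le]
  refine hmain.trans ?_
  gcongr
  exact ENNReal.le_ofReal_iff_toReal_le ENNReal.coe_ne_top (by positivity) |>.2 (by simp)

/-- weighted Gagliardo–Nirenberg interpolation inequality on `ℝ^d`, with weights
`φ, ψ` comparable to constants `φ_j, ψ_j` on each dyadic annulus (with the index `j = −1`
corresponding to index `0` of the sequences `φv, ψv`, and `j ≥ 0` to index `j + 1`).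
The constant `C′` depends only on `d, p, q, i, m, θ, C, ε` and not on `f, φ, ψ`. -/
theorem stmt5 (d i m : ℕ) (hd : 1 ≤ d) (hi : 1 ≤ i) (him : i ≤ m)
    (p q : ℝ≥0∞) (hp : 1 ≤ p) (hq : 1 ≤ q)
    (rb θ Cw ε : ℝ) (hrb : 1 ≤ rb) (hθl : (i : ℝ) / m ≤ θ) (hθu : θ < 1)
    (hCw : 1 ≤ Cw) (hε : 0 < ε)
    (hrel : 1 / rb = (i : ℝ) / d + θ * ((1 / q).toReal - (m : ℝ) / d)
      + (1 - θ) * (1 / p).toReal) :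
    ∃ C' : ℝ, 0 < C' ∧
      ∀ (f φ ψ : EuclideanSpace ℝ (Fin d) → ℝ) (φv ψv : ℕ → ℝ),
        ContDiff ℝ (⊤ : ℕ∞) f → HasCompactSupport f →
        (∀ x, 0 ≤ φ x) → (∀ x, 0 ≤ ψ x) →
        φv 0 = 1 → φv 1 = 1 → ψv 0 = 1 → ψv 1 = 1 →
        (∀ x : EuclideanSpace ℝ (Fin d), ‖x‖ ≤ 1 →
          φ x ∈ Set.Icc (φv 0 / Cw) (Cw * φv 0) ∧
          ψ x ∈ Set.Icc (ψv 0 / Cw) (Cw * ψv 0)) →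
        (∀ (j : ℕ) (x : EuclideanSpace ℝ (Fin d)),
          (2 : ℝ) ^ j ≤ ‖x‖ → ‖x‖ ≤ (2 : ℝ) ^ (j + 1) →
          φ x ∈ Set.Icc (φv (j + 1) / Cw) (Cw * φv (j + 1)) ∧
          ψ x ∈ Set.Icc (ψv (j + 1) / Cw) (Cw * ψv (j + 1))) →
        (∀ x : EuclideanSpace ℝ (Fin d),
          (φ x / (Real.sqrt (1 + ‖x‖ ^ 2) * ψ x)) ^ ((m : ℝ) * θ) *
              Real.sqrt (1 + ‖x‖ ^ 2) ^ ((d : ℝ) * θ * ((1 / q).toReal - (1 / p).toReal))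
            ≤ Cw * Real.sqrt (1 + ‖x‖ ^ 2) ^ (-ε)) →
        eLpNorm (fun x => ψ x ^ ((m : ℝ) * (1 - θ)) * φ x ^ ((m : ℝ) * θ) *
            ‖iteratedFDeriv ℝ i f x‖) (ENNReal.ofReal rb) volume ≤
          ENNReal.ofReal C' *
            ((eLpNorm (fun x => ψ x ^ m * f x) p volume) ^ (1 - θ) *
                (eLpNorm (fun x => φ x ^ m * ‖iteratedFDeriv ℝ m f x‖) q volume) ^ θ
              + eLpNorm (fun x => ψ x ^ m * f x) p volume) := by
  obtain ⟨C', hC', hmain⟩ := stmt5_general d i m hd hi him p q hp hq rb θ Cw ε hrb hθl hθu hCw hε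
    hrel ℝ
  refine ⟨C', hC', fun f φ ψ φv ψv hf _ _ _ hφ0 _ hψ0 _ hball hann ↦
    hmain f φ ψ φv ψv hf ⟨hφ0, ?_⟩ ⟨hψ0, ?_⟩⟩
  · exact fun | 0, x, hx => (hball x hx).1 | n + 1, x, hx => (hann n x hx.1 hx.2).1
  · exact fun | 0, x, hx => (hball x hx).2 | n + 1, x, hx => (hann n x hx.1 hx.2).2
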